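/- arXiv:0712.2440 — 3 statements merged into one kernel-verified Lean document; each statement's English description precedes it below -/
import Mathlib

section
/- There exists ε₀ > 0 with B̄(0,ε₀) ⊂ U such that for every 0 < ε ≤ ε₀ and every θ ∈ ℝ: (i) X_θ ∩ S(0,ε) is the union of the three pairwise disjoint sets E_θ ∩ S(0,ε), V ∩ S(0,ε) and E_{θ+π} ∩ S(0,ε), where E_θ ∩ S(0,ε) and E_{θ+π} ∩ S(0,ε) are exactly the fibres of the Milnor map φ(x) = f(x)/‖f(x)‖ over the antipodal points exp(iθ) and −exp(iθ) of the unit circle; and (ii) X_θ ∩ S(0,ε) is homeomorphic to {x ∈ U : Re f(x) = 0} ∩ S(0,ε), the link of the real analytic hypersurface {Re f = 0}. -/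
/-!
The decomposition (i) is elementary. For (ii), on a small sphere there is a continuous vector field,
tangent to the sphere and zero on `V = {f = 0}`, along which `f` turns with constant angular speed
while `log |f|` changes with bounded speed (`IsMilnorField`). A trajectory starting off `V` never
reaches `V`, and trajectories starting near `V` hardly move, so the flow exists for all times, is
the identity on `V` and is continuous. With angular speed `π/2 - θ`, its time-one map carries
`X_θ ∩ S` to `{Re f = 0} ∩ S`, and the time-one map of the opposite field is the inverse.

The field is obtained from the component `G` of `i grad (log f)` tangent to the sphere, divided by
`‖G‖²` (`milnorField`). Two estimates are needed. Near a zero of `f`, the function is small compared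
with its derivative (`isLittleO_fderiv`). And `grad (log f) = O(‖G‖)` near `0` off `V`
(`isBigO_logGrad_sphereGrad`); this follows by linear algebra from vectors `w` close to `B z`, for
a constant `B ≥ 1`, with `df(w) / f` close to a constant `A ≥ 1` (`exists_radial_vectors`). Both
estimates need only be checked along an ultrafilter, where local uniformization applies: the points
lift to a chart in which `f`, and for the second estimate also the equation of the exceptional
divisor of the blow-up of `0`, is a monomial times a unit. The vector `w` is then the image of the
Euler field `∑ uᵢ ∂/∂uᵢ`, along which the logarithmic derivative of a monomial is its degree. This
replaces the curve selection lemma.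

Local uniformization is proved by induction on the dimension and, for fixed dimension, on the order
of `f` in the last variable: after a Tschirnhausen shift the coefficients, and the differences of
suitable powers of them, are made monomial by induction, so that after a ramification the Newton
polygon has a single edge, with slope given by a monomial `u ^ γ`. Along the ultrafilter either
`y = O(u ^ γ)`, and the substitution `y = u ^ γ (z + s)` lowers the order, or `u ^ γ = o(y)`, and
the leading power of `y` dominates.
-/

/-- The member `X_θ` of the canonical pencil of `f`. -/
def Xset {α : Type} (U : Set α) (f : α → ℂ) (θ : ℝ) : Set α :=
  {x ∈ U | ∃ t : ℝ, f x = t * Complex.exp (θ * Complex.I)}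

/-- The open half `E_θ`. -/
def Eset {α : Type} (U : Set α) (f : α → ℂ) (θ : ℝ) : Set α :=
  {x ∈ U | ∃ t : ℝ, 0 < t ∧ f x = t * Complex.exp (θ * Complex.I)}

open Set Filter Topology Metric
open scoped ContDiff

section Osgood

variable {E F G : Type*} [NormedAddCommGroup E] [NormedSpace ℂ E]
  [NormedAddCommGroup F] [NormedSpace ℂ F] [NormedAddCommGroup G] [NormedSpace ℂ G]

lemma norm_fderiv_le_of_forall_mem_ball_norm_le {f : E → F} {z : E} {R M : ℝ} (hR : 0 < R)
    (hd : DifferentiableOn ℂ f (ball z R)) (hM : ∀ x ∈ ball z R, ‖f x‖ ≤ M) :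
    ‖fderiv ℂ f z‖ ≤ 2 * M / R := by
  refine Complex.norm_fderiv_le_div_of_mapsTo_ball hd (fun x hx => ?_) hR
  rw [mem_closedBall, dist_eq_norm, two_mul]
  exact (norm_sub_le _ _).trans (add_le_add (hM x hx) (hM z (mem_ball_self hR)))

lemma continuousAt_fderiv_of_differentiableOn {f : E → F} {s : Set E} {p : E}
    (hd : DifferentiableOn ℂ f s) (hs : s ∈ 𝓝 p) : ContinuousAt (fderiv ℂ f) p := by
  have hdp : DifferentiableAt ℂ f p := hd.differentiableAt hs
  have hbd : ∀ᶠ z in 𝓝 p, ‖f z - f p‖ < 1 := by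
    simpa [dist_eq_norm] using hdp.continuousAt.eventually (ball_mem_nhds (f p) one_pos)
  obtain ⟨r, hr, H⟩ := Metric.eventually_nhds_iff_ball.1 ((eventually_mem_set.2 hs).and hbd)
  have hdiff : DifferentiableOn ℂ f (ball p r) := hd.mono fun x hx => (H x hx).1
  -- The Cauchy estimate, applied to the increment of `f` by the vector `q - p`.
  have hlip : ∀ q ∈ ball p (r / 4),
      ‖fderiv ℂ f q - fderiv ℂ f p‖ ≤ 2 * (2 / (r / 2) * ‖q - p‖) / (r / 4) := by
    intro q hq
    have hshift : ∀ x ∈ ball p (r / 4), x + (q - p) ∈ ball x (r / 2) ∧ x + (q - p) ∈ ball p r ∧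
        ball x (r / 2) ⊆ ball p r := by
      intro x hx
      rw [mem_ball, dist_eq_norm] at hq
      have hxq : x + (q - p) ∈ ball x (r / 2) := by
        rw [mem_ball, dist_eq_norm, add_sub_cancel_left]; linarith
      have hsub : ball x (r / 2) ⊆ ball p r :=
        ball_subset_ball' (by rw [mem_ball] at hx; linarith)
      exact ⟨hxq, hsub hxq, hsub⟩
    have hsmall : ball p (r / 4) ⊆ ball p r := ball_subset_ball (by linarith)
    have hd₁ : DifferentiableOn ℂ (fun x => f (x + (q - p))) (ball p (r / 4)) :=
      hdiff.comp (by fun_prop) fun x hx => (hshift x hx).2.1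
    have hle : ∀ x ∈ ball p (r / 4), ‖f (x + (q - p)) - f x‖ ≤ 2 / (r / 2) * ‖q - p‖ := by
      intro x hx
      obtain ⟨hxq, -, hsub⟩ := hshift x hx
      refine (dist_eq_norm _ _).symm.trans_le
        ((Complex.dist_le_div_mul_dist_of_mapsTo_ball (R₂ := 2) (hdiff.mono hsub)
          (fun y hy => ?_) hxq).trans_eq (by simp [dist_eq_norm]))
      rw [mem_closedBall, dist_eq_norm, ← sub_sub_sub_cancel_right _ _ (f p)]
      have := norm_sub_le (f y - f p) (f x - f p)
      linarith [(H y (hsub hy)).2, (H x (hsmall hx)).2]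
    have hpq : p + (q - p) = q := by abel
    have := norm_fderiv_le_of_forall_mem_ball_norm_le (by positivity)
      (hd₁.fun_sub (hdiff.mono hsmall)) hle
    rwa [fderiv_fun_sub (hd₁.differentiableAt (ball_mem_nhds p (by positivity))) hdp,
      fderiv_comp_add_right, hpq] at this
  rw [ContinuousAt, tendsto_iff_norm_sub_tendsto_zero]
  refine squeeze_zero' (.of_forall fun _ => norm_nonneg _)
    (eventually_of_mem (ball_mem_nhds p (by positivity)) hlip) ?_
  exact Continuous.tendsto' (by fun_prop) _ _ (by simp)

lemma differentiableAt_intervalIntegral_comp_affine [CompleteSpace G] {g : F → G} {s : Set F}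
    (hs : IsOpen s) (hg : DifferentiableOn ℂ g s) {p : E} {a b : ℝ} {A : ℝ → E →L[ℂ] F}
    {c : ℝ → F} {k : ℝ → ℂ} (hA : Continuous A) (hc : Continuous c) (hk : Continuous k)
    (hmem : ∀ t ∈ uIcc a b, A t p + c t ∈ s) :
    DifferentiableAt ℂ (fun x => ∫ t in a..b, k t • g (A t x + c t)) p := by
  let Φ : E × ℝ → E →L[ℂ] G := fun q => k q.2 • (fderiv ℂ g (A q.2 q.1 + c q.2)).comp (A q.2)
  have haff : Continuous fun q : E × ℝ => A q.2 q.1 + c q.2 := by fun_prop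
  have hΦ : ∀ q : E × ℝ, A q.2 q.1 + c q.2 ∈ s → ContinuousAt Φ q := by
    intro q hq
    have := ContinuousAt.comp (f := fun q : E × ℝ => A q.2 q.1 + c q.2)
      (continuousAt_fderiv_of_differentiableOn hg (hs.mem_nhds hq)) haff.continuousAt
    exact (hk.comp continuous_snd).continuousAt.smul
      (this.clm_comp (hA.comp continuous_snd).continuousAt)
  have hslice : ∀ x : E, Continuous fun t : ℝ => (x, t) := fun x => by fun_prop
  obtain ⟨C, hC⟩ := isCompact_uIcc.exists_bound_of_continuousOn (f := fun t => Φ (p, t))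
    fun t ht => ((hΦ (p, t) (hmem t ht)).comp (hslice p).continuousAt).continuousWithinAt
  have hnear : ∀ᶠ x in 𝓝 p, ∀ t ∈ uIcc a b, A t x + c t ∈ s ∧ ‖Φ (x, t)‖ < C + 1 := by
    refine isCompact_uIcc.eventually_forall_of_forall_eventually fun t ht => ?_
    refine (haff.continuousAt.eventually (hs.mem_nhds (hmem t ht))).and ?_
    exact (hΦ (p, t) (hmem t ht)).norm.eventually_lt continuousAt_const
      ((hC t ht).trans_lt (lt_add_one C))
  have hcont : ∀ x, (∀ t ∈ uIcc a b, A t x + c t ∈ s ∧ ‖Φ (x, t)‖ < C + 1) →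
      ContinuousOn (fun t => k t • g (A t x + c t)) (uIcc a b) := fun x hx =>
    hk.continuousOn.smul (hg.continuousOn.comp (by fun_prop) fun t ht => (hx t ht).1)
  refine (intervalIntegral.hasFDerivAt_integral_of_dominated_of_fderiv_le (𝕜 := ℂ)
    (bound := fun _ => C + 1) (F' := fun x t => Φ (x, t)) hnear ?_ ?_ ?_ ?_ ?_ ?_).differentiableAt
  · filter_upwards [hnear] with x hx
    exact ((hcont x hx).mono uIoc_subset_uIcc).aestronglyMeasurable measurableSet_uIoc
  · exact (hcont p hnear.self_of_nhds).intervalIntegrable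
  · refine ContinuousOn.aestronglyMeasurable (fun t ht => ?_) measurableSet_uIoc
    exact ((hΦ (p, t) (hmem t (uIoc_subset_uIcc ht))).comp
      (hslice p).continuousAt).continuousWithinAt
  · exact .of_forall fun t ht x hx => (hx t (uIoc_subset_uIcc ht)).2.le
  · exact intervalIntegrable_const
  · refine .of_forall fun t ht x hx => ?_
    have := hg.differentiableAt (hs.mem_nhds (hx t (uIoc_subset_uIcc ht)).1)
    exact (this.hasFDerivAt.comp x ((A t).hasFDerivAt.add_const _)).const_smul (k t)

lemma differentiableOn_fderiv_apply [CompleteSpace F] {f : E → F} {s : Set E} (hs : IsOpen s)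
    (hf : DifferentiableOn ℂ f s) (v : E) : DifferentiableOn ℂ (fun z => fderiv ℂ f z v) s := by
  intro p hp
  obtain ⟨ρ, hρ, hmem⟩ : ∃ ρ > 0, ∀ᶠ z in 𝓝 p, ∀ t ∈ closedBall (0 : ℂ) ρ, z + t • v ∈ s := by
    have hcont : Continuous fun q : ℂ × E => q.2 + q.1 • v := by fun_prop
    have hnhds : ∀ᶠ q in 𝓝 (0 : ℂ) ×ˢ 𝓝 p, q.2 + q.1 • v ∈ s := by
      rw [← nhds_prod_eq]
      exact hcont.continuousAt.eventually (hs.mem_nhds (by simpa using hp))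
    obtain ⟨P, hP, Q, hQ, hPQ⟩ := eventually_prod_iff.1 hnhds
    obtain ⟨ρ, hρ, hball⟩ := Metric.nhds_basis_closedBall.mem_iff.1 hP
    exact ⟨ρ, hρ, hQ.mono fun z hz t ht => hPQ (hball ht) hz⟩
  have hCauchy : ∀ᶠ z in 𝓝 p, fderiv ℂ f z v = (2 * Real.pi * Complex.I : ℂ)⁻¹ •
      ∫ θ in (0 : ℝ)..(2 * Real.pi), (deriv (circleMap 0 ρ) θ * (1 / circleMap 0 ρ θ ^ 2)) •
        f (ContinuousLinearMap.id ℂ E z + circleMap 0 ρ θ • v) := by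
    filter_upwards [hmem, hs.mem_nhds hp] with z hz hzs
    have hline : DifferentiableOn ℂ (fun t : ℂ => f (z + t • v)) (closedBall 0 ρ) :=
      hf.comp (by fun_prop) hz
    have hderiv : deriv (fun t : ℂ => f (z + t • v)) 0 = fderiv ℂ f z v := by
      rw [← lineDeriv, (hf.differentiableAt (hs.mem_nhds hzs)).lineDeriv_eq_fderiv]
    rw [eq_inv_smul_iff₀ Complex.two_pi_I_ne_zero, ← hderiv,
      ← hline.deriv_eq_smul_circleIntegral hρ, circleIntegral]
    simp only [sub_zero, smul_smul, ContinuousLinearMap.id_apply]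
  have hkernel : Continuous fun θ => deriv (circleMap 0 ρ) θ * (1 / circleMap 0 ρ θ ^ 2) := by
    simp only [deriv_circleMap]
    refine (by fun_prop : Continuous _).mul (continuous_const.div (by fun_prop) fun θ => ?_)
    exact pow_ne_zero _ (by simp [circleMap, hρ.ne'])
  refine (((differentiableAt_intervalIntegral_comp_affine hs hf continuous_const (by fun_prop)
    hkernel fun t _ => ?_).const_smul _).congr_of_eventuallyEq hCauchy).differentiableWithinAt
  exact hmem.self_of_nhds _ (circleMap_mem_closedBall 0 hρ.le t)

lemma contDiffOn_nat_of_differentiableOn [FiniteDimensional ℂ E] [CompleteSpace F] {f : E → F}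
    {s : Set E} (hs : IsOpen s) (hf : DifferentiableOn ℂ f s) (n : ℕ) : ContDiffOn ℂ n f s := by
  induction n generalizing f with
  | zero => exact contDiffOn_zero.2 hf.continuousOn
  | succ n ih =>
    refine (contDiffOn_succ_iff_fderiv_of_isOpen hs).2
      ⟨hf, fun h => absurd h (WithTop.natCast_ne_top n), ?_⟩
    exact contDiffOn_clm_apply.2 fun v => ih (differentiableOn_fderiv_apply hs hf v)

lemma norm_iteratedFDeriv_le_of_forall_mem_ball_norm_le [FiniteDimensional ℂ E] [CompleteSpace F]
    {f : E → F} {c : E} {R M r : ℝ} (hf : DifferentiableOn ℂ f (ball c R))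
    (hM : ∀ x ∈ ball c R, ‖f x‖ ≤ M) (hr : 0 < r) (k : ℕ) {z : E} (hz : dist z c + k * r < R) :
    ‖iteratedFDeriv ℂ k f z‖ ≤ M * (2 / r) ^ k := by
  induction k generalizing z with
  | zero => simpa using hM z (by simpa using hz)
  | succ k ih =>
    have hroom : ∀ x ∈ ball z r, dist x c + k * r < R := fun x hx => by
      rw [mem_ball] at hx
      push_cast at hz
      linarith [dist_triangle x z c]
    have hdiff : DifferentiableOn ℂ (iteratedFDeriv ℂ k f) (ball z r) := fun x hx => by
      have hxc : x ∈ ball c R := (le_add_of_nonneg_right (by positivity)).trans_lt (hroom x hx)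
      refine DifferentiableAt.differentiableWithinAt ?_
      exact ((contDiffOn_nat_of_differentiableOn isOpen_ball hf (k + 1)).contDiffAt
        (isOpen_ball.mem_nhds hxc)).differentiableAt_iteratedFDeriv
          (by exact_mod_cast k.lt_succ_self)
    rw [← norm_fderiv_iteratedFDeriv]
    calc ‖fderiv ℂ (iteratedFDeriv ℂ k f) z‖ ≤ 2 * (M * (2 / r) ^ k) / r :=
          norm_fderiv_le_of_forall_mem_ball_norm_le hr hdiff fun x hx => ih (hroom x hx)
      _ = M * (2 / r) ^ (k + 1) := by ring

lemma iteratedDeriv_comp_line [FiniteDimensional ℂ E] [CompleteSpace F] {f : E → F} {s : Set E}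
    (hs : IsOpen s) (hf : DifferentiableOn ℂ f s) (c v : E) (k : ℕ) {t : ℂ} (ht : c + t • v ∈ s) :
    iteratedDeriv k (fun u : ℂ => f (c + u • v)) t
      = iteratedFDeriv ℂ k f (c + t • v) fun _ => v := by
  induction k generalizing t with
  | zero => simp
  | succ k ih =>
    have hline : HasDerivAt (fun u : ℂ => c + u • v) v t := by
      simpa using ((hasDerivAt_id t).smul_const v).const_add c
    have hnear : ∀ᶠ u in 𝓝 t, c + u • v ∈ s :=
      hline.continuousAt.eventually (hs.mem_nhds ht)
    have hdiff : DifferentiableAt ℂ (iteratedFDeriv ℂ k f) (c + t • v) :=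
      ((contDiffOn_nat_of_differentiableOn hs hf (k + 1)).contDiffAt
        (hs.mem_nhds ht)).differentiableAt_iteratedFDeriv (by exact_mod_cast k.lt_succ_self)
    have heval := (ContinuousMultilinearMap.apply ℂ (fun _ : Fin k => E) F fun _ => v).hasFDerivAt
      |>.comp_hasDerivAt t (hdiff.hasFDerivAt.comp_hasDerivAt t hline)
    rw [iteratedDeriv_succ, iteratedFDeriv_succ_apply_left,
      Filter.EventuallyEq.deriv_eq (hnear.mono fun u hu => ih hu)]
    exact heval.deriv

lemma norm_iteratedFDeriv_center_le [FiniteDimensional ℂ E] [CompleteSpace F] {f : E → F} {c : E}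
    {R M : ℝ} (hR : 0 < R) (hf : DifferentiableOn ℂ f (ball c R)) (hM : ∀ x ∈ ball c R, ‖f x‖ ≤ M)
    (k : ℕ) :
    ‖iteratedFDeriv ℂ k f c‖ ≤ M * k.factorial * Real.exp 1 * (4 * Real.exp 1 / R) ^ k := by
  have hM₀ : 0 ≤ M := (norm_nonneg _).trans (hM c (mem_ball_self hR))
  have hroom : dist c c + k * (R / (2 * (k + 1))) < R := by
    rw [dist_self, zero_add, mul_div_assoc', div_lt_iff₀ (by positivity)]
    nlinarith
  have hexp : ((k : ℝ) + 1) ^ k ≤ k.factorial * Real.exp (k + 1) := by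
    rw [← div_le_iff₀' (by positivity)]
    exact Real.pow_div_factorial_le_exp _ (by positivity) k
  calc ‖iteratedFDeriv ℂ k f c‖ ≤ M * (2 / (R / (2 * (k + 1)))) ^ k :=
        norm_iteratedFDeriv_le_of_forall_mem_ball_norm_le hf hM (by positivity) k hroom
    _ = M * (4 / R) ^ k * ((k : ℝ) + 1) ^ k := by
        rw [mul_assoc, ← mul_pow]; congr 2; field_simp; norm_num
    _ ≤ M * (4 / R) ^ k * (k.factorial * Real.exp (k + 1)) := by gcongr
    _ = M * k.factorial * Real.exp 1 * (4 * Real.exp 1 / R) ^ k := by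
        rw [Real.exp_add, ← Real.exp_one_pow k, div_pow, div_pow, mul_pow]; ring

/-- Osgood's lemma. -/
theorem analyticAt_of_differentiableOn [FiniteDimensional ℂ E] [CompleteSpace F] {f : E → F}
    {s : Set E} {p : E} (hf : DifferentiableOn ℂ f s) (hs : s ∈ 𝓝 p) : AnalyticAt ℂ f p := by
  have hbd : ∀ᶠ z in 𝓝 p, ‖f z‖ ≤ ‖f p‖ + 1 :=
    (hf.differentiableAt hs).continuousAt.norm.eventually_le_const (lt_add_one _)
  obtain ⟨R, hR, H⟩ := Metric.eventually_nhds_iff_ball.1 ((eventually_mem_set.2 hs).and hbd)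
  have hdiff : DifferentiableOn ℂ f (ball p R) := hf.mono fun x hx => (H x hx).1
  obtain ⟨ρ, hρ⟩ : ∃ ρ : NNReal, (ρ : ℝ) = R / (4 * Real.exp 1) :=
    ⟨⟨_, by positivity⟩, rfl⟩
  have hρ₀ : 0 < (ρ : ℝ) := hρ ▸ by positivity
  have hρR : 2 * (ρ : ℝ) ≤ R := by
    rw [hρ, mul_div_assoc', div_le_iff₀ (by positivity)]
    nlinarith [Real.add_one_le_exp 1]
  refine ⟨fun k => (k.factorial : ℂ)⁻¹ • iteratedFDeriv ℂ k f p, ρ, ?_, by exact_mod_cast hρ₀,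
    fun {y} hy => ?_⟩
  · refine FormalMultilinearSeries.le_radius_of_bound _ ((‖f p‖ + 1) * Real.exp 1) fun k => ?_
    have hle := norm_iteratedFDeriv_center_le hR hdiff (fun x hx => (H x hx).2) k
    have hpow : (4 * Real.exp 1 / R) ^ k * (ρ : ℝ) ^ k = 1 := by
      rw [← mul_pow, hρ]; field_simp; simp
    rw [norm_smul, norm_inv, Complex.norm_natCast, mul_assoc, inv_mul_le_iff₀ (by positivity)]
    calc _ ≤ _ := mul_le_mul_of_nonneg_right hle (by positivity)
      _ = _ := by linear_combination ((‖f p‖ + 1) * k.factorial * Real.exp 1) * hpow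
  · have hy' : ‖y‖ < ρ := by simpa using hy
    have hmem : ∀ t ∈ ball (0 : ℂ) 2, p + t • y ∈ ball p R := fun t ht => by
      rw [mem_ball_zero_iff] at ht
      rw [mem_ball, dist_eq_norm, add_sub_cancel_left, norm_smul]
      nlinarith [norm_nonneg y]
    have hline : DifferentiableOn ℂ (fun t : ℂ => f (p + t • y)) (ball 0 2) :=
      hdiff.comp (by fun_prop) hmem
    have := Complex.hasSum_taylorSeries_on_ball hline (z := 1) (by simp)
    simpa [iteratedDeriv_comp_line isOpen_ball hdiff p y _ (hmem 0 (by simp))] using this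

end Osgood

section Division

variable {E : Type*} [NormedAddCommGroup E] [NormedSpace ℂ E] [FiniteDimensional ℂ E]

lemma exists_analyticAt_eventually_eq_add_mul {g : E → ℂ} {p : E} (hg : AnalyticAt ℂ g p)
    (l : E →L[ℂ] ℂ) (e : E) (hp : l p = 0) :
    ∃ g₁ : E → ℂ, AnalyticAt ℂ g₁ p ∧ ∀ᶠ x in 𝓝 p, g x = g (x - l x • e) + l x * g₁ x := by
  let A : ℝ → E →L[ℂ] E := fun t => .id ℂ E - l.smulRight e + (t : ℂ) • l.smulRight e
  have hA : ∀ t x, A t x = x - l x • e + (t * l x) • e := fun t x => by simp [A, mul_smul]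
  have hAp : ∀ t, A t p = p := fun t => by simp [hA, hp]
  have hAc : Continuous fun q : E × ℝ => A q.2 q.1 := by fun_prop
  have hmem : ∀ᶠ x in 𝓝 p, ∀ t ∈ uIcc (0 : ℝ) 1, AnalyticAt ℂ g (A t x) := by
    refine isCompact_uIcc.eventually_forall_of_forall_eventually fun t _ => ?_
    exact hAc.continuousAt.eventually (by simpa [hAp] using hg.eventually_analyticAt)
  have hg' : DifferentiableOn ℂ (fun z => fderiv ℂ g z e) {z | AnalyticAt ℂ g z} := fun z hz =>
    (hz.fderiv.differentiableAt.clm_apply (differentiableAt_const e)).differentiableWithinAt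
  refine ⟨fun x => ∫ t in (0 : ℝ)..1, fderiv ℂ g (A t x) e,
    analyticAt_of_differentiableOn (s := {x | ∀ t ∈ uIcc (0 : ℝ) 1, AnalyticAt ℂ g (A t x)})
      (fun x hx => ?_) hmem, ?_⟩
  · simpa using (differentiableAt_intervalIntegral_comp_affine (isOpen_analyticAt ℂ g) hg'
      (A := A) (c := 0) (k := 1) (by fun_prop) continuous_const continuous_const
      (by simpa using hx)).differentiableWithinAt
  · filter_upwards [hmem] with x hx
    rw [uIcc_of_le zero_le_one] at hx
    have hderiv : ∀ t ∈ Icc (0 : ℝ) 1, HasDerivAt (fun s : ℂ => g (x - l x • e + s • e))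
        (fderiv ℂ g (x - l x • e + (0 + t • l x) • e) e) (0 + t • l x) := fun t ht => by
      have hd := hx t ht
      simp only [hA] at hd
      rw [← Complex.real_smul, ← zero_add (t • l x)] at hd
      simpa using! hd.differentiableAt.hasFDerivAt.comp_hasDerivAt _
        (((hasDerivAt_id (0 + t • l x)).smul_const e).const_add (x - l x • e))
    have hcont : ContinuousOn
        (fun t : ℝ => fderiv ℂ g (x - l x • e + (0 + t • l x) • e) e) (Icc 0 1) := fun t ht => by
      refine ContinuousAt.continuousWithinAt ?_
      have hd := (hx t ht).fderiv.continuousAt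
      simp only [hA] at hd
      rw [← Complex.real_smul, ← zero_add (t • l x)] at hd
      exact (ContinuousAt.comp (f := fun t : ℝ => x - l x • e + (0 + t • l x) • e) hd
        (by fun_prop)).clm_apply continuousAt_const
    have := intervalIntegral.integral_unitInterval_deriv_eq_sub
      (f' := fun s => fderiv ℂ g (x - l x • e + s • e) e) hcont hderiv
    simp only [zero_add, zero_smul, add_zero, sub_add_cancel, smul_eq_mul] at this
    simp only [hA, ← Complex.real_smul, this, add_sub_cancel]

lemma exists_analyticAt_eventually_eq_sum_add_pow_mul {g : E × ℂ → ℂ} {p : E}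
    (hg : AnalyticAt ℂ g (p, 0)) (N : ℕ) :
    ∃ (a : ℕ → E → ℂ) (c : E × ℂ → ℂ), (∀ i, AnalyticAt ℂ (a i) p) ∧ AnalyticAt ℂ c (p, 0) ∧
      ∀ᶠ q in 𝓝 (p, (0 : ℂ)), g q = ∑ i ∈ Finset.range N, a i q.1 * q.2 ^ i + q.2 ^ N * c q := by
  induction N generalizing g with
  | zero => exact ⟨0, g, fun _ => analyticAt_const, hg, by simp⟩
  | succ N ih =>
    obtain ⟨g₁, hg₁, hdiv⟩ := exists_analyticAt_eventually_eq_add_mul hg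
      (.snd ℂ E ℂ) ((0 : E), (1 : ℂ)) rfl
    obtain ⟨a, c, ha, hc, hsum⟩ := ih hg₁
    refine ⟨fun i => i.casesOn (fun x => g (x, 0)) a, c, fun i => ?_, hc, ?_⟩
    · cases i with
      | zero => exact AnalyticAt.fun_comp (g := g) hg (analyticAt_id.prod analyticAt_const)
      | succ i => exact ha i
    · filter_upwards [hdiv, hsum] with q hq hq₁
      have hproj : q - q.2 • ((0 : E), (1 : ℂ)) = (q.1, 0) := by ext <;> simp
      have hshift : ∑ i ∈ Finset.range N, a i q.1 * q.2 ^ (i + 1)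
          = q.2 * ∑ i ∈ Finset.range N, a i q.1 * q.2 ^ i := by
        rw [Finset.mul_sum]
        exact Finset.sum_congr rfl fun i _ => by ring
      rw [hq, hq₁, Finset.sum_range_succ', hshift, ContinuousLinearMap.coe_snd', hproj]
      change _ = q.2 * _ + g (q.1, 0) * q.2 ^ 0 + _
      ring

end Division

lemma iteratedDeriv_eq_factorial_mul_of_eventually_eq_sum_add_pow_mul {F c : ℂ → ℂ} {a : ℕ → ℂ}
    {N i : ℕ} (hc : AnalyticAt ℂ c 0) (hi : i < N)
    (hF : ∀ᶠ y in 𝓝 0, F y = ∑ j ∈ Finset.range N, a j * y ^ j + y ^ N * c y) :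
    iteratedDeriv i F 0 = i.factorial * a i := by
  induction i generalizing F c a N with
  | zero =>
    obtain ⟨N, rfl⟩ := Nat.exists_eq_succ_of_ne_zero hi.ne'
    simp [hF.self_of_nhds, Finset.sum_range_succ']
  | succ i ih =>
    obtain ⟨N, rfl⟩ := Nat.exists_eq_succ_of_ne_zero (Nat.zero_lt_of_lt hi).ne'
    have hder : ∀ᶠ y in 𝓝 0, deriv F y = ∑ j ∈ Finset.range N, ((j + 1) * a (j + 1)) * y ^ j
        + y ^ N * ((N + 1) * c y + y * deriv c y) := by
      filter_upwards [hF.eventually_nhds, hc.eventually_analyticAt] with y hy hcy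
      rw [EventuallyEq.deriv_eq hy]
      have hsum : HasDerivAt (fun y => ∑ j ∈ Finset.range (N + 1), a j * y ^ j)
          (∑ j ∈ Finset.range (N + 1), a j * (j * y ^ (j - 1))) y :=
        HasDerivAt.fun_sum fun j _ => (hasDerivAt_pow j y).const_mul (a j)
      have := (hsum.fun_add
        ((hasDerivAt_pow (N + 1) y).fun_mul hcy.differentiableAt.hasDerivAt)).deriv
      rw [this, Finset.sum_range_succ']
      simp only [Nat.cast_add, Nat.cast_one, Nat.add_sub_cancel, Nat.cast_zero, zero_mul, mul_zero,
        add_zero, pow_succ]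
      congr 1
      · exact Finset.sum_congr rfl fun j _ => by ring
      · ring
    have := ih (a := fun j => (j + 1) * a (j + 1)) (by fun_prop) (Nat.lt_of_succ_lt_succ hi) hder
    rw [iteratedDeriv_succ', this, Nat.factorial_succ]
    push_cast
    ring

section Tschirnhausen

variable {E : Type*} [NormedAddCommGroup E] [NormedSpace ℂ E] [FiniteDimensional ℂ E]

lemma exists_analyticAt_implicit {K : E × ℂ → ℂ} (hK : AnalyticAt ℂ K 0) (hK0 : K 0 = 0)
    (hder : deriv (fun y => K (0, y)) 0 ≠ 0) :
    ∃ η : E → ℂ, AnalyticAt ℂ η 0 ∧ η 0 = 0 ∧ ∀ᶠ x in 𝓝 0, K (x, η x) = 0 := by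
  have : CompleteSpace E := FiniteDimensional.complete ℂ E
  have hpartial : fderiv ℂ K 0 (0, 1) = deriv (fun y => K (0, y)) 0 := by
    have hline : HasDerivAt (fun y : ℂ => ((0 : E), y)) (0, 1) 0 :=
      (hasDerivAt_const _ _).prodMk (hasDerivAt_id _)
    exact (hK.differentiableAt.hasFDerivAt.comp_hasDerivAt (f := fun y : ℂ => ((0 : E), y)) 0
      hline).deriv.symm
  have hinv : (fderiv ℂ K 0 ∘L .inr ℂ E ℂ).IsInvertible :=
    ⟨ContinuousLinearEquiv.unitsEquivAut ℂ (Units.mk0 _ hder), by ext; simp [hpartial]⟩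
  have hω : ContDiffAt ℂ ω K 0 := hK.contDiffAt
  exact ⟨hω.implicitFunction (by simp) hinv,
    (hω.contDiffAt_implicitFunction (by simp) hinv).analyticAt,
    hω.implicitFunction_apply_self (by simp) hinv,
    by simpa [hK0] using hω.eventually_apply_implicitFunction (by simp) hinv⟩

lemma exists_taylor_last_coordinate {g : E × ℂ → ℂ} (hg : AnalyticAt ℂ g 0) (N : ℕ) :
    ∃ (A : ℕ → E × ℂ → ℂ) (C : (E × ℂ) × ℂ → ℂ), (∀ i, AnalyticAt ℂ (A i) 0) ∧
      AnalyticAt ℂ C 0 ∧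
      (∀ᶠ q in 𝓝 (0 : (E × ℂ) × ℂ), g (q.1.1, q.1.2 + q.2)
        = ∑ i ∈ Finset.range N, A i q.1 * q.2 ^ i + q.2 ^ N * C q) ∧
      ∀ᶠ p in 𝓝 (0 : E × ℂ), ∀ i < N,
        iteratedDeriv i (fun y => g (p.1, y)) p.2 = i.factorial * A i p := by
  have hadd : ContDiff ℂ ω fun q : (E × ℂ) × ℂ => (q.1.1, q.1.2 + q.2) := by fun_prop
  obtain ⟨A, C, hA, hC, hexp⟩ := exists_analyticAt_eventually_eq_sum_add_pow_mul
    (p := (0 : E × ℂ)) (g := fun q => g (q.1.1, q.1.2 + q.2))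
    (hg.fun_comp_of_eq hadd.contDiffAt.analyticAt (by simp)) N
  refine ⟨A, C, hA, hC, hexp, ?_⟩
  have hnhds : Tendsto (fun p : E × ℂ => (p, (0 : ℂ))) (𝓝 0) (𝓝 0) :=
    Continuous.tendsto' (by fun_prop) _ _ (by simp)
  filter_upwards [hnhds.eventually hexp.eventually_nhds, hnhds.eventually hC.eventually_analyticAt]
    with p hp hCp i hi
  have hslice : Tendsto (fun y : ℂ => (p, y)) (𝓝 0) (𝓝 (p, 0)) :=
    Continuous.tendsto' (by fun_prop) _ _ (by simp)
  have hF : ∀ᶠ y in 𝓝 0, g (p.1, p.2 + y)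
      = ∑ i ∈ Finset.range N, A i p * y ^ i + y ^ N * C (p, y) := hslice.eventually hp
  have hCp' : AnalyticAt ℂ (fun y => C (p, y)) 0 :=
    hCp.fun_comp (analyticAt_const.prod analyticAt_id)
  have hi' := iteratedDeriv_eq_factorial_mul_of_eventually_eq_sum_add_pow_mul
    (F := fun y => g (p.1, p.2 + y)) (a := fun i => A i p) hCp' hi hF
  simpa only [iteratedDeriv_comp_const_add i fun y => g (p.1, y), add_zero] using hi'

-- `η x` is the zero near `0` of the `e`-th derivative of `g (x, ·)`; translating by it removes the
-- coefficient of degree `e`.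
lemma exists_tschirnhausen {g : E × ℂ → ℂ} (hg : AnalyticAt ℂ g 0) {e : ℕ}
    (hord : analyticOrderAt (fun y => g (0, y)) 0 = (e + 1 : ℕ)) :
    ∃ (η : E → ℂ) (a : ℕ → E → ℂ) (c : E × ℂ → ℂ), AnalyticAt ℂ η 0 ∧ η 0 = 0 ∧
      (∀ i, AnalyticAt ℂ (a i) 0) ∧ (∀ i < e, a i 0 = 0) ∧ AnalyticAt ℂ c 0 ∧ c 0 ≠ 0 ∧
      ∀ᶠ q in 𝓝 0, g (q.1, η q.1 + q.2)
        = ∑ i ∈ Finset.range e, a i q.1 * q.2 ^ i + q.2 ^ (e + 1) * c q := by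
  have hg₀ : AnalyticAt ℂ (fun y => g (0, y)) 0 :=
    hg.fun_comp_of_eq (analyticAt_const.prod analyticAt_id) rfl
  obtain ⟨hlow, htop⟩ := (analyticOrderAt_eq_nat_iff_iteratedDeriv_eq_zero hg₀).1 hord
  obtain ⟨A, C, hA, hC, hexp, hcoeff⟩ := exists_taylor_last_coordinate hg (e + 2)
  have hAlow : ∀ i < e + 1, A i 0 = 0 := fun i hi => by
    simpa [hlow i hi, Nat.factorial_ne_zero] using hcoeff.self_of_nhds i (hi.trans (by lia))
  have hAtop : A (e + 1) 0 ≠ 0 := fun h => htop <| by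
    simpa [h] using hcoeff.self_of_nhds (e + 1) (by lia)
  have hder : deriv (fun y => A e (0, y)) 0 ≠ 0 := by
    have hev : (fun y => iteratedDeriv e (fun y => g (0, y)) y)
        =ᶠ[𝓝 0] fun y => e.factorial * A e (0, y) :=
      ((Continuous.prodMk_right (0 : E)).tendsto (0 : ℂ)).eventually
        (hcoeff.mono fun p hp => hp e (by lia))
    rw [iteratedDeriv_succ, hev.deriv_eq, deriv_const_mul_field] at htop
    exact right_ne_zero_of_mul htop
  obtain ⟨η, hη, hη0, hAη⟩ := exists_analyticAt_implicit (hA e) (hAlow e (by lia)) hder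
  have hgraph : AnalyticAt ℂ (fun x => (x, η x)) 0 := analyticAt_id.prod hη
  have hgraph0 : ((0 : E), η 0) = 0 := by rw [hη0]; rfl
  have hgraph' : AnalyticAt ℂ (fun q : E × ℂ => (q.1, η q.1)) 0 :=
    hgraph.fun_comp_of_eq analyticAt_fst rfl
  have hshift : AnalyticAt ℂ (fun q : E × ℂ => ((q.1, η q.1), q.2)) 0 :=
    hgraph'.prod analyticAt_snd
  refine ⟨η, fun i x => A i (x, η x), fun q => A (e + 1) (q.1, η q.1) + q.2 * C ((q.1, η q.1), q.2),
    hη, hη0, fun i => (hA i).fun_comp_of_eq hgraph hgraph0, fun i hi => ?_,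
    ((hA _).fun_comp_of_eq hgraph' hgraph0).fun_add
      (analyticAt_snd.fun_mul (hC.fun_comp_of_eq hshift (by simp [hη0]))), ?_, ?_⟩
  · exact (congrArg (A i) hgraph0).trans <| hAlow i (hi.trans e.lt_succ_self)
  · simpa [hgraph0] using hAtop
  · have hshift0 : Tendsto (fun q : E × ℂ => ((q.1, η q.1), q.2)) (𝓝 0) (𝓝 ((0, 0), 0)) := by
      simpa [hη0] using hshift.continuousAt.tendsto
    filter_upwards [hshift0.eventually hexp,
      (continuous_fst.tendsto' (0 : E × ℂ) 0 rfl).eventually hAη] with q hq hq0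
    rw [hq, Finset.sum_range_succ, Finset.sum_range_succ, hq0]
    ring

end Tschirnhausen

section AnalyticGerms

variable {E : Type*} [NormedAddCommGroup E] [NormedSpace ℂ E] {p : E}

lemma eventually_eq_zero_or_eventually_eq_zero_of_mul_eq_zero {f g : E → ℂ}
    (hf : AnalyticAt ℂ f p) (hg : AnalyticAt ℂ g p) (h : ∀ᶠ x in 𝓝 p, f x * g x = 0) :
    (∀ᶠ x in 𝓝 p, f x = 0) ∨ ∀ᶠ x in 𝓝 p, g x = 0 := by
  refine or_iff_not_imp_left.2 fun hf0 => ?_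
  obtain ⟨r, hr, hball⟩ := Metric.eventually_nhds_iff_ball.1
    ((hf.eventually_analyticAt.and hg.eventually_analyticAt).and h)
  obtain ⟨q, hq0, hq⟩ := (not_eventually.1 hf0).and_eventually (ball_mem_nhds p hr) |>.exists
  have hgq : g =ᶠ[𝓝 q] 0 := by
    filter_upwards [(hball q hq).1.1.continuousAt.eventually_ne hq0, isOpen_ball.mem_nhds hq]
      with x hx hxb using (mul_eq_zero.1 (hball x hxb).2).resolve_left hx
  have hg' : AnalyticOnNhd ℂ g (ball p r) := fun x hx => (hball x hx).1.2
  filter_upwards [ball_mem_nhds p hr] with x hx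
  exact hg'.eqOn_zero_of_preconnected_of_eventuallyEq_zero
    (convex_ball p r).isPreconnected hq hgq hx

lemma not_eventually_prod_eq_zero {κ : Type*} (s : Finset κ) {f : κ → E → ℂ}
    (hf : ∀ i ∈ s, AnalyticAt ℂ (f i) p) (h : ∀ i ∈ s, ¬ ∀ᶠ x in 𝓝 p, f i x = 0) :
    ¬ ∀ᶠ x in 𝓝 p, ∏ i ∈ s, f i x = 0 := by
  classical
  induction s using Finset.induction_on with
  | empty => simp [NeBot.ne]
  | insert a s ha ih =>
    simp only [Finset.prod_insert ha]
    intro H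
    have hs := fun i hi => Finset.mem_insert_of_mem (a := i) (b := a) (s := s) hi
    rcases eventually_eq_zero_or_eventually_eq_zero_of_mul_eq_zero
      (hf a (Finset.mem_insert_self a s))
      (s.analyticAt_fun_prod fun i hi => hf i (hs i hi)) H with h₀ | h₀
    · exact h a (Finset.mem_insert_self a s) h₀
    · exact ih (fun i hi => hf i (hs i hi)) (fun i hi => h i (hs i hi)) h₀

end AnalyticGerms

section Monomial

@[elab_as_elim]
lemma multiIndex_induction {ι : Type*} [Finite ι] [DecidableEq ι]
    {motive : (ι → ℕ) → Prop} (zero : motive 0)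
    (add_single : ∀ α i, motive α → motive (α + Pi.single i 1)) (α : ι → ℕ) : motive α := by
  have := Fintype.ofFinite ι
  induction hk : ∑ i, α i generalizing α with
  | zero => rwa [show α = 0 by ext i; simpa using Finset.sum_eq_zero_iff.1 hk i]
  | succ k ih =>
    obtain ⟨i, hi⟩ : ∃ i, α i ≠ 0 := by
      by_contra! hα
      simp [hα] at hk
    have hle : Pi.single i 1 ≤ α := by
      intro j
      rcases eq_or_ne j i with rfl | hj
      · simpa using Nat.one_le_iff_ne_zero.2 hi
      · simp [hj]
    rw [← tsub_add_cancel_of_le hle] at hk ⊢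
    exact add_single _ i (ih _ (by simpa [Finset.sum_add_distrib] using hk))

lemma frequently_coord_eq_zero_iff_mem {ι : Type*} [Finite ι] (S : Set ι) :
    ∃ᶠ u in 𝓝 (0 : ι → ℂ), ∀ i, u i = 0 ↔ i ∈ S := by
  classical
  have hcurve : Continuous fun (t : ℂ) (i : ι) => if i ∈ S then 0 else t :=
    continuous_pi fun i => by split_ifs <;> fun_prop
  have ht : Tendsto (fun (t : ℂ) (i : ι) => if i ∈ S then 0 else t) (𝓝[≠] 0) (𝓝 0) :=
    (hcurve.tendsto' 0 0 (by ext; simp)).mono_left nhdsWithin_le_nhds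
  refine ht.frequently (Eventually.frequently ?_)
  filter_upwards [self_mem_nhdsWithin] with t ht i
  by_cases hi : i ∈ S <;> simp [hi, show t ≠ 0 from ht]

variable {ι κ : Type*} [Fintype ι] [Fintype κ]

/-- The monomial `u ^ α` in the coordinates of `ι → ℂ`. -/
def monomialFun (α : ι → ℕ) (u : ι → ℂ) : ℂ := ∏ i, u i ^ α i

/-- `g` is, near the origin, a monomial times a nonvanishing analytic function. -/
def IsMonomial (g : (ι → ℂ) → ℂ) : Prop :=
  ∃ (α : ι → ℕ) (ε : (ι → ℂ) → ℂ), AnalyticAt ℂ ε 0 ∧ ε 0 ≠ 0 ∧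
    ∀ᶠ u in 𝓝 0, g u = monomialFun α u * ε u

lemma analyticAt_coord (i : ι) (p : ι → ℂ) : AnalyticAt ℂ (fun u : ι → ℂ => u i) p :=
  (by fun_prop : ContDiff ℂ ω _).contDiffAt.analyticAt

lemma contDiff_monomialFun (α : ι → ℕ) : ContDiff ℂ ω (monomialFun α) := by
  unfold monomialFun; fun_prop

lemma analyticAt_monomialFun (α : ι → ℕ) (p : ι → ℂ) : AnalyticAt ℂ (monomialFun α) p :=
  (contDiff_monomialFun α).contDiffAt.analyticAt

lemma monomialFun_add (α β : ι → ℕ) (u : ι → ℂ) :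
    monomialFun (α + β) u = monomialFun α u * monomialFun β u := by
  simp [monomialFun, pow_add, Finset.prod_mul_distrib]

lemma monomialFun_zero (u : ι → ℂ) : monomialFun 0 u = 1 := by simp [monomialFun]

lemma monomialFun_single [DecidableEq ι] (i : ι) (u : ι → ℂ) :
    monomialFun (Pi.single i 1) u = u i := by
  rw [monomialFun, Finset.prod_eq_single i] <;> simp +contextual

lemma monomialFun_nsmul (k : ℕ) (α : ι → ℕ) (u : ι → ℂ) :
    monomialFun (k • α) u = monomialFun α u ^ k := by
  simp [monomialFun, ← Finset.prod_pow, pow_mul, mul_comm k]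

lemma monomialFun_comp_pow (k : ℕ) (α : ι → ℕ) (u : ι → ℂ) :
    monomialFun α (fun i => u i ^ k) = monomialFun (k • α) u := by
  simp [monomialFun, pow_mul]

lemma monomialFun_eq_zero_iff {α : ι → ℕ} {u : ι → ℂ} :
    monomialFun α u = 0 ↔ ∃ i, u i = 0 ∧ α i ≠ 0 := by
  simp [monomialFun, Finset.prod_eq_zero_iff]

lemma monomialFun_apply_zero {α : ι → ℕ} (h : α ≠ 0) : monomialFun α 0 = 0 := by
  obtain ⟨i, hi⟩ := Function.ne_iff.1 h
  exact monomialFun_eq_zero_iff.2 ⟨i, rfl, hi⟩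

lemma IsMonomial.analyticAt {g : (ι → ℂ) → ℂ} (h : IsMonomial g) : AnalyticAt ℂ g 0 := by
  obtain ⟨α, ε, hε, -, hg⟩ := h
  exact ((analyticAt_monomialFun α 0).fun_mul hε).congr (EventuallyEq.symm hg)

lemma IsMonomial.congr {g g' : (ι → ℂ) → ℂ} (h : IsMonomial g) (e : ∀ᶠ u in 𝓝 0, g' u = g u) :
    IsMonomial g' := by
  obtain ⟨α, ε, hε, hε0, hg⟩ := h
  exact ⟨α, ε, hε, hε0, EventuallyEq.trans e hg⟩

lemma isMonomial_of_ne_zero {g : (ι → ℂ) → ℂ} (h : AnalyticAt ℂ g 0) (h0 : g 0 ≠ 0) :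
    IsMonomial g :=
  ⟨0, g, h, h0, by simp [monomialFun_zero]⟩

lemma isMonomial_monomialFun (α : ι → ℕ) : IsMonomial (monomialFun α) :=
  ⟨α, fun _ => 1, analyticAt_const, one_ne_zero, by simp⟩

lemma isMonomial_coord (i : ι) : IsMonomial (fun u : ι → ℂ => u i) := by
  classical
  exact (isMonomial_monomialFun (Pi.single i 1)).congr
    (.of_forall fun u => (monomialFun_single i u).symm)

lemma IsMonomial.mul {g h : (ι → ℂ) → ℂ} (hg : IsMonomial g) (hh : IsMonomial h) :
    IsMonomial (fun u => g u * h u) := by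
  obtain ⟨α, ε, hε, hε0, hgε⟩ := hg
  obtain ⟨β, η, hη, hη0, hhη⟩ := hh
  refine ⟨α + β, fun u => ε u * η u, hε.fun_mul hη, mul_ne_zero hε0 hη0, ?_⟩
  filter_upwards [hgε, hhη] with u hu hu'
  rw [hu, hu', monomialFun_add]
  ring

lemma IsMonomial.pow {g : (ι → ℂ) → ℂ} (hg : IsMonomial g) (k : ℕ) :
    IsMonomial (fun u => g u ^ k) := by
  induction k with
  | zero => simpa using isMonomial_of_ne_zero analyticAt_const one_ne_zero
  | succ k ih => simpa [pow_succ] using ih.mul hg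

lemma isMonomial_prod {τ : Type*} (s : Finset τ) {g : τ → (ι → ℂ) → ℂ}
    (h : ∀ i ∈ s, IsMonomial (g i)) : IsMonomial (fun u => ∏ i ∈ s, g i u) := by
  classical
  induction s using Finset.induction_on with
  | empty => simpa using isMonomial_of_ne_zero analyticAt_const one_ne_zero
  | insert a s ha ih =>
    simp only [Finset.prod_insert ha]
    exact (h a (by simp)).mul (ih fun i hi => h i (by simp [hi]))

lemma IsMonomial.comp {g : (ι → ℂ) → ℂ} (hg : IsMonomial g) {σ : (κ → ℂ) → ι → ℂ}
    (hσ : ∀ i, IsMonomial (fun u => σ u i)) (h0 : σ 0 = 0) : IsMonomial (fun u => g (σ u)) := by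
  obtain ⟨α, ε, hε, hε0, hgε⟩ := hg
  have hσa : AnalyticAt ℂ σ 0 := analyticAt_pi_iff.2 fun i => (hσ i).analyticAt
  have hσt : Tendsto σ (𝓝 0) (𝓝 0) := by simpa [ContinuousAt, h0] using hσa.continuousAt
  have : IsMonomial (fun u => (∏ i, σ u i ^ α i) * ε (σ u)) :=
    (isMonomial_prod Finset.univ fun i _ => (hσ i).pow (α i)).mul
      (isMonomial_of_ne_zero (hε.fun_comp_of_eq hσa h0) (by simpa [h0] using hε0))
  exact this.congr (hσt.eventually hgε)

lemma IsMonomial.not_eventually_eq_zero {g : (ι → ℂ) → ℂ} (hg : IsMonomial g) :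
    ¬ ∀ᶠ u in 𝓝 0, g u = 0 := by
  obtain ⟨α, ε, hε, hε0, hgε⟩ := hg
  intro h
  obtain ⟨u, hu, hgu, hgu', hεu⟩ := ((frequently_coord_eq_zero_iff_mem ∅).and_eventually
    (h.and (hgε.and (hε.continuousAt.eventually_ne hε0)))).exists
  rw [hgu, eq_comm, mul_eq_zero, monomialFun_eq_zero_iff] at hgu'
  simp [hu, hεu] at hgu'

lemma eventually_eq_of_coord_mul_eq {a b : (ι → ℂ) → ℂ} (ha : AnalyticAt ℂ a 0)
    (hb : AnalyticAt ℂ b 0) (i : ι) (h : ∀ᶠ u in 𝓝 (0 : ι → ℂ), u i * a u = u i * b u) :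
    ∀ᶠ u in 𝓝 0, a u = b u := by
  have hzero : ∀ᶠ u in 𝓝 (0 : ι → ℂ), u i * (a u - b u) = 0 := by
    filter_upwards [h] with u hu
    rw [mul_sub, hu, sub_self]
  exact ((eventually_eq_zero_or_eventually_eq_zero_of_mul_eq_zero (analyticAt_coord i 0)
    (ha.fun_sub hb) hzero).resolve_left (isMonomial_coord i).not_eventually_eq_zero).mono
      fun u => sub_eq_zero.1

-- Restricted to the hyperplane `u i = 0`, one of the two factors vanishes, as germs form a domain.
lemma exists_eq_coord_mul_or_of_mul_eq_coord_mul {g h k : (ι → ℂ) → ℂ} (hg : AnalyticAt ℂ g 0)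
    (hh : AnalyticAt ℂ h 0) (hk : AnalyticAt ℂ k 0) (i : ι)
    (H : ∀ᶠ u in 𝓝 (0 : ι → ℂ), g u * h u = u i * k u) :
    (∃ g₁, AnalyticAt ℂ g₁ 0 ∧ (∀ᶠ u in 𝓝 (0 : ι → ℂ), g u = u i * g₁ u) ∧
      ∀ᶠ u in 𝓝 0, g₁ u * h u = k u) ∨
    ∃ h₁, AnalyticAt ℂ h₁ 0 ∧ (∀ᶠ u in 𝓝 (0 : ι → ℂ), h u = u i * h₁ u) ∧
      ∀ᶠ u in 𝓝 0, g u * h₁ u = k u := by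
  classical
  let π : (ι → ℂ) → ι → ℂ := fun u => u - u i • Pi.single i 1
  have hπ : AnalyticAt ℂ π 0 := (by fun_prop : ContDiff ℂ ω π).contDiffAt.analyticAt
  have hπ0 : π 0 = 0 := by simp [π]
  have hπt : Tendsto π (𝓝 0) (𝓝 0) := by simpa [ContinuousAt, hπ0] using hπ.continuousAt
  have hdiv : ∀ {a : (ι → ℂ) → ℂ}, AnalyticAt ℂ a 0 → (∀ᶠ u in 𝓝 0, a (π u) = 0) →
      ∃ a₁, AnalyticAt ℂ a₁ 0 ∧ ∀ᶠ u in 𝓝 (0 : ι → ℂ), a u = u i * a₁ u := by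
    intro a ha ha0
    obtain ⟨a₁, ha₁, hdiv⟩ := exists_analyticAt_eventually_eq_add_mul ha
      (ContinuousLinearMap.proj i) (Pi.single i 1) rfl
    refine ⟨a₁, ha₁, ?_⟩
    filter_upwards [hdiv, ha0] with u hu hu0
    rwa [ContinuousLinearMap.proj_apply, show a (u - u i • Pi.single i 1) = 0 from hu0,
      zero_add] at hu
  have hzero : ∀ᶠ u in 𝓝 0, g (π u) * h (π u) = 0 := by
    filter_upwards [hπt.eventually H] with u hu
    simpa [π] using hu
  refine (eventually_eq_zero_or_eventually_eq_zero_of_mul_eq_zero (hg.fun_comp_of_eq hπ hπ0)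
    (hh.fun_comp_of_eq hπ hπ0) hzero).imp (fun h0 => ?_) fun h0 => ?_
  · obtain ⟨g₁, hg₁, hgg₁⟩ := hdiv hg h0
    refine ⟨g₁, hg₁, hgg₁, eventually_eq_of_coord_mul_eq (hg₁.fun_mul hh) hk i ?_⟩
    filter_upwards [H, hgg₁] with u hu hu'
    rw [← hu, hu', mul_assoc]
  · obtain ⟨h₁, hh₁, hhh₁⟩ := hdiv hh h0
    refine ⟨h₁, hh₁, hhh₁, eventually_eq_of_coord_mul_eq (hg.fun_mul hh₁) hk i ?_⟩
    filter_upwards [H, hhh₁] with u hu hu'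
    rw [← hu, hu', mul_left_comm]

lemma IsMonomial.of_mul {g h : (ι → ℂ) → ℂ} (hg : AnalyticAt ℂ g 0) (hh : AnalyticAt ℂ h 0)
    (H : IsMonomial (fun u => g u * h u)) : IsMonomial g := by
  classical
  obtain ⟨α, ε, hε, hε0, hH⟩ := H
  induction α using multiIndex_induction generalizing g h with
  | zero =>
    refine isMonomial_of_ne_zero hg fun h0 => hε0 ?_
    simpa [monomialFun_zero, h0] using hH.self_of_nhds.symm
  | add_single β i ih =>
    have hcoord : ∀ᶠ u in 𝓝 0, g u * h u = u i * (monomialFun β u * ε u) := by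
      filter_upwards [hH] with u hu
      rw [hu, monomialFun_add, monomialFun_single]
      ring
    obtain ⟨g₁, hg₁, hgg₁, hg₁h⟩ | ⟨h₁, hh₁, -, hgh₁⟩ :=
      exists_eq_coord_mul_or_of_mul_eq_coord_mul hg hh
        ((analyticAt_monomialFun β 0).fun_mul hε) i hcoord
    · exact ((isMonomial_coord i).mul (ih hg₁ hh hg₁h)).congr hgg₁
    · exact ih hg hh₁ hgh₁

lemma isMonomial_of_isMonomial_prod {τ : Type*} {s : Finset τ} {g : τ → (ι → ℂ) → ℂ}
    (hg : ∀ i ∈ s, AnalyticAt ℂ (g i) 0) (H : IsMonomial (fun u => ∏ i ∈ s, g i u)) :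
    ∀ i ∈ s, IsMonomial (g i) := by
  classical
  intro i hi
  refine IsMonomial.of_mul (h := fun u => ∏ j ∈ s.erase i, g j u) (hg i hi)
    (Finset.analyticAt_fun_prod _ fun j hj => hg j (Finset.mem_of_mem_erase hj)) ?_
  exact H.congr (.of_forall fun u => Finset.mul_prod_erase s (fun j => g j u) hi)

lemma IsMonomial.exists_forall_coord_eq_zero {g : (ι → ℂ) → ℂ} (hg : IsMonomial g) (h0 : g 0 = 0) :
    ∃ i, ∀ᶠ u in 𝓝 (0 : ι → ℂ), u i = 0 → g u = 0 := by
  obtain ⟨c, ζ, -, hζ0, hgc⟩ := hg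
  obtain ⟨i, -, hi⟩ : ∃ i, (0 : ι → ℂ) i = 0 ∧ c i ≠ 0 := by
    have := hgc.self_of_nhds
    rwa [h0, eq_comm, mul_eq_zero, or_iff_left hζ0, monomialFun_eq_zero_iff] at this
  refine ⟨i, hgc.mono fun u hu hui => ?_⟩
  rw [hu, monomialFun_eq_zero_iff.2 ⟨i, hui, hi⟩, zero_mul]

-- If both exponents were nonzero, then `g` would vanish on a hyperplane `u i = 0`, and in that
-- hyperplane one could make exactly one of the two monomials vanish.
lemma eq_zero_or_eq_zero_of_monomialFun_sub_monomialFun {a b : ι → ℕ} (hab : ∀ i, a i = 0 ∨ b i = 0)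
    {ε η g : (ι → ℂ) → ℂ} (hε : AnalyticAt ℂ ε 0) (hε0 : ε 0 ≠ 0) (hη : AnalyticAt ℂ η 0)
    (hη0 : η 0 ≠ 0) (hg : IsMonomial g ∨ ∀ᶠ u in 𝓝 0, g u = 0)
    (h : ∀ᶠ u in 𝓝 0, monomialFun a u * ε u - monomialFun b u * η u = g u) : a = 0 ∨ b = 0 := by
  by_contra! hne
  obtain ⟨j, hj⟩ := Function.ne_iff.1 hne.1
  obtain ⟨k, hk⟩ := Function.ne_iff.1 hne.2
  have hg0 : g 0 = 0 := by
    simpa [monomialFun_apply_zero hne.1, monomialFun_apply_zero hne.2] using h.self_of_nhds.symm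
  obtain ⟨i, hi⟩ : ∃ i, ∀ᶠ u in 𝓝 (0 : ι → ℂ), u i = 0 → g u = 0 :=
    hg.elim (·.exists_forall_coord_eq_zero hg0) fun hg => ⟨j, hg.mono fun u hu _ => hu⟩
  have hev := (h.and hi).and
    ((hε.continuousAt.eventually_ne hε0).and (hη.continuousAt.eventually_ne hη0))
  rcases hab i with hai | hbi
  · obtain ⟨u, hu, ⟨hgu, hgi⟩, hεu, -⟩ :=
      ((frequently_coord_eq_zero_iff_mem {i, k}).and_eventually hev).exists
    have hbu : monomialFun b u = 0 := monomialFun_eq_zero_iff.2 ⟨k, (hu k).2 (by simp), hk⟩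
    have hau : monomialFun a u = 0 := by
      simpa [hgi ((hu i).2 (by simp)), hbu, hεu] using hgu
    obtain ⟨l, hul, hal⟩ := monomialFun_eq_zero_iff.1 hau
    rcases (hu l).1 hul with rfl | rfl
    · exact hal hai
    · exact hk ((hab l).resolve_left hal)
  · obtain ⟨u, hu, ⟨hgu, hgi⟩, -, hηu⟩ :=
      ((frequently_coord_eq_zero_iff_mem {i, j}).and_eventually hev).exists
    have hau : monomialFun a u = 0 := monomialFun_eq_zero_iff.2 ⟨j, (hu j).2 (by simp), hj⟩
    have hbu : monomialFun b u = 0 := by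
      simpa [hgi ((hu i).2 (by simp)), hau, hηu] using hgu
    obtain ⟨l, hul, hbl⟩ := monomialFun_eq_zero_iff.1 hbu
    rcases (hu l).1 hul with rfl | rfl
    · exact hbl hbi
    · exact hj ((hab l).resolve_right hbl)

lemma le_or_le_of_monomialFun_sub_monomialFun {a b : ι → ℕ} {ε η D : (ι → ℂ) → ℂ}
    (hε : AnalyticAt ℂ ε 0) (hε0 : ε 0 ≠ 0) (hη : AnalyticAt ℂ η 0) (hη0 : η 0 ≠ 0)
    (hD : IsMonomial D ∨ ∀ᶠ u in 𝓝 0, D u = 0)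
    (h : ∀ᶠ u in 𝓝 0, monomialFun a u * ε u - monomialFun b u * η u = D u) : a ≤ b ∨ b ≤ a := by
  let g : (ι → ℂ) → ℂ := fun u => monomialFun (a - a ⊓ b) u * ε u - monomialFun (b - a ⊓ b) u * η u
  have hga : AnalyticAt ℂ g 0 :=
    ((analyticAt_monomialFun _ 0).fun_mul hε).fun_sub ((analyticAt_monomialFun _ 0).fun_mul hη)
  have hDg : ∀ᶠ u in 𝓝 0, g u * monomialFun (a ⊓ b) u = D u := by
    filter_upwards [h] with u hu
    have ha := monomialFun_add (a - a ⊓ b) (a ⊓ b) u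
    have hb := monomialFun_add (b - a ⊓ b) (a ⊓ b) u
    rw [tsub_add_cancel_of_le inf_le_left] at ha
    rw [tsub_add_cancel_of_le inf_le_right] at hb
    rw [← hu, ha, hb]
    ring
  have hg : IsMonomial g ∨ ∀ᶠ u in 𝓝 0, g u = 0 := by
    refine hD.imp (fun hD => .of_mul hga (analyticAt_monomialFun _ 0) (hD.congr hDg)) fun hD => ?_
    exact (eventually_eq_zero_or_eventually_eq_zero_of_mul_eq_zero hga
      (analyticAt_monomialFun (a ⊓ b) 0) (EventuallyEq.trans hDg hD)).resolve_right
        (isMonomial_monomialFun _).not_eventually_eq_zero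
  have hdisj : ∀ i, (a - a ⊓ b) i = 0 ∨ (b - a ⊓ b) i = 0 := fun i => by
    simp only [Pi.sub_apply, Pi.inf_apply]; grind
  refine (eq_zero_or_eq_zero_of_monomialFun_sub_monomialFun hdisj hε hε0 hη hη0 hg
    (.of_forall fun _ => rfl)).imp ?_ ?_ <;> rw [tsub_eq_zero_iff_le] <;> simp

end Monomial

section Ultrafilter

variable {T 𝕜 : Type*} [NormedField 𝕜] {𝓤 : Ultrafilter T} {a b : T → 𝕜}

lemma isLittleO_of_not_isBigO (h : ¬ a =O[(𝓤 : Filter T)] b) : b =o[(𝓤 : Filter T)] a := by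
  refine Asymptotics.isLittleO_iff.2 fun c hc => ?_
  rcases 𝓤.eventually_or.1 (Eventually.of_forall fun t => le_total ‖b t‖ (c * ‖a t‖)) with hba | hab
  · exact hba
  · refine absurd (Asymptotics.IsBigO.of_bound c⁻¹ ?_) h
    filter_upwards [hab] with t ht
    rwa [le_inv_mul_iff₀ hc]

lemma eventually_ne_zero_of_not_isBigO (h : ¬ a =O[(𝓤 : Filter T)] b) :
    ∀ᶠ t in (𝓤 : Filter T), a t ≠ 0 :=
  𝓤.eventually_not.2 fun h0 => h (EventuallyEq.isBigO h0 |>.trans (Asymptotics.isBigO_zero _ _))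

lemma exists_tendsto_div_of_isBigO [ProperSpace 𝕜] (h : a =O[(𝓤 : Filter T)] b) :
    ∃ c, Tendsto (fun t => a t / b t) 𝓤 (𝓝 c) := by
  obtain ⟨C, hC⟩ := (Asymptotics.div_isBoundedUnder_of_isBigO h).eventually_le
  have hmem : ∀ᶠ t in (𝓤 : Filter T), a t / b t ∈ closedBall 0 C := by simpa using hC
  obtain ⟨c, -, hc⟩ := (isCompact_closedBall (0 : 𝕜) C).ultrafilter_le_nhds
    (𝓤.map fun t => a t / b t) (le_principal_iff.2 hmem)
  exact ⟨c, hc⟩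

end Ultrafilter

section Charts

variable {T X Y Z : Type*} [NormedAddCommGroup X] [NormedSpace ℂ X] [NormedAddCommGroup Y]
  [NormedSpace ℂ Y] [NormedAddCommGroup Z] [NormedSpace ℂ Z] {𝓤 : Ultrafilter T}

/-- The points `z t` lift along the ultrafilter `𝓤` through the analytic germ `σ` at the origin to
points `u t` that converge to the origin. -/
structure Lifts (𝓤 : Ultrafilter T) (z : T → X) (σ : Y → X) (u : T → Y) : Prop where
  analyticAt : AnalyticAt ℂ σ 0
  map_zero : σ 0 = 0
  tendsto : Tendsto u 𝓤 (𝓝 0)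
  eventually_eq : ∀ᶠ t in (𝓤 : Filter T), σ (u t) = z t

/-- Local uniformization of `f` along the points `z t`: these lift to a chart in which `f` is a
monomial times a nonvanishing analytic function. -/
def Uniformizable (𝓤 : Ultrafilter T) (m : ℕ) (z : T → X) (f : X → ℂ) : Prop :=
  ∃ (σ : (Fin m → ℂ) → X) (u : T → Fin m → ℂ), Lifts 𝓤 z σ u ∧ IsMonomial (fun v => f (σ v))

lemma Lifts.tendsto_chart {z : T → X} {σ : Y → X} {u : T → Y} (h : Lifts 𝓤 z σ u) :
    Tendsto σ (𝓝 0) (𝓝 0) := by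
  simpa [ContinuousAt, h.map_zero] using h.analyticAt.continuousAt

lemma Lifts.trans {z : T → X} {σ : Y → X} {u : T → Y} {τ : Z → Y} {v : T → Z}
    (h : Lifts 𝓤 z σ u) (h' : Lifts 𝓤 u τ v) : Lifts 𝓤 z (fun x => σ (τ x)) v where
  analyticAt := h.analyticAt.fun_comp_of_eq h'.analyticAt h'.map_zero
  map_zero := by rw [h'.map_zero, h.map_zero]
  tendsto := h'.tendsto
  eventually_eq := by
    filter_upwards [h.eventually_eq, h'.eventually_eq] with t ht ht'
    rw [ht', ht]

lemma Lifts.prodMap_id {z : T → X} {σ : Y → X} {u : T → Y} (h : Lifts 𝓤 z σ u) {y : T → ℂ}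
    (hy : Tendsto y 𝓤 (𝓝 0)) :
    Lifts 𝓤 (fun t => (z t, y t)) (fun q : Y × ℂ => (σ q.1, q.2)) (fun t => (u t, y t)) where
  analyticAt := (h.analyticAt.fun_comp_of_eq (g := σ) analyticAt_fst rfl).prod analyticAt_snd
  map_zero := by simp [h.map_zero]
  tendsto := h.tendsto.prodMk_nhds hy
  eventually_eq := h.eventually_eq.mono fun t ht => by rw [ht]

lemma Lifts.refl {z : T → X} (hz : Tendsto z 𝓤 (𝓝 0)) : Lifts 𝓤 z (fun x => x) z :=
  ⟨analyticAt_id, rfl, hz, .of_forall fun _ => rfl⟩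

lemma Uniformizable.of_lifts {m : ℕ} {z : T → X} {f : X → ℂ} {σ : Y → X} {u : T → Y}
    (h : Lifts 𝓤 z σ u) (hu : Uniformizable 𝓤 m u (fun y => f (σ y))) : Uniformizable 𝓤 m z f := by
  obtain ⟨τ, v, hτ, hmon⟩ := hu
  exact ⟨fun x => σ (τ x), v, h.trans hτ, hmon⟩

lemma Uniformizable.congr {m : ℕ} {z : T → X} {f g : X → ℂ} (h : Uniformizable 𝓤 m z g)
    (e : ∀ᶠ x in 𝓝 0, f x = g x) : Uniformizable 𝓤 m z f := by
  obtain ⟨τ, v, hτ, hmon⟩ := h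
  exact ⟨τ, v, hτ, hmon.congr (hτ.tendsto_chart.eventually e)⟩

lemma uniformizable_of_ne_zero {n : ℕ} {f : (Fin n → ℂ) → ℂ} (hf : AnalyticAt ℂ f 0) (h0 : f 0 ≠ 0)
    {z : T → Fin n → ℂ} (hz : Tendsto z 𝓤 (𝓝 0)) : Uniformizable 𝓤 n z f :=
  ⟨_, z, .refl hz, isMonomial_of_ne_zero hf h0⟩

/-- The identification of `ℂⁿ⁺¹` with `ℂⁿ × ℂ` whose second component is the coordinate `0`. -/
def splitHead (n : ℕ) (v : Fin (n + 1) → ℂ) : (Fin n → ℂ) × ℂ := (Fin.tail v, v 0)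

lemma lifts_splitHead {n : ℕ} {z : T → (Fin n → ℂ) × ℂ} (hz : Tendsto z 𝓤 (𝓝 0)) :
    Lifts 𝓤 z (splitHead n) (fun t => Fin.cons (z t).2 (z t).1) where
  analyticAt := (by unfold splitHead Fin.tail; fun_prop :
    ContDiff ℂ ω (splitHead n)).contDiffAt.analyticAt
  map_zero := rfl
  tendsto := by
    refine tendsto_pi_nhds.2 (Fin.cases ?_ fun i => ?_)
    · exact (continuous_snd.tendsto (0 : (Fin n → ℂ) × ℂ)).comp hz
    · exact ((continuous_apply i).comp continuous_fst |>.tendsto (0 : (Fin n → ℂ) × ℂ)).comp hz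
  eventually_eq := .of_forall fun t => rfl

lemma Uniformizable.of_lifts_prod {n : ℕ} {z : T → X} {f : X → ℂ} {σ : (Fin n → ℂ) × ℂ → X}
    {u : T → (Fin n → ℂ) × ℂ} (h : Lifts 𝓤 z σ u)
    (hf : IsMonomial (fun v => f (σ (splitHead n v)))) : Uniformizable 𝓤 (n + 1) z f :=
  ⟨_, _, h.trans (lifts_splitHead h.tendsto), hf⟩

lemma IsMonomial.comp_splitHead_fst {n : ℕ} {g : (Fin n → ℂ) → ℂ} (hg : IsMonomial g) :
    IsMonomial (fun v => g (splitHead n v).1) :=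
  hg.comp (fun i => isMonomial_coord i.succ) rfl

lemma lifts_pow {n N : ℕ} (hN : N ≠ 0) {u : T → Fin n → ℂ} (hu : Tendsto u 𝓤 (𝓝 0)) :
    Lifts 𝓤 u (fun v j => v j ^ N) (fun t j => u t j ^ (N : ℂ)⁻¹) where
  analyticAt := (by fun_prop : ContDiff ℂ ω _).contDiffAt.analyticAt
  map_zero := by ext j; simp [hN]
  tendsto := by
    have hcont : ContinuousAt (fun x : ℂ => x ^ (N : ℂ)⁻¹) 0 :=
      (Complex.continuousAt_cpow_zero_of_re_pos (z := (N : ℂ)⁻¹) (by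
        rw [← Complex.ofReal_natCast, ← Complex.ofReal_inv, Complex.ofReal_re]
        positivity)).comp_of_eq (f := fun x : ℂ => (x, (N : ℂ)⁻¹)) (by fun_prop) rfl
    refine tendsto_pi_nhds.2 fun j => ?_
    simpa [Function.comp_def, Complex.zero_cpow, hN] using
      hcont.tendsto.comp (tendsto_pi_nhds.1 hu j)
  eventually_eq := .of_forall fun t => funext fun j => Complex.cpow_nat_inv_pow _ hN

/-- In some chart lifting the points `(u t, y t)` the function `y` divides `m`, while all coordinate
functions are monomials. -/
def HasDivisibilityChart {n : ℕ} (𝓤 : Ultrafilter T) (m : (Fin n → ℂ) → ℂ) (u : T → Fin n → ℂ)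
    (y : T → ℂ) : Prop :=
  ∃ (σ : (Fin (n + 1) → ℂ) → (Fin n → ℂ) × ℂ) (w : T → Fin (n + 1) → ℂ),
    Lifts 𝓤 (fun t => (u t, y t)) σ w ∧ (∀ i, IsMonomial (fun v => (σ v).1 i)) ∧
    IsMonomial (fun v => (σ v).2) ∧
    ∃ q, AnalyticAt ℂ q 0 ∧ ∀ᶠ v in 𝓝 0, m (σ v).1 = (σ v).2 * q v

lemma HasDivisibilityChart.mul {n : ℕ} {m m' : (Fin n → ℂ) → ℂ} {u : T → Fin n → ℂ} {y : T → ℂ}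
    (h : HasDivisibilityChart 𝓤 m u y) (hm' : AnalyticAt ℂ m' 0) :
    HasDivisibilityChart 𝓤 (fun v => m v * m' v) u y := by
  obtain ⟨σ, w, hσ, hx, hy, q, hq, hdiv⟩ := h
  refine ⟨σ, w, hσ, hx, hy, fun v => q v * m' (σ v).1, hq.fun_mul ?_, ?_⟩
  · exact hm'.fun_comp_of_eq ((analyticAt_fst (p := σ 0)).fun_comp hσ.analyticAt)
      (by rw [hσ.map_zero]; rfl)
  · filter_upwards [hdiv] with v hv
    rw [hv, mul_assoc]

lemma hasDivisibilityChart_coord {n : ℕ} {u : T → Fin n → ℂ} {y : T → ℂ} (hu : Tendsto u 𝓤 (𝓝 0))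
    (hy : Tendsto y 𝓤 (𝓝 0)) (i : Fin n) (h : (fun t => u t i) =O[(𝓤 : Filter T)] y) :
    HasDivisibilityChart 𝓤 (fun v => v i) u y := by
  obtain ⟨c, hc⟩ := exists_tendsto_div_of_isBigO h
  let τ : (Fin n → ℂ) × ℂ → (Fin n → ℂ) × ℂ :=
    fun q => (Function.update q.1 i (q.2 * (c + q.1 i)), q.2)
  have hτi : ∀ q, (τ q).1 i = q.2 * (c + q.1 i) := fun q => by simp [τ]
  have hτj : ∀ q j, j ≠ i → (τ q).1 j = q.1 j := fun q j hj => by simp [τ, hj]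
  have hτd : ContDiff ℂ ω τ := by
    refine ContDiff.prodMk (contDiff_pi.2 fun j => ?_) contDiff_snd
    rcases eq_or_ne j i with rfl | hj
    · simp only [Function.update_self]; fun_prop
    · simp only [Function.update_of_ne hj]; fun_prop
  have hτ : Lifts 𝓤 (fun t => (u t, y t)) τ
      (fun t => (Function.update (u t) i (u t i / y t - c), y t)) := by
    refine ⟨hτd.contDiffAt.analyticAt, ?_, (tendsto_pi_nhds.2 fun j => ?_).prodMk_nhds hy, ?_⟩
    · simp [τ]
    · rcases eq_or_ne j i with rfl | hj
      · simpa using hc.sub_const c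
      · simpa [hj] using tendsto_pi_nhds.1 hu j
    · filter_upwards [h.eventually_mul_div_cancel] with t ht
      simpa [τ, mul_comm (y t)] using ht
  refine ⟨_, _, hτ.trans (lifts_splitHead hτ.tendsto), fun j => ?_, isMonomial_coord 0,
    fun v => c + v i.succ, (by fun_prop : ContDiff ℂ ω _).contDiffAt.analyticAt,
    .of_forall fun v => hτi _⟩
  rcases eq_or_ne j i with rfl | hj
  · simp only [hτi]
    refine (isMonomial_coord 0).mul ?_
    rcases eq_or_ne c 0 with rfl | hc0
    · simpa using! isMonomial_coord j.succ
    · exact isMonomial_of_ne_zero (g := fun v : Fin (n + 1) → ℂ => c + v j.succ)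
        (by fun_prop : ContDiff ℂ ω _).contDiffAt.analyticAt (by simpa using hc0)
  · simpa only [hτj _ _ hj] using! isMonomial_coord j.succ

lemma HasDivisibilityChart.mul_coord {n : ℕ} {m : (Fin n → ℂ) → ℂ} {u : T → Fin n → ℂ} {y : T → ℂ}
    (hu : Tendsto u 𝓤 (𝓝 0)) (i : Fin n) (h : y =o[(𝓤 : Filter T)] fun t => u t i)
    (hm : HasDivisibilityChart 𝓤 m u (fun t => y t / u t i)) :
    HasDivisibilityChart 𝓤 (fun v => m v * v i) u y := by
  obtain ⟨σ, w, hσ, hx, hy, q, hq, hdiv⟩ := hm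
  have hτ : Lifts 𝓤 (fun t => (u t, y t)) (fun p : (Fin n → ℂ) × ℂ => (p.1, p.2 * p.1 i))
      (fun t => (u t, y t / u t i)) := by
    refine ⟨(by fun_prop : ContDiff ℂ ω _).contDiffAt.analyticAt, by simp,
      hu.prodMk_nhds h.tendsto_div_nhds_zero, ?_⟩
    filter_upwards [h.isBigO.eventually_mul_div_cancel] with t ht
    exact Prod.ext rfl ht
  refine ⟨_, _, hτ.trans hσ, hx, hy.mul (hx i), q, hq, ?_⟩
  filter_upwards [hdiv] with v hv
  rw [hv]
  ring

-- Blow up `u i = y = 0` for one coordinate `u i` of the monomial at a time.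
lemma hasDivisibilityChart_monomialFun {n : ℕ} {γ : Fin n → ℕ} {u : T → Fin n → ℂ} {y : T → ℂ}
    (hu : Tendsto u 𝓤 (𝓝 0)) (hy : Tendsto y 𝓤 (𝓝 0))
    (h : (fun t => monomialFun γ (u t)) =O[(𝓤 : Filter T)] y) :
    HasDivisibilityChart 𝓤 (monomialFun γ) u y := by
  induction γ using multiIndex_induction generalizing y with
  | zero =>
    simp only [monomialFun_zero] at h
    exact absurd (tendsto_nhds_unique (h.trans_tendsto hy) tendsto_const_nhds) zero_ne_one
  | add_single β i ih =>
    have hsplit : monomialFun (β + Pi.single i 1) = fun v => monomialFun β v * v i := by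
      funext v
      rw [monomialFun_add, monomialFun_single]
    rw [hsplit] at h ⊢
    by_cases hle : (fun t => u t i) =O[(𝓤 : Filter T)] y
    · simpa only [mul_comm] using
        (hasDivisibilityChart_coord hu hy i hle).mul (analyticAt_monomialFun β 0)
    · have hyu := isLittleO_of_not_isBigO hle
      refine .mul_coord hu i hyu (ih hyu.tendsto_div_nhds_zero ?_)
      refine (h.mul (Asymptotics.isBigO_refl (fun t => (u t i)⁻¹) 𝓤)).congr' ?_ .rfl
      filter_upwards [eventually_ne_zero_of_not_isBigO hle] with t ht
      exact mul_inv_cancel_right₀ ht _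

end Charts

section Polynomial

open Polynomial

lemma rootMultiplicity_le_of_coeff_eq_zero {K : Type*} [Field K] [CharZero K] {P : K[X]} {e i : ℕ}
    (hdeg : P.natDegree = e + 1) (he : P.coeff e = 0) (hi : i < e) (hPi : P.coeff i ≠ 0) (z : K) :
    P.rootMultiplicity z ≤ e := by
  have hP : P ≠ 0 := by rintro rfl; simp at hPi
  by_contra! hlt
  have hpow : P = C P.leadingCoeff * (X - C z) ^ (e + 1) :=
    eq_leadingCoeff_mul_of_monic_of_dvd_of_natDegree_le ((monic_X_sub_C z).pow _)
      ((le_rootMultiplicity_iff hP).1 hlt) (by simp [hdeg])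
  have hz : z = 0 := by
    rw [hpow, coeff_C_mul, sub_eq_add_neg, ← C_neg, coeff_X_add_C_pow] at he
    simpa [hP, Nat.cast_add_one_ne_zero] using he
  rw [hpow, hz] at hPi
  simp [coeff_X_pow, show i ≠ e + 1 by omega] at hPi

lemma analyticOrderAt_eval_const_add {𝕜 : Type*} [NontriviallyNormedField 𝕜] {P : 𝕜[X]} (hP : P ≠ 0)
    (z : 𝕜) : analyticOrderAt (fun t => P.eval (z + t)) 0 = P.rootMultiplicity z := by
  obtain ⟨Q, hPQ, hQ⟩ := P.exists_eq_pow_rootMultiplicity_mul_and_not_dvd hP z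
  have han : ∀ R : 𝕜[X], AnalyticAt 𝕜 (fun t => R.eval (z + t)) 0 := fun R =>
    (analyticAt_const.add analyticAt_id).aeval_polynomial R
  refine (han P).analyticOrderAt_eq_natCast.2 ⟨_, han Q, ?_, .of_forall fun t => ?_⟩
  · simpa [dvd_iff_isRoot] using hQ
  · conv_lhs => rw [hPQ]
    simp

end Polynomial

section WeightedForm

variable {e : ℕ}

/-- The form `∑ i < e, bᵢ M ^ (e + 1 - i) y ^ i + c y ^ (e + 1)` in `(M, y)`. -/
def weightedForm (e : ℕ) (b : Fin e → ℂ) (c M y : ℂ) : ℂ :=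
  ∑ i : Fin e, M ^ (e + 1 - (i : ℕ)) * b i * y ^ (i : ℕ) + y ^ (e + 1) * c

lemma weightedForm_mul_mul (b : Fin e → ℂ) (c t M y : ℂ) :
    weightedForm e b c (t * M) (t * y) = t ^ (e + 1) * weightedForm e b c M y := by
  have hterm : ∀ i : Fin e, (t * M) ^ (e + 1 - (i : ℕ)) * b i * (t * y) ^ (i : ℕ) =
      t ^ (e + 1) * (M ^ (e + 1 - (i : ℕ)) * b i * y ^ (i : ℕ)) := fun i => by
    rw [mul_pow, mul_pow, ← Nat.sub_add_cancel (show (i : ℕ) ≤ e + 1 by omega), pow_add,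
      Nat.sub_add_cancel (show (i : ℕ) ≤ e + 1 by omega)]
    ring
  rw [weightedForm, Finset.sum_congr rfl fun i _ => hterm i, ← Finset.mul_sum, weightedForm]
  ring

lemma weightedForm_zero_one (b : Fin e → ℂ) (c : ℂ) : weightedForm e b c 0 1 = c := by
  simp [weightedForm, show ∀ i : Fin e, e + 1 - (i : ℕ) ≠ 0 by omega]

lemma analyticAt_weightedForm {X : Type*} [NormedAddCommGroup X] [NormedSpace ℂ X] {p : X}
    {b : Fin e → X → ℂ} {c M y : X → ℂ} (hb : ∀ i, AnalyticAt ℂ (b i) p) (hc : AnalyticAt ℂ c p)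
    (hM : AnalyticAt ℂ M p) (hy : AnalyticAt ℂ y p) :
    AnalyticAt ℂ (fun x => weightedForm e (fun i => b i x) (c x) (M x) (y x)) p :=
  (Finset.univ.analyticAt_fun_sum fun i _ => ((hM.fun_pow _).fun_mul (hb i)).fun_mul
    (hy.fun_pow _)).fun_add ((hy.fun_pow _).fun_mul hc)

-- As a polynomial in `y` the form has no term of degree `e`, hence no root of multiplicity `e + 1`
-- unless it is a multiple of `y ^ (e + 1)`.
lemma exists_analyticOrderAt_weightedForm_le {b : Fin e → ℂ} {c : ℂ} (hc : c ≠ 0) {i₀ : Fin e}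
    (hb : b i₀ ≠ 0) (z : ℂ) :
    ∃ d ≤ e, analyticOrderAt (fun s => weightedForm e b c 1 (z + s)) 0 = d := by
  open Polynomial in
  let P : ℂ[X] := ∑ i, C (b i) * X ^ (i : ℕ) + C c * X ^ (e + 1)
  have hlow : ∀ k ≤ e, P.coeff k = ∑ i : Fin e, if k = i then b i else 0 := fun k hk => by
    simp [P, Polynomial.coeff_X_pow, show k ≠ e + 1 by omega]
  have hi₀ : P.coeff i₀ = b i₀ := by
    simp [hlow _ i₀.2.le, Fin.val_inj]
  have he : P.coeff e = 0 := by
    rw [hlow _ le_rfl]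
    exact Finset.sum_eq_zero fun i _ => if_neg i.2.ne'
  have hdeg : P.natDegree = e + 1 := by
    refine Polynomial.natDegree_add_eq_right_of_natDegree_lt ?_ |>.trans
      (Polynomial.natDegree_C_mul_X_pow _ _ hc)
    rw [Polynomial.natDegree_C_mul_X_pow _ _ hc, Nat.lt_succ_iff]
    exact Polynomial.natDegree_sum_le_of_forall_le _ _ fun i _ =>
      (Polynomial.natDegree_C_mul_X_pow_le _ _).trans i.2.le
  have hP : P ≠ 0 := by rintro h; simp [h] at hdeg
  refine ⟨P.rootMultiplicity z, rootMultiplicity_le_of_coeff_eq_zero hdeg he i₀.2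
    (hi₀ ▸ hb) z, ?_⟩
  rw [← analyticOrderAt_eval_const_add hP]
  congr 1 with s
  simp [P, weightedForm, Polynomial.eval_finsetSum, mul_comm c]

end WeightedForm

section Uniformization

variable {T : Type*} {𝓤 : Ultrafilter T} {n : ℕ}

/-- Local uniformization along `𝓤` of all nonzero analytic germs at the origin of `ℂⁿ`. -/
def LocalUniformization (𝓤 : Ultrafilter T) (n : ℕ) : Prop :=
  ∀ f : (Fin n → ℂ) → ℂ, AnalyticAt ℂ f 0 → (¬ ∀ᶠ u in 𝓝 0, f u = 0) →
    ∀ z : T → Fin n → ℂ, Tendsto z 𝓤 (𝓝 0) → Uniformizable 𝓤 n z f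

/-- Local uniformization along `𝓤` of the germs `h(x) g(x, y)` at the origin of `ℂⁿ × ℂ`, where
`h ≠ 0` and `g` has order `d` in `y`. -/
def LocalUniformizationOfOrder (𝓤 : Ultrafilter T) (n d : ℕ) : Prop :=
  ∀ h : (Fin n → ℂ) → ℂ, AnalyticAt ℂ h 0 → (¬ ∀ᶠ u in 𝓝 0, h u = 0) →
    ∀ g : (Fin n → ℂ) × ℂ → ℂ, AnalyticAt ℂ g 0 → analyticOrderAt (fun y => g (0, y)) 0 = d →
      ∀ z : T → (Fin n → ℂ) × ℂ, Tendsto z 𝓤 (𝓝 0) →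
        Uniformizable 𝓤 (n + 1) z (fun q => h q.1 * g q)

lemma tendsto_fst_zero {z : T → (Fin n → ℂ) × ℂ} (hz : Tendsto z 𝓤 (𝓝 0)) :
    Tendsto (fun t => (z t).1) 𝓤 (𝓝 0) :=
  (continuous_fst.tendsto _).comp hz

lemma tendsto_snd_zero {z : T → (Fin n → ℂ) × ℂ} (hz : Tendsto z 𝓤 (𝓝 0)) :
    Tendsto (fun t => (z t).2) 𝓤 (𝓝 0) :=
  (continuous_snd.tendsto _).comp hz

-- Substituting `y = u ^ γ (z + s)`, where `z` is the limit of `y / u ^ γ`, lowers the order.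
lemma uniformizable_weightedForm_of_isBigO {e : ℕ} (IH : ∀ d ≤ e, LocalUniformizationOfOrder 𝓤 n d)
    {h : (Fin n → ℂ) → ℂ} (hh : IsMonomial h) {γ : Fin n → ℕ} (hγ : γ ≠ 0)
    {b : Fin e → (Fin n → ℂ) → ℂ} (hb : ∀ i, AnalyticAt ℂ (b i) 0) {i₀ : Fin e} (hb₀ : b i₀ 0 ≠ 0)
    {c : (Fin n → ℂ) × ℂ → ℂ} (hc : AnalyticAt ℂ c 0) (hc0 : c 0 ≠ 0)
    {w : T → (Fin n → ℂ) × ℂ} (hw : Tendsto w 𝓤 (𝓝 0))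
    (hO : (fun t => (w t).2) =O[(𝓤 : Filter T)] fun t => monomialFun γ (w t).1) :
    Uniformizable 𝓤 (n + 1) w
      (fun q => h q.1 * weightedForm e (fun i => b i q.1) (c q) (monomialFun γ q.1) q.2) := by
  obtain ⟨z, hz⟩ := exists_tendsto_div_of_isBigO hO
  let τ : (Fin n → ℂ) × ℂ → (Fin n → ℂ) × ℂ := fun q => (q.1, monomialFun γ q.1 * (z + q.2))
  have hτ0 : ∀ s, τ (0, s) = 0 := fun s => by simp [τ, monomialFun_apply_zero hγ]
  have hτa : AnalyticAt ℂ τ 0 := by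
    have hγ := contDiff_monomialFun γ
    exact (by fun_prop : ContDiff ℂ ω τ).contDiffAt.analyticAt
  have hτ : Lifts 𝓤 w τ (fun t => ((w t).1, (w t).2 / monomialFun γ (w t).1 - z)) := by
    refine ⟨hτa, hτ0 0, (tendsto_fst_zero hw).prodMk_nhds (by simpa using hz.sub_const z), ?_⟩
    filter_upwards [hO.eventually_mul_div_cancel] with t ht
    exact Prod.ext rfl (by simpa [τ, mul_comm (monomialFun γ _)] using ht)
  let g : (Fin n → ℂ) × ℂ → ℂ := fun q =>
    weightedForm e (fun i => b i q.1) (c (τ q)) 1 (z + q.2)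
  have hg : AnalyticAt ℂ g 0 :=
    analyticAt_weightedForm (fun i => (hb i).fun_comp_of_eq analyticAt_fst rfl)
      (hc.fun_comp_of_eq hτa (hτ0 0)) analyticAt_const (analyticAt_const.fun_add analyticAt_snd)
  obtain ⟨d, hd, hord⟩ := exists_analyticOrderAt_weightedForm_le (b := fun i => b i 0) hc0 hb₀ z
  have hm : IsMonomial (fun u => h u * monomialFun γ u ^ (e + 1)) :=
    hh.mul ((isMonomial_monomialFun γ).pow _)
  refine .of_lifts hτ ((IH d hd _ hm.analyticAt hm.not_eventually_eq_zero g hg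
    (by simpa only [g, hτ0] using hord) _ hτ.tendsto).congr (.of_forall fun q => ?_))
  simpa [g, τ, mul_assoc] using
    Or.inl (weightedForm_mul_mul (fun i => b i q.1) (c (τ q)) (monomialFun γ q.1) 1 (z + q.2))

-- Here `u ^ γ = o(y)`, so that the term `c y ^ (e + 1)` dominates.
lemma uniformizable_weightedForm_of_not_isBigO {e : ℕ} {h : (Fin n → ℂ) → ℂ} (hh : IsMonomial h)
    {γ : Fin n → ℕ} {b : Fin e → (Fin n → ℂ) → ℂ} (hb : ∀ i, AnalyticAt ℂ (b i) 0)
    {c : (Fin n → ℂ) × ℂ → ℂ} (hc : AnalyticAt ℂ c 0) (hc0 : c 0 ≠ 0)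
    {w : T → (Fin n → ℂ) × ℂ} (hw : Tendsto w 𝓤 (𝓝 0))
    (hO : ¬ (fun t => (w t).2) =O[(𝓤 : Filter T)] fun t => monomialFun γ (w t).1) :
    Uniformizable 𝓤 (n + 1) w
      (fun q => h q.1 * weightedForm e (fun i => b i q.1) (c q) (monomialFun γ q.1) q.2) := by
  have ho := isLittleO_of_not_isBigO hO
  obtain ⟨σ, u, hσ, hx, hy, q, hq, hdiv⟩ :=
    hasDivisibilityChart_monomialFun (tendsto_fst_zero hw) (tendsto_snd_zero hw) ho.isBigO
  have hq0 : q 0 = 0 := by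
    refine tendsto_nhds_unique (hq.continuousAt.tendsto.comp hσ.tendsto)
      (ho.tendsto_div_nhds_zero.congr' ?_)
    filter_upwards [hσ.tendsto.eventually hdiv, hσ.eventually_eq,
      eventually_ne_zero_of_not_isBigO hO] with t ht hσt hyt
    rw [hσt] at ht
    exact (eq_div_of_mul_eq hyt (by rw [ht, Function.comp_apply, mul_comm])).symm
  have hσ1 : AnalyticAt ℂ (fun v => (σ v).1) 0 := analyticAt_pi_iff.2 fun i => (hx i).analyticAt
  have hσ10 : (σ 0).1 = 0 := by rw [hσ.map_zero]; rfl
  have hunit : IsMonomial (fun v => weightedForm e (fun i => b i (σ v).1) (c (σ v)) (q v) 1) := by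
    refine isMonomial_of_ne_zero (analyticAt_weightedForm
      (fun i => (hb i).fun_comp_of_eq hσ1 hσ10)
      (hc.fun_comp_of_eq hσ.analyticAt hσ.map_zero) hq analyticAt_const) ?_
    rwa [hq0, weightedForm_zero_one, hσ.map_zero]
  refine ⟨σ, u, hσ, ((hh.comp hx hσ10).mul ((hy.pow (e + 1)).mul hunit)).congr ?_⟩
  filter_upwards [hdiv] with v hv
  rw [hv, ← weightedForm_mul_mul, mul_one]

lemma LocalUniformization.uniformizable_mul_snd_pow_mul (hU : LocalUniformization 𝓤 n)
    {h : (Fin n → ℂ) → ℂ} (hh : AnalyticAt ℂ h 0) (hh0 : ¬ ∀ᶠ u in 𝓝 0, h u = 0)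
    {c : (Fin n → ℂ) × ℂ → ℂ} (hc : AnalyticAt ℂ c 0) (hc0 : c 0 ≠ 0) (k : ℕ)
    {z : T → (Fin n → ℂ) × ℂ} (hz : Tendsto z 𝓤 (𝓝 0)) :
    Uniformizable 𝓤 (n + 1) z (fun q => h q.1 * (q.2 ^ k * c q)) := by
  obtain ⟨σ, u, hσ, hm⟩ := hU h hh hh0 _ (tendsto_fst_zero hz)
  have hσ' := hσ.prodMap_id (tendsto_snd_zero hz)
  have hs := hσ'.trans (lifts_splitHead hσ'.tendsto)
  refine .of_lifts_prod hσ' (hm.comp_splitHead_fst.mul (((isMonomial_coord 0).pow k).mul ?_))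
  refine isMonomial_of_ne_zero (hc.fun_comp_of_eq hs.analyticAt hs.map_zero) ?_
  rwa [hs.map_zero]

lemma LocalUniformization.exists_lifts_forall_isMonomial (hU : LocalUniformization 𝓤 n)
    {κ : Type*} [Finite κ] {F : κ → (Fin n → ℂ) → ℂ} (hF : ∀ i, AnalyticAt ℂ (F i) 0)
    {z : T → Fin n → ℂ} (hz : Tendsto z 𝓤 (𝓝 0)) :
    ∃ (σ : (Fin n → ℂ) → Fin n → ℂ) (u : T → Fin n → ℂ), Lifts 𝓤 z σ u ∧
      ∀ i, ¬ (∀ᶠ x in 𝓝 0, F i x = 0) → IsMonomial (fun v => F i (σ v)) := by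
  classical
  have := Fintype.ofFinite κ
  let s := Finset.univ.filter fun i => ¬ ∀ᶠ x in 𝓝 0, F i x = 0
  obtain ⟨σ, u, hσ, hmon⟩ := hU (fun x => ∏ i ∈ s, F i x) (s.analyticAt_fun_prod fun i _ => hF i)
    (not_eventually_prod_eq_zero s (fun i _ => hF i) fun i hi => (Finset.mem_filter.1 hi).2) z hz
  refine ⟨σ, u, hσ, fun i hi => ?_⟩
  exact isMonomial_of_isMonomial_prod (g := fun i v => F i (σ v))
    (fun j _ => (hF j).fun_comp_of_eq hσ.analyticAt hσ.map_zero) hmon i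
    (Finset.mem_filter.2 ⟨Finset.mem_univ i, hi⟩)

end Uniformization

section Newton

variable {n : ℕ}

lemma tendsto_pi_pow_zero {ι : Type*} {N : ℕ} (hN : N ≠ 0) :
    Tendsto (fun (v : ι → ℂ) i => v i ^ N) (𝓝 0) (𝓝 0) :=
  (by fun_prop : Continuous fun (v : ι → ℂ) i => v i ^ N).tendsto' 0 0 (by ext; simp [hN])

lemma eventually_comp_pow_eq_monomialFun_pow_mul {A ε : (Fin n → ℂ) → ℂ} {α γ : Fin n → ℕ}
    {k w N : ℕ} (hA : ∀ᶠ u in 𝓝 0, A u = monomialFun α u * ε u) (hγ : γ ≤ k • α) (hN : N ≠ 0)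
    (hk : w * k = N) :
    ∀ᶠ v in 𝓝 (0 : Fin n → ℂ), A (fun j => v j ^ N) =
      monomialFun γ v ^ w * (monomialFun (w • (k • α - γ)) v * ε (fun j => v j ^ N)) := by
  filter_upwards [(tendsto_pi_pow_zero hN).eventually hA] with v hv
  rw [hv, monomialFun_comp_pow, ← mul_assoc, ← monomialFun_nsmul, ← monomialFun_add, ← smul_add,
    add_tsub_cancel_of_le hγ, smul_smul, hk]

lemma exists_common_monomial_factor {κ : Type*} [Finite κ] {A : κ → (Fin n → ℂ) → ℂ}
    (hA : ∀ i, IsMonomial (A i) ∨ ∀ᶠ u in 𝓝 0, A i u = 0) (hA0 : ∀ i, A i 0 = 0)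
    (hex : ∃ i, IsMonomial (A i)) {k w : κ → ℕ} {N : ℕ} (hN : N ≠ 0) (hk : ∀ i, w i * k i = N)
    (hD : ∀ i j, IsMonomial (fun u => A i u ^ k i - A j u ^ k j) ∨
      ∀ᶠ u in 𝓝 0, A i u ^ k i - A j u ^ k j = 0) :
    ∃ γ ≠ 0, ∃ b : κ → (Fin n → ℂ) → ℂ, (∀ i, AnalyticAt ℂ (b i) 0) ∧ (∃ i, b i 0 ≠ 0) ∧
      ∀ i, ∀ᶠ v in 𝓝 (0 : Fin n → ℂ), A i (fun j => v j ^ N) = monomialFun γ v ^ w i * b i v := by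
  choose! α ε hε hε0 hAε using fun i (hi : IsMonomial (A i)) => id hi
  obtain ⟨m, hm, hmin⟩ := (Set.toFinite {i | IsMonomial (A i)}).exists_minimalFor
    (fun i => k i • α i) _ hex
  have hle : ∀ i, IsMonomial (A i) → k m • α m ≤ k i • α i := fun i hi => by
    refine (le_or_le_of_monomialFun_sub_monomialFun ((hε m hm).fun_pow (k m))
      (pow_ne_zero _ (hε0 m hm)) ((hε i hi).fun_pow (k i)) (pow_ne_zero _ (hε0 i hi))
      (hD m i) ?_).elim id (hmin hi)
    filter_upwards [hAε m hm, hAε i hi] with u hum hui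
    rw [hum, hui, mul_pow, mul_pow, monomialFun_nsmul, monomialFun_nsmul]
  have hαm : α m ≠ 0 := fun h => by
    have := (hAε m hm).self_of_nhds
    rw [h, monomialFun_zero, one_mul, hA0] at this
    exact hε0 m hm this.symm
  have hkm : k m ≠ 0 := fun h => hN (by rw [← hk m, h, mul_zero])
  have hb : ∀ i, ∃ b : (Fin n → ℂ) → ℂ, AnalyticAt ℂ b 0 ∧ (i = m → b 0 ≠ 0) ∧
      ∀ᶠ v in 𝓝 (0 : Fin n → ℂ),
        A i (fun j => v j ^ N) = monomialFun (k m • α m) v ^ w i * b v := by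
    intro i
    rcases hA i with hi | hi
    · have hpow0 : (fun j => (0 : Fin n → ℂ) j ^ N) = 0 := by ext; simp [hN]
      refine ⟨_, (analyticAt_monomialFun _ 0).fun_mul ((hε i hi).fun_comp_of_eq
        (by fun_prop : ContDiff ℂ ω fun (v : Fin n → ℂ) j => v j ^ N).contDiffAt.analyticAt hpow0),
        ?_, eventually_comp_pow_eq_monomialFun_pow_mul (hAε i hi) (hle i hi) hN (hk i)⟩
      rintro rfl
      simpa only [tsub_self, smul_zero, monomialFun_zero, one_mul, hpow0] using hε0 i hi
    · refine ⟨fun _ => 0, analyticAt_const, ?_, ?_⟩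
      · rintro rfl
        exact absurd hi hm.not_eventually_eq_zero
      · simpa using (tendsto_pi_pow_zero hN).eventually hi
  choose b hb hb0 hAb using hb
  exact ⟨_, smul_ne_zero hkm hαm, b, hb, ⟨m, hb0 m rfl⟩, hAb⟩

end Newton

section LocalUniformization

variable {T : Type*} {𝓤 : Ultrafilter T} {n : ℕ}

-- Give `aᵢ` the weight `e + 1 - i`. Uniformizing the `aᵢ` together with the differences of their
-- powers of weight `(e + 1)!` orders these powers by divisibility.
lemma LocalUniformization.uniformizable_mul_weightedForm (hU : LocalUniformization 𝓤 n) {e : ℕ}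
    (IH : ∀ d ≤ e, LocalUniformizationOfOrder 𝓤 n d) {h : (Fin n → ℂ) → ℂ} (hh : AnalyticAt ℂ h 0)
    (hh0 : ¬ ∀ᶠ u in 𝓝 0, h u = 0) {a : Fin e → (Fin n → ℂ) → ℂ}
    (ha : ∀ i, AnalyticAt ℂ (a i) 0) (ha0 : ∀ i, a i 0 = 0) {c : (Fin n → ℂ) × ℂ → ℂ}
    (hc : AnalyticAt ℂ c 0) (hc0 : c 0 ≠ 0) {z : T → (Fin n → ℂ) × ℂ} (hz : Tendsto z 𝓤 (𝓝 0)) :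
    Uniformizable 𝓤 (n + 1) z
      (fun q => h q.1 * weightedForm e (fun i => a i q.1) (c q) 1 q.2) := by
  have hfst : Tendsto Prod.fst (𝓝 (0 : (Fin n → ℂ) × ℂ)) (𝓝 0) := continuous_fst.tendsto 0
  by_cases hazero : ∀ i, ∀ᶠ x in 𝓝 0, a i x = 0
  · refine (hU.uniformizable_mul_snd_pow_mul hh hh0 hc hc0 (e + 1) hz).congr ?_
    filter_upwards [hfst.eventually (eventually_all.2 hazero)] with q hq
    simp [weightedForm, hq]
  obtain ⟨i₁, hi₁⟩ := not_forall.1 hazero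
  have hN := (e + 1).factorial_ne_zero
  let k : Fin e → ℕ := fun i => (e + 1).factorial / (e + 1 - i)
  have hk : ∀ i : Fin e, (e + 1 - (i : ℕ)) * k i = (e + 1).factorial := fun i =>
    Nat.mul_div_cancel' (Nat.dvd_factorial (by omega) (by omega))
  let F : Unit ⊕ Fin e ⊕ Fin e × Fin e → (Fin n → ℂ) → ℂ := Sum.elim (fun _ => h)
    (Sum.elim a fun p x => a p.1 x ^ k p.1 - a p.2 x ^ k p.2)
  obtain ⟨σ, u, hσ, hF⟩ := hU.exists_lifts_forall_isMonomial (F := F) (by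
    rintro (_ | i | p)
    exacts [hh, ha i, ((ha _).fun_pow _).fun_sub ((ha _).fun_pow _)]) (tendsto_fst_zero hz)
  have hF' : ∀ j, IsMonomial (fun v => F j (σ v)) ∨ ∀ᶠ v in 𝓝 0, F j (σ v) = 0 := fun j =>
    or_iff_not_imp_right.2 fun hj => hF j fun hj' => hj (hσ.tendsto_chart.eventually hj')
  obtain ⟨γ, hγ, b, hb, ⟨i₀, hb₀⟩, hab⟩ := exists_common_monomial_factor
    (A := fun i v => a i (σ v)) (fun i => hF' (.inr (.inl i)))
    (fun i => (congrArg (a i) hσ.map_zero).trans (ha0 i)) ⟨i₁, hF (.inr (.inl i₁)) hi₁⟩ hN hk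
    (fun i j => hF' (.inr (.inr (i, j))))
  have hpow := lifts_pow hN hσ.tendsto
  have hρ := (hσ.trans hpow).prodMap_id (tendsto_snd_zero hz)
  refine .of_lifts hρ (Uniformizable.congr
    (g := fun q => h (σ fun j => q.1 j ^ (e + 1).factorial) * weightedForm e (fun i => b i q.1)
      (c (σ fun j => q.1 j ^ (e + 1).factorial, q.2)) (monomialFun γ q.1) q.2) ?_ ?_)
  · have hm : IsMonomial (fun v => h (σ fun j => v j ^ (e + 1).factorial)) :=
      (hF (.inl ()) hh0).comp (fun i => (isMonomial_coord i).pow _) hpow.map_zero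
    have hc' := hc.fun_comp_of_eq hρ.analyticAt hρ.map_zero
    have hc0' := hρ.map_zero.symm ▸ hc0
    by_cases hO : (fun t => (z t).2) =O[(𝓤 : Filter T)] fun t =>
        monomialFun γ fun j => u t j ^ ((e + 1).factorial : ℂ)⁻¹
    · exact uniformizable_weightedForm_of_isBigO IH hm hγ hb hb₀ hc' hc0' hρ.tendsto hO
    · exact uniformizable_weightedForm_of_not_isBigO hm hb hc' hc0' hρ.tendsto hO
  · filter_upwards [hfst.eventually (eventually_all.2 hab)] with q hq
    simp [weightedForm, hq]

lemma LocalUniformization.localUniformizationOfOrder (hU : LocalUniformization 𝓤 n) (d : ℕ) :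
    LocalUniformizationOfOrder 𝓤 n d := by
  induction d using Nat.strong_induction_on with
  | _ d IH =>
    intro h hh hh0 g hg hord z hz
    rcases d with _ | e
    · have hg0 : g 0 ≠ 0 := (hg.fun_comp_of_eq (f := fun y : ℂ => ((0 : Fin n → ℂ), y))
        (analyticAt_const.prod analyticAt_id) rfl).analyticOrderAt_eq_zero.1 hord
      simpa using hU.uniformizable_mul_snd_pow_mul hh hh0 hg hg0 0 hz
    obtain ⟨η, a, c, hη, hη0, ha, ha0, hc, hc0, hform⟩ := exists_tschirnhausen hg hord
    have hηz : Tendsto (fun t => η (z t).1) 𝓤 (𝓝 0) := by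
      simpa only [Function.comp_def, hη0] using
        hη.continuousAt.tendsto.comp (tendsto_fst_zero hz)
    have hshift : Lifts 𝓤 z (fun q : (Fin n → ℂ) × ℂ => (q.1, η q.1 + q.2))
        (fun t => ((z t).1, (z t).2 - η (z t).1)) :=
      ⟨analyticAt_fst.prod ((hη.fun_comp_of_eq analyticAt_fst rfl).fun_add analyticAt_snd),
        by simp [hη0],
        (tendsto_fst_zero hz).prodMk_nhds (by simpa using (tendsto_snd_zero hz).sub hηz),
        .of_forall fun t => by simp⟩
    refine .of_lifts hshift ((hU.uniformizable_mul_weightedForm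
      (fun d hd => IH d (Nat.lt_succ_of_le hd)) hh hh0 (fun i : Fin e => ha i)
      (fun i => ha0 i i.2) hc hc0 hshift.tendsto).congr ?_)
    filter_upwards [hform] with q hq
    rw [hq, weightedForm, Finset.sum_range]
    simp only [one_pow, one_mul]

lemma exists_not_eventually_smul_eq_zero {E : Type*} [NormedAddCommGroup E] [NormedSpace ℂ E]
    {f : E → ℂ} (hf : AnalyticAt ℂ f 0) (hf0 : ¬ ∀ᶠ x in 𝓝 0, f x = 0) :
    ∃ p, ¬ ∀ᶠ s in 𝓝 (0 : ℂ), f (s • p) = 0 := by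
  obtain ⟨r, hr, hball⟩ := Metric.eventually_nhds_iff_ball.1 hf.eventually_analyticAt
  by_contra! hzero
  refine hf0 (Metric.eventually_nhds_iff_ball.2 ⟨r, hr, fun p hp => ?_⟩)
  let ℓ : ℂ →L[ℂ] E := (ContinuousLinearMap.id ℂ ℂ).smulRight p
  have hline : AnalyticOnNhd ℂ (fun s => f (ℓ s)) (ℓ ⁻¹' ball 0 r) := fun s hs =>
    (hball _ hs).fun_comp (ℓ.analyticAt s)
  have hconn : IsPreconnected (ℓ ⁻¹' ball 0 r) :=
    ((convex_ball (0 : E) r).is_linear_preimage (f := ℓ.restrictScalars ℝ)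
      (ℓ.restrictScalars ℝ).toLinearMap.isLinear).isPreconnected
  simpa [ℓ] using hline.eqOn_zero_of_preconnected_of_eventuallyEq_zero hconn
    (show (0 : ℂ) ∈ _ by simpa [ℓ] using hr) (by simpa [ℓ] using! hzero p)
    (show (1 : ℂ) ∈ _ by simpa [ℓ] using hp)

lemma exists_continuousLinearEquiv_apply_zero_one_eq {p : Fin (n + 1) → ℂ} (hp : p ≠ 0) :
    ∃ Λ : ((Fin n → ℂ) × ℂ) ≃L[ℂ] (Fin (n + 1) → ℂ), Λ (0, 1) = p := by
  let Λ₀ : ((Fin n → ℂ) × ℂ) ≃L[ℂ] (Fin (n + 1) → ℂ) := ContinuousLinearEquiv.ofFinrankEq (by simp)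
  obtain ⟨A, hA⟩ := SeparatingDual.exists_continuousLinearEquiv_apply_eq (R := ℂ)
    (x := Λ₀ (0, 1)) (y := p) (by simp) hp
  exact ⟨Λ₀.trans A, hA⟩

theorem localUniformization (𝓤 : Ultrafilter T) (n : ℕ) : LocalUniformization 𝓤 n := by
  induction n with
  | zero =>
    intro f hf hf0 z hz
    refine uniformizable_of_ne_zero hf (fun h => hf0 (.of_forall fun x => ?_)) hz
    rwa [Subsingleton.elim x 0]
  | succ n ih =>
    intro f hf hf0 z hz
    by_cases h0 : f 0 = 0
    swap
    · exact uniformizable_of_ne_zero hf h0 hz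
    obtain ⟨p, hp⟩ := exists_not_eventually_smul_eq_zero hf hf0
    have hp0 : p ≠ 0 := by
      rintro rfl
      exact hp (.of_forall fun s => by rwa [smul_zero])
    obtain ⟨Λ, rfl⟩ := exists_continuousLinearEquiv_apply_zero_one_eq hp0
    have hline : ∀ s : ℂ, Λ (0, s) = s • Λ (0, 1) := fun s => by rw [← Λ.map_smul]; simp
    obtain ⟨d, hd⟩ := ENat.ne_top_iff_exists.1 (mt analyticOrderAt_eq_top.1
      fun h => hp (h.mono fun s hs => by rwa [← hline]))
    have hΛ : Lifts 𝓤 z Λ (fun t => Λ.symm (z t)) :=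
      ⟨Λ.analyticAt 0, Λ.map_zero, (Λ.symm.continuous.tendsto' 0 0 Λ.symm.map_zero).comp hz,
        .of_forall fun t => Λ.apply_symm_apply _⟩
    refine .of_lifts hΛ ((ih.localUniformizationOfOrder d (fun _ => 1) analyticAt_const
      (fun h => one_ne_zero h.self_of_nhds)
      (fun q => f (Λ q)) (hf.fun_comp_of_eq hΛ.analyticAt hΛ.map_zero) hd.symm _ hΛ.tendsto).congr
      (.of_forall fun q => (one_mul _).symm))

end LocalUniformization

section Ultrafilter

variable {T F G : Type*} [NormedAddCommGroup F] [NormedAddCommGroup G] {f : T → F} {g : T → G}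
  {l : Filter T}

lemma isLittleO_of_forall_ultrafilter
    (h : ∀ 𝓤 : Ultrafilter T, ↑𝓤 ≤ l → f =o[(𝓤 : Filter T)] g) : f =o[l] g :=
  Asymptotics.isLittleO_iff.2 fun _ hc =>
    mem_iff_ultrafilter.2 fun 𝓤 h𝓤 => Asymptotics.isLittleO_iff.1 (h 𝓤 h𝓤) hc

lemma isBigO_of_forall_ultrafilter
    (h : ∀ 𝓤 : Ultrafilter T, ↑𝓤 ≤ l → f =O[(𝓤 : Filter T)] g) : f =O[l] g := by
  by_contra hfg
  let s : ℕ → Set T := fun k => {t | (k : ℝ) * ‖g t‖ < ‖f t‖}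
  have hanti : Antitone s := fun i j hij t ht =>
    (mul_le_mul_of_nonneg_right (Nat.cast_le.2 hij) (norm_nonneg _)).trans_lt ht
  have hs : ∀ k, NeBot (l ⊓ 𝓟 (s k)) := fun k => frequently_iff_neBot.1 fun hk =>
    hfg (.of_bound k (hk.mono fun t ht => not_lt.1 ht))
  have hne : NeBot (⨅ k, l ⊓ 𝓟 (s k)) := iInf_neBot_of_directed'
    (directed_of_isDirected_le fun i j hij => inf_le_inf_left l (principal_mono.2 (hanti hij))) hs
  have hle : ∀ k, ↑(Ultrafilter.of (⨅ k, l ⊓ 𝓟 (s k))) ≤ l ⊓ 𝓟 (s k) := fun k =>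
    (Ultrafilter.of_le _).trans (iInf_le _ k)
  obtain ⟨C, hC⟩ := (h _ ((hle 0).trans inf_le_left)).bound
  obtain ⟨k, hk⟩ := exists_nat_ge C
  obtain ⟨t, ht, htk⟩ := (hC.and (le_principal_iff.1 ((hle k).trans inf_le_right))).exists
  exact absurd (ht.trans (by gcongr)) (not_le.2 htk)

end Ultrafilter

section EulerField

variable {X Y F : Type*} [NormedAddCommGroup X] [NormedSpace ℂ X] [NormedAddCommGroup Y]
  [NormedSpace ℂ Y] [NormedAddCommGroup F] [NormedSpace ℂ F]

lemma tendsto_fderiv_apply_self [CompleteSpace F] {σ : X → F} (h : AnalyticAt ℂ σ 0) :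
    Tendsto (fun v => fderiv ℂ σ v v) (𝓝 0) (𝓝 0) := by
  simpa [ContinuousAt] using h.fderiv.continuousAt.clm_apply continuousAt_id

lemma fderiv_monomialFun_apply_self {ι : Type*} [Fintype ι] (α : ι → ℕ) (u : ι → ℂ) :
    fderiv ℂ (monomialFun α) u u = (∑ i, α i : ℕ) * monomialFun α u := by
  have hline :
      HasDerivAt (fun t : ℂ => monomialFun α (t • u)) (fderiv ℂ (monomialFun α) u u) 1 := by
    have := ((contDiff_monomialFun α).differentiable (by simp)
      ((1 : ℂ) • u)).hasFDerivAt.comp_hasDerivAt (1 : ℂ) ((hasDerivAt_id (1 : ℂ)).smul_const u)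
    simpa [Function.comp_def] using! this
  have hpow : (fun t : ℂ => monomialFun α (t • u)) = fun t => t ^ (∑ i, α i) * monomialFun α u := by
    funext t
    simp [monomialFun, mul_pow, Finset.prod_mul_distrib, Finset.prod_pow_eq_pow_sum]
  rw [hpow] at hline
  simpa using hline.unique ((hasDerivAt_pow (∑ i, α i) (1 : ℂ)).mul_const (monomialFun α u))

lemma isLittleO_fderiv_smul_apply_self [CompleteSpace F] {S : X → ℂ} {W : X → F} {b : ℂ}
    (hS : AnalyticAt ℂ S 0) (hW : AnalyticAt ℂ W 0)
    (h : (fun v => fderiv ℂ S v v - b * S v) =o[𝓝 0] S) :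
    (fun v => fderiv ℂ (fun v => S v • W v) v v - b • S v • W v) =o[𝓝 0] S := by
  have hSW : (fun v => S v • fderiv ℂ W v v) =o[𝓝 0] S := by
    simpa using (Asymptotics.isBigO_refl S (𝓝 0)).smul_isLittleO
      ((Asymptotics.isLittleO_one_iff ℂ).2 (tendsto_fderiv_apply_self hW))
  have hWS : (fun v => (fderiv ℂ S v v - b * S v) • W v) =o[𝓝 0] S := by
    simpa using h.smul_isBigO (hW.continuousAt.tendsto.isBigO_one ℂ)
  refine (hSW.add hWS).congr' ?_ .rfl
  filter_upwards [hS.eventually_analyticAt, hW.eventually_analyticAt] with v hSv hWv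
  rw [fderiv_fun_smul hSv.differentiableAt hWv.differentiableAt]
  simp only [add_apply, smul_apply, ContinuousLinearMap.smulRight_apply]
  module

lemma IsMonomial.exists_fderiv_apply_self_sub_isLittleO {ι : Type*} [Fintype ι] {g : (ι → ℂ) → ℂ}
    (hg : IsMonomial g) (h0 : g 0 = 0) :
    ∃ A : ℕ, A ≠ 0 ∧ (fun u => fderiv ℂ g u u - A * g u) =o[𝓝 0] g := by
  obtain ⟨α, ε, hε, hε0, hgε⟩ := hg
  refine ⟨∑ i, α i, fun hα => hε0 ?_, ?_⟩
  · have := hgε.self_of_nhds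
    rwa [h0, show α = 0 by ext i; simpa using Finset.sum_eq_zero_iff.1 hα i (Finset.mem_univ i),
      monomialFun_zero, one_mul, eq_comm] at this
  have hmono : monomialFun α =O[𝓝 0] g := by
    refine ((Asymptotics.isBigO_refl g (𝓝 0)).mul
      ((hε.continuousAt.tendsto.inv₀ hε0).isBigO_one ℂ)).congr' ?_ (.of_forall fun u => mul_one _)
    filter_upwards [hgε, hε.continuousAt.eventually_ne hε0] with u hu hεu
    rw [hu, mul_inv_cancel_right₀ hεu]
  refine ((isLittleO_fderiv_smul_apply_self (analyticAt_monomialFun α 0) hε (b := (∑ i, α i : ℕ))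
    ?_).trans_isBigO hmono).congr' ?_ .rfl
  · simp only [fderiv_monomialFun_apply_self, sub_self]
    exact Asymptotics.isLittleO_zero _ _
  · filter_upwards [hgε.eventually_nhds] with u hu
    rw [EventuallyEq.fderiv_eq hu, hu.self_of_nhds]
    rfl

variable {𝓤 : Ultrafilter X} {σ : Y → X} {u : X → Y}

lemma Lifts.isLittleO_fderiv_apply_sub [CompleteSpace X] (h : Lifts 𝓤 (fun x => x) σ u) {f : X → ℂ}
    (hf : AnalyticAt ℂ f 0) {a : ℂ}
    (ha : (fun v => fderiv ℂ (fun v => f (σ v)) v v - a * f (σ v)) =o[𝓝 0] fun v => f (σ v)) :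
    (fun x => fderiv ℂ f x (fderiv ℂ σ (u x) (u x)) - a * f x) =o[(𝓤 : Filter X)] f := by
  refine (ha.comp_tendsto h.tendsto).congr' ?_ ?_
  · filter_upwards [h.eventually_eq, h.tendsto.eventually h.analyticAt.eventually_analyticAt,
      h.tendsto.eventually (h.tendsto_chart.eventually hf.eventually_analyticAt)] with x hx hσ hfσ
    simp only [Function.comp_apply]
    rw [fderiv_fun_comp _ hfσ.differentiableAt hσ.differentiableAt, hx]
    rfl
  · filter_upwards [h.eventually_eq] with x hx using congrArg f hx

end EulerField

section FiniteDimensional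

variable {X : Type*} [NormedAddCommGroup X] [NormedSpace ℂ X] [FiniteDimensional ℂ X]

theorem uniformizable_finrank {T : Type*} {𝓤 : Ultrafilter T} {f : X → ℂ} (hf : AnalyticAt ℂ f 0)
    (hne : ¬ ∀ᶠ x in 𝓝 0, f x = 0) {z : T → X} (hz : Tendsto z 𝓤 (𝓝 0)) :
    Uniformizable 𝓤 (Module.finrank ℂ X) z f := by
  let Λ : X ≃L[ℂ] (Fin (Module.finrank ℂ X) → ℂ) := .ofFinrankEq (by simp)
  have hΛ : Lifts 𝓤 z Λ.symm (fun t => Λ (z t)) :=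
    ⟨Λ.symm.toContinuousLinearMap.analyticAt 0, map_zero _,
      (Λ.continuous.tendsto' 0 0 (map_zero _)).comp hz, .of_forall fun t => Λ.symm_apply_apply _⟩
  refine .of_lifts hΛ (localUniformization 𝓤 _ _ ?_ (fun h => hne ?_) _ hΛ.tendsto)
  · exact hf.fun_comp_of_eq hΛ.analyticAt (map_zero _)
  · simpa using (Λ.continuous.tendsto' 0 0 (map_zero _)).eventually h

lemma isLittleO_clm_apply {T 𝕜 E F : Type*} [NontriviallyNormedField 𝕜] [NormedAddCommGroup E]
    [NormedSpace 𝕜 E] [NormedAddCommGroup F] [NormedSpace 𝕜 F] {l : Filter T} (L : T → E →L[𝕜] F)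
    {w : T → E} (hw : Tendsto w l (𝓝 0)) : (fun t => L t (w t)) =o[l] L := by
  have h := (Asymptotics.isBigO_refl (fun t => ‖L t‖) l).mul_isLittleO
    ((Asymptotics.isLittleO_one_iff ℝ).2 (tendsto_zero_iff_norm_tendsto_zero.1 hw))
  simp only [mul_one] at h
  exact (Asymptotics.IsBigO.of_norm_le fun t => (L t).le_opNorm (w t)).trans_isLittleO
    h.of_norm_right

lemma isLittleO_fderiv_zero {f : X → ℂ} (hf : AnalyticAt ℂ f 0) (h0 : f 0 = 0) :
    f =o[𝓝 0] fderiv ℂ f := by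
  by_cases hne : ∀ᶠ x in 𝓝 0, f x = 0
  · exact (Asymptotics.isLittleO_zero _ _).congr' (hne.mono fun x hx => hx.symm) .rfl
  refine isLittleO_of_forall_ultrafilter fun 𝓤 h𝓤 => ?_
  have : CompleteSpace X := FiniteDimensional.complete ℂ X
  obtain ⟨σ, u, hσ, hmon⟩ := uniformizable_finrank hf hne (z := fun x => x) h𝓤
  obtain ⟨A, hA, hE⟩ := hmon.exists_fderiv_apply_self_sub_isLittleO (by rw [hσ.map_zero, h0])
  have hD := hσ.isLittleO_fderiv_apply_sub hf hE
  have hf_le : f =O[(𝓤 : Filter X)] fun x => fderiv ℂ f x (fderiv ℂ σ (u x) (u x)) := by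
    have hAne : (A : ℂ) ≠ 0 := Nat.cast_ne_zero.2 hA
    have := ((Asymptotics.isLittleO_const_mul_right_iff hAne).2 hD).right_isBigO_add
    simpa [Asymptotics.isBigO_const_mul_left_iff hAne] using this
  have hw := (tendsto_fderiv_apply_self hσ.analyticAt).comp hσ.tendsto
  exact hf_le.trans_isLittleO (isLittleO_clm_apply _ hw)

theorem isLittleO_fderiv {f : X → ℂ} {p : X} (hf : AnalyticAt ℂ f p) (h0 : f p = 0) :
    f =o[𝓝 p] fderiv ℂ f := by
  have hp : (fun x => f (p + x)) =o[𝓝 0] fderiv ℂ (fun x => f (p + x)) :=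
    isLittleO_fderiv_zero (hf.fun_comp_of_eq (analyticAt_const.add analyticAt_id) (by simp))
      (by simpa using h0)
  have hsub : Tendsto (fun x => x - p) (𝓝 p) (𝓝 0) := tendsto_sub_nhds_zero_iff.2 tendsto_id
  refine (hp.comp_tendsto hsub).congr (fun x => ?_) fun x => ?_
  · simp
  · simp [fderiv_comp_add_left]

lemma exists_lifts_blowUp {𝓤 : Ultrafilter X} (h𝓤 : ↑𝓤 ≤ 𝓝 (0 : X))
    (hne : ∀ᶠ z in (𝓤 : Filter X), z ≠ 0) :
    ∃ d : X, Lifts 𝓤 (fun z => z) (fun q : X × ℂ => q.2 • (d + q.1))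
      (fun z => ((‖z‖ : ℂ)⁻¹ • z - d, (‖z‖ : ℂ))) := by
  have : ProperSpace X := FiniteDimensional.proper ℂ X
  have hsphere : ∀ᶠ z in (𝓤 : Filter X), (‖z‖ : ℂ)⁻¹ • z ∈ sphere (0 : X) 1 := by
    filter_upwards [hne] with z hz
    simp [norm_smul, hz]
  obtain ⟨d, -, hd⟩ := (isCompact_sphere (0 : X) 1).ultrafilter_le_nhds
    (𝓤.map fun z => (‖z‖ : ℂ)⁻¹ • z) (le_principal_iff.2 hsphere)
  refine ⟨d, (by fun_prop : ContDiff ℂ ω _).contDiffAt.analyticAt, by simp, ?_, ?_⟩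
  · refine (tendsto_sub_nhds_zero_iff.2 hd).prodMk_nhds ?_
    exact ((by fun_prop : Continuous fun z : X => (‖z‖ : ℂ)).tendsto' 0 0 (by simp)).mono_left h𝓤
  · filter_upwards [hne] with z hz
    simp [hz]

-- On the blow-up of the origin, make both `f` and the exceptional divisor monomial; the Euler
-- vector field of the resulting chart then pushes forward to `w`.
theorem exists_radial_vectors {𝓤 : Ultrafilter X} (h𝓤 : ↑𝓤 ≤ 𝓝 (0 : X)) {f : X → ℂ}
    (hf : AnalyticAt ℂ f 0) (h0 : f 0 = 0) (hne : ∀ᶠ z in (𝓤 : Filter X), f z ≠ 0) :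
    ∃ (w : X → X) (A B : ℕ), A ≠ 0 ∧ B ≠ 0 ∧
      (fun z => w z - (B : ℂ) • z) =o[(𝓤 : Filter X)] (fun z => z) ∧
      (fun z => fderiv ℂ f z (w z) - A * f z) =o[(𝓤 : Filter X)] f := by
  have : CompleteSpace X := FiniteDimensional.complete ℂ X
  have hz : ∀ᶠ z in (𝓤 : Filter X), z ≠ 0 := hne.mono fun z hz hz0 => hz (hz0 ▸ h0)
  obtain ⟨d, hτ⟩ := exists_lifts_blowUp h𝓤 hz
  have hfτ := hf.fun_comp_of_eq hτ.analyticAt hτ.map_zero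
  have hne_mul : ¬ ∀ᶠ q : X × ℂ in 𝓝 0, q.2 * f (q.2 • (d + q.1)) = 0 := fun h => by
    obtain ⟨z, hz, hfz, hτz, hg⟩ :=
      (hz.and (hne.and (hτ.eventually_eq.and (hτ.tendsto.eventually h)))).exists
    rw [hτz] at hg
    exact mul_ne_zero (by simpa using hz) hfz hg
  obtain ⟨σ, u, hσ, hmon⟩ :=
    uniformizable_finrank (analyticAt_snd.fun_mul hfτ) hne_mul hτ.tendsto
  have hτσ := hτ.trans hσ
  have hS : AnalyticAt ℂ (fun v => (σ v).2) 0 := analyticAt_snd.fun_comp hσ.analyticAt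
  have hfτσ := hf.fun_comp_of_eq hτσ.analyticAt hτσ.map_zero
  obtain ⟨B, hB, hSB⟩ := (IsMonomial.of_mul hS hfτσ hmon).exists_fderiv_apply_self_sub_isLittleO
    (by rw [hσ.map_zero]; rfl)
  obtain ⟨A, hA, hfA⟩ := (IsMonomial.of_mul hfτσ hS (by simpa only [mul_comm] using
    hmon)).exists_fderiv_apply_self_sub_isLittleO (by rw [hτσ.map_zero, h0])
  refine ⟨_, A, B, hA, hB, ?_, hτσ.isLittleO_fderiv_apply_sub hf hfA⟩
  have hW : AnalyticAt ℂ (fun v => d + (σ v).1) 0 :=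
    analyticAt_const.fun_add (analyticAt_fst.fun_comp hσ.analyticAt)
  refine (((isLittleO_fderiv_smul_apply_self hS hW hSB).comp_tendsto hσ.tendsto).congr' ?_
    (g₂ := fun z => (‖z‖ : ℂ)) ?_).trans_isBigO (.of_bound 1 (.of_forall fun z => by simp))
  · filter_upwards [hτσ.eventually_eq] with z hz
    simp only [Function.comp_apply, hz]
  · filter_upwards [hσ.eventually_eq] with z hz
    simp only [Function.comp_apply, hz]

end FiniteDimensional

section IsMilnorField

variable {E : Type*} [NormedAddCommGroup E] [InnerProductSpace ℂ E] {f : E → ℂ}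
  {D : Set E} {s K : ℝ} {v : E → E}

/-- A tangential lift through `f` of the rotation of `ℂ` with angular speed `s`: a vector field `v`
on `D`, tangent to the spheres around the origin, along which the argument of `f` increases with
speed `s` and `log |f|` changes with speed at most `K`. The field is zero where `f` vanishes. -/
structure IsMilnorField (f : E → ℂ) (D : Set E) (s K : ℝ) (v : E → E) : Prop where
  isOpen : IsOpen D
  analyticOnNhd : AnalyticOnNhd ℂ f D
  continuousOn : ContinuousOn v D
  contDiffAt : ∀ z ∈ D, f z ≠ 0 → ContDiffAt ℝ 1 v z
  eq_zero : ∀ z ∈ D, f z = 0 → v z = 0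
  re_inner_eq_zero : ∀ z ∈ D, (inner ℂ z (v z)).re = 0
  exists_fderiv_eq : ∀ z ∈ D, ∃ ρ : ℝ, |ρ| ≤ K ∧ fderiv ℂ f z (v z) = f z * (s * Complex.I + ρ)

lemma IsMilnorField.smul (h : IsMilnorField f D s K v) (c : ℝ) :
    IsMilnorField f D (c * s) (|c| * K) (c • v) where
  isOpen := h.isOpen
  analyticOnNhd := h.analyticOnNhd
  continuousOn := h.continuousOn.const_smul c
  contDiffAt z hz h0 := (h.contDiffAt z hz h0).const_smul c
  eq_zero z hz h0 := by simp [h.eq_zero z hz h0]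
  re_inner_eq_zero z hz := by
    rw [Pi.smul_apply, ← Complex.coe_smul, inner_smul_right, Complex.re_ofReal_mul,
      h.re_inner_eq_zero z hz, mul_zero]
  exists_fderiv_eq z hz := by
    obtain ⟨ρ, hρ, hv⟩ := h.exists_fderiv_eq z hz
    refine ⟨c * ρ, ?_, ?_⟩
    · rw [abs_mul]
      gcongr
    · rw [Pi.smul_apply, ← Complex.coe_smul, map_smul, hv]
      simp only [smul_eq_mul]
      push_cast
      ring

end IsMilnorField

section MilnorField

variable {E : Type*} [NormedAddCommGroup E] [InnerProductSpace ℂ E]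

lemma isBigO_inner {T : Type*} {l : Filter T} (u v : T → E) :
    (fun t => inner ℂ (u t) (v t)) =O[l] fun t => ‖u t‖ * ‖v t‖ :=
  .of_norm_le fun t => norm_inner_le_norm (u t) (v t)

-- The hypotheses on `G` and `w` make `-i⟨h, w⟩` asymptotic to the real function `μ B ‖z‖²`.
lemma eq_zero_of_tendsto_inner {T : Type*} {l : Filter T} [NeBot l] {h G w z : T → E} {μ : T → ℝ}
    {a B : ℝ} (hB : B ≠ 0) (hh : ∀ t, Complex.I • h t = G t + (μ t : ℂ) • z t) (hG : G =o[l] h)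
    (hw : (fun t => w t - (B : ℂ) • z t) =o[l] z)
    (ha : Tendsto (fun t => inner ℂ (h t) (w t)) l (𝓝 (a : ℂ))) : a = 0 := by
  set c : T → ℂ := fun t => (μ t * B * ‖z t‖ ^ 2 : ℝ) with hc
  have hcO : (fun t => ‖(μ t : ℂ) • z t‖ * ‖z t‖) =O[l] c := by
    refine .of_bound ‖B‖⁻¹ (.of_forall fun t => le_of_eq ?_)
    have := norm_ne_zero_iff.2 hB
    simp only [hc, norm_mul, norm_smul, Complex.norm_real, norm_norm, norm_pow]
    field_simp
  have hGz : G =o[l] fun t => (μ t : ℂ) • z t := by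
    have hGh := (Asymptotics.isLittleO_const_smul_right Complex.I_ne_zero).2 hG
    simpa [hh] using hGh.trans_isBigO hGh.right_isBigO_sub
  have hwz : w =O[l] z := by
    simpa using hw.isBigO.add ((Asymptotics.isBigO_refl z l).const_smul_left (B : ℂ))
  have hGw := ((isBigO_inner G w).trans_isLittleO
    (hGz.norm_norm.mul_isBigO hwz.norm_norm)).trans_isBigO hcO
  have hzw := ((isBigO_inner (fun t => (μ t : ℂ) • z t) _).trans_isLittleO
    ((Asymptotics.isBigO_refl _ l).mul_isLittleO hw.norm_norm)).trans_isBigO hcO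
  have hequiv : Asymptotics.IsEquivalent l (fun t => -Complex.I * inner ℂ (h t) (w t)) c := by
    refine (hGw.add hzw).congr_left fun t => ?_
    have hinner : -Complex.I * inner ℂ (h t) (w t) = inner ℂ (G t + (μ t : ℂ) • z t) (w t) := by
      rw [← hh, inner_smul_left, Complex.conj_I]
    simp only [Pi.sub_apply, hinner, hc, inner_add_left, inner_sub_right, inner_smul_left,
      inner_smul_right, inner_self_eq_norm_sq_to_K, Complex.conj_ofReal]
    push_cast
    ring_nf
    rfl
  have hc_lim := hequiv.tendsto_nhds (ha.const_mul (-Complex.I))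
  have hc_im : ∀ t, (c t).im = 0 := fun t => Complex.ofReal_im _
  simpa [Function.comp_def, hc_im, tendsto_const_nhds_iff, eq_comm] using
    (Complex.continuous_im.tendsto _).comp hc_lim

variable [FiniteDimensional ℂ E]

/-- The complex gradient of `f` divided by the conjugate of `f`, so that `⟨logGrad f z, w⟩` is the
logarithmic derivative of `f` at `z` along `w`; it is zero where `f` vanishes. -/
noncomputable def logGrad (f : E → ℂ) (z : E) : E :=
  (starRingEnd ℂ (f z))⁻¹ • (InnerProductSpace.toDual ℂ E).symm (fderiv ℂ f z)

/-- The component of `i · logGrad f z` that is real-orthogonal to `z`. -/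
noncomputable def sphereGrad (f : E → ℂ) (z : E) : E :=
  Complex.I • logGrad f z -
    (((inner ℂ (Complex.I • logGrad f z) z).re / ‖z‖ ^ 2 : ℝ) : ℂ) • z

/-- The Milnor vector field: it is tangent to the spheres around the origin, and the argument of `f`
increases with speed one along it. It is zero where `f` vanishes. -/
noncomputable def milnorField (f : E → ℂ) (z : E) : E :=
  (((‖sphereGrad f z‖ ^ 2)⁻¹ : ℝ) : ℂ) • sphereGrad f z

variable {f : E → ℂ} {z : E}

lemma inner_logGrad (f : E → ℂ) (z w : E) :
    inner ℂ (logGrad f z) w = (f z)⁻¹ * fderiv ℂ f z w := by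
  rw [logGrad, inner_smul_left, InnerProductSpace.toDual_symm_apply]
  simp

lemma norm_logGrad (f : E → ℂ) (z : E) : ‖logGrad f z‖ = ‖f z‖⁻¹ * ‖fderiv ℂ f z‖ := by
  rw [logGrad, norm_smul, LinearIsometryEquiv.norm_map]
  simp

lemma sphereGrad_eq_zero (h : logGrad f z = 0) : sphereGrad f z = 0 := by
  simp [sphereGrad, h]

lemma norm_milnorField (f : E → ℂ) (z : E) : ‖milnorField f z‖ = ‖sphereGrad f z‖⁻¹ := by
  rcases eq_or_ne ‖sphereGrad f z‖ 0 with h | h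
  · simp [milnorField, h]
  · rw [milnorField, norm_smul, Complex.norm_real, norm_inv, norm_pow, norm_norm]
    field_simp

lemma re_inner_sphereGrad (hz : z ≠ 0) : (inner ℂ z (sphereGrad f z)).re = 0 := by
  have hn : ‖z‖ ≠ 0 := norm_ne_zero_iff.2 hz
  have hself : inner ℂ z z = ((‖z‖ ^ 2 : ℝ) : ℂ) := by simp [inner_self_eq_norm_sq_to_K]
  rw [sphereGrad, inner_sub_right, inner_smul_right z z, hself, ← Complex.ofReal_mul,
    div_mul_cancel₀ _ (pow_ne_zero 2 hn), Complex.sub_re, Complex.ofReal_re,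
    ← inner_conj_symm (𝕜 := ℂ) z, Complex.conj_re, sub_self]

lemma im_inner_sphereGrad (hz : z ≠ 0) :
    (inner ℂ (logGrad f z) (sphereGrad f z)).im = ‖sphereGrad f z‖ ^ 2 := by
  set μ : ℝ := (inner ℂ (Complex.I • logGrad f z) z).re / ‖z‖ ^ 2 with hμ
  have hdecomp : Complex.I • logGrad f z = sphereGrad f z + (μ : ℂ) • z := by
    rw [sphereGrad, ← hμ]; abel
  have hre := congrArg (fun u => (inner ℂ u (sphereGrad f z)).re) hdecomp
  simp only [inner_add_left, inner_smul_left, Complex.conj_ofReal, Complex.add_re,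
    Complex.re_ofReal_mul, re_inner_sphereGrad hz, mul_zero, add_zero] at hre
  rw [inner_self_eq_norm_sq_to_K] at hre
  simpa [← Complex.ofReal_pow] using hre

lemma contDiffAt_logGrad (hf : AnalyticAt ℂ f z) (h0 : f z ≠ 0) : ContDiffAt ℝ 1 (logGrad f) z := by
  have : CompleteSpace E := FiniteDimensional.complete ℂ E
  let L : (E →L[ℂ] ℂ) →L[ℝ] E := AddMonoidHom.toRealLinearMap
    (InnerProductSpace.toDual ℂ E).symm.toLinearEquiv.toAddEquiv.toAddMonoidHom
    (InnerProductSpace.toDual ℂ E).symm.continuous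
  have hgrad : ContDiffAt ℝ 1 (fun x => L (fderiv ℂ f x)) z :=
    L.contDiff.contDiffAt.comp z (hf.fderiv.contDiffAt.restrict_scalars ℝ)
  have hconj : ContDiffAt ℝ 1 (fun x => starRingEnd ℂ (f x)) z :=
    Complex.conjCLE.contDiff.contDiffAt.comp z (hf.contDiffAt.restrict_scalars ℝ)
  exact (hconj.inv (by simpa using h0)).smul hgrad

lemma contDiffAt_sphereGrad (hf : AnalyticAt ℂ f z) (h0 : f z ≠ 0) (hz : z ≠ 0) :
    ContDiffAt ℝ 1 (sphereGrad f) z := by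
  have hI : ContDiffAt ℝ 1 (fun x => Complex.I • logGrad f x) z :=
    (contDiffAt_logGrad hf h0).const_smul _
  have hre : ContDiffAt ℝ 1 (fun x => (inner ℂ (Complex.I • logGrad f x) x).re) z :=
    Complex.reCLM.contDiff.contDiffAt.comp z (hI.inner ℂ contDiffAt_id)
  have hdiv := hre.div (contDiff_norm_sq ℂ).contDiffAt (pow_ne_zero 2 (norm_ne_zero_iff.2 hz))
  exact hI.sub ((Complex.ofRealCLM.contDiff.contDiffAt.comp z hdiv).smul contDiffAt_id)

lemma contDiffAt_milnorField (hf : AnalyticAt ℂ f z) (h0 : f z ≠ 0) (hz : z ≠ 0)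
    (hG : sphereGrad f z ≠ 0) : ContDiffAt ℝ 1 (milnorField f) z := by
  have h := contDiffAt_sphereGrad hf h0 hz
  have hinv := (h.norm_sq ℂ).inv (pow_ne_zero 2 (norm_ne_zero_iff.2 hG))
  exact (Complex.ofRealCLM.contDiff.contDiffAt.comp z hinv).smul h

theorem isBigO_logGrad_sphereGrad (hf : AnalyticAt ℂ f 0) (h0 : f 0 = 0) :
    logGrad f =O[𝓝 0] sphereGrad f := by
  refine isBigO_of_forall_ultrafilter fun 𝓤 h𝓤 => ?_
  by_contra hO
  rw [← Asymptotics.isBigO_norm_norm] at hO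
  have hne : ∀ᶠ z in (𝓤 : Filter E), f z ≠ 0 := by
    filter_upwards [eventually_ne_zero_of_not_isBigO hO] with z hz hfz
    simp [logGrad, hfz] at hz
  obtain ⟨w, A, B, hA, hB, hw, hfw⟩ := exists_radial_vectors h𝓤 hf h0 hne
  have hlim : Tendsto (fun z => inner ℂ (logGrad f z) (w z)) 𝓤 (𝓝 ((A : ℝ) : ℂ)) := by
    refine tendsto_sub_nhds_zero_iff.1 (hfw.tendsto_div_nhds_zero.congr' ?_)
    filter_upwards [hne] with z hz
    rw [inner_logGrad, sub_div, mul_div_cancel_right₀ _ hz, div_eq_inv_mul, Complex.ofReal_natCast]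
  exact hA (Nat.cast_eq_zero.1 (eq_zero_of_tendsto_inner (B := B) (Nat.cast_ne_zero.2 hB)
    (fun z => (sub_add_cancel _ _).symm) (isLittleO_of_not_isBigO hO).of_norm_norm
    (by exact_mod_cast hw) hlim))

lemma tendsto_milnorField (hf : AnalyticAt ℂ f z) (h0 : f z = 0) {K : ℝ}
    (hK : ∀ᶠ x in 𝓝 z, ‖logGrad f x‖ ≤ K * ‖sphereGrad f x‖) :
    Tendsto (milnorField f) (𝓝 z) (𝓝 0) := by
  have hlim : Tendsto (fun x => K * ‖logGrad f x‖⁻¹) (𝓝 z) (𝓝 0) := by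
    simpa [norm_logGrad, div_eq_mul_inv, mul_comm] using
      (isLittleO_fderiv hf h0).norm_norm.tendsto_div_nhds_zero.const_mul K
  refine squeeze_zero_norm' (hK.mono fun x hx => ?_) hlim
  rw [norm_milnorField]
  rcases eq_or_ne (logGrad f x) 0 with h | h
  · simp [h, sphereGrad_eq_zero h]
  · have hh : 0 < ‖logGrad f x‖ := norm_pos_iff.2 h
    have hG : 0 < ‖sphereGrad f x‖ := (norm_nonneg _).lt_of_ne fun h => by
      rw [← h, mul_zero] at hx
      exact hh.not_ge hx
    rwa [← div_eq_mul_inv, inv_eq_one_div, div_le_div_iff₀ hG hh, one_mul]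

lemma fderiv_milnorField (hz : z ≠ 0) (h0 : f z ≠ 0) (hG : sphereGrad f z ≠ 0) {K : ℝ}
    (hK : ‖logGrad f z‖ ≤ K * ‖sphereGrad f z‖) :
    ∃ ρ : ℝ, |ρ| ≤ K ∧ fderiv ℂ f z (milnorField f z) = f z * (Complex.I + ρ) := by
  have hn : 0 < ‖sphereGrad f z‖ := norm_pos_iff.2 hG
  set q := inner ℂ (logGrad f z) (sphereGrad f z) with hq
  refine ⟨q.re / ‖sphereGrad f z‖ ^ 2, ?_, ?_⟩
  · rw [abs_div, abs_pow, abs_norm, div_le_iff₀ (by positivity)]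
    calc |q.re| ≤ ‖logGrad f z‖ * ‖sphereGrad f z‖ :=
          (Complex.abs_re_le_norm q).trans (norm_inner_le_norm _ _)
      _ ≤ K * ‖sphereGrad f z‖ * ‖sphereGrad f z‖ := by gcongr
      _ = K * ‖sphereGrad f z‖ ^ 2 := by ring
  · have hqdef : q = q.re + ‖sphereGrad f z‖ ^ 2 * Complex.I := by
      rw [← Complex.ofReal_pow, ← im_inner_sphereGrad hz, Complex.re_add_im]
    have hdf : fderiv ℂ f z (sphereGrad f z) = f z * q := by
      rw [hq, inner_logGrad, mul_inv_cancel_left₀ h0]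
    have hn' : (‖sphereGrad f z‖ : ℂ) ≠ 0 := Complex.ofReal_ne_zero.2 hn.ne'
    rw [milnorField, map_smul, hdf, smul_eq_mul]
    nth_rw 1 [hqdef]
    push_cast
    field_simp
    ring

theorem exists_isMilnorField (hf : AnalyticAt ℂ f 0) (h0 : f 0 = 0) :
    ∃ r > 0, ∃ K : ℝ, IsMilnorField f (ball 0 r \ {0}) 1 K (milnorField f) := by
  have : CompleteSpace E := FiniteDimensional.complete ℂ E
  obtain ⟨K, hK⟩ := (isBigO_logGrad_sphereGrad hf h0).bound
  have hdom := (isLittleO_fderiv hf h0).bound one_pos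
  obtain ⟨r, hr, H⟩ := Metric.eventually_nhds_iff_ball.1
    (hf.eventually_analyticAt.and (hK.and hdom))
  have hopen : IsOpen (ball (0 : E) r \ {0}) := isOpen_ball.sdiff isClosed_singleton
  have sphereGrad_ne_zero : ∀ z ∈ ball (0 : E) r, f z ≠ 0 → sphereGrad f z ≠ 0 := by
    intro z hz hfz hG
    obtain ⟨-, hKz, hdz⟩ := H z hz
    have hfz' := norm_pos_iff.2 hfz
    rw [hG, norm_zero, mul_zero, norm_logGrad] at hKz
    rw [one_mul] at hdz
    exact hKz.not_gt (mul_pos (inv_pos.2 hfz') (hfz'.trans_le hdz))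
  have milnorField_eq_zero : ∀ z, f z = 0 → milnorField f z = 0 := fun z hz => by
    simp [milnorField, sphereGrad, logGrad, hz]
  have contDiffAt : ∀ z ∈ ball (0 : E) r \ {0}, f z ≠ 0 → ContDiffAt ℝ 1 (milnorField f) z :=
    fun z hz h => contDiffAt_milnorField (H z hz.1).1 h hz.2 (sphereGrad_ne_zero z hz.1 h)
  refine ⟨r, hr, |K|, hopen, fun z hz => (H z hz.1).1, fun z hz => ?_, contDiffAt,
    fun z _ => milnorField_eq_zero z, fun z hz => ?_, fun z hz => ?_⟩
  · by_cases h : f z = 0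
    · refine ContinuousAt.continuousWithinAt ?_
      rw [ContinuousAt, milnorField_eq_zero z h]
      refine tendsto_milnorField (H z hz.1).1 h (K := K) ?_
      filter_upwards [isOpen_ball.mem_nhds hz.1] with x hx using (H x hx).2.1
    · exact (contDiffAt z hz h).continuousAt.continuousWithinAt
  · rw [milnorField, inner_smul_right, Complex.re_ofReal_mul, re_inner_sphereGrad hz.2, mul_zero]
  · by_cases h : f z = 0
    · exact ⟨0, by simp, by simp [milnorField_eq_zero z h, h]⟩
    · have hKz : ‖logGrad f z‖ ≤ |K| * ‖sphereGrad f z‖ := (H z hz.1).2.1.trans (by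
        gcongr
        exact le_abs_self K)
      simpa using fderiv_milnorField hz.2 h (sphereGrad_ne_zero z hz.1 h) hKz

end MilnorField

lemma exists_forall_norm_lt_of_isCompact {X F G : Type*} [TopologicalSpace X] [T2Space X]
    [NormedAddCommGroup F] [NormedAddCommGroup G] {S : Set X} (hS : IsCompact S) {f : X → F}
    {v : X → G} (hf : ContinuousOn f S) (hv : ContinuousOn v S)
    (h0 : ∀ z ∈ S, f z = 0 → v z = 0) {η : ℝ} (hη : 0 < η) :
    ∃ δ > 0, ∀ z ∈ S, ‖f z‖ < δ → ‖v z‖ < η := by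
  have hcompact : IsCompact (S ∩ (fun z => ‖v z‖) ⁻¹' Ici η) := hS.of_isClosed_subset
    (hv.norm.preimage_isClosed_of_isClosed hS.isClosed isClosed_Ici) inter_subset_left
  obtain ⟨δ, hδ, h⟩ := hcompact.exists_forall_le' (hf.norm.mono inter_subset_left) (a := 0)
    fun z hz => norm_pos_iff.2 fun hfz =>
      (hη.trans_le hz.2).ne' (norm_eq_zero.2 (h0 z hz.1 hfz))
  exact ⟨δ, hδ, fun z hz hfz => not_le.1 fun hvz => hfz.not_ge (h z ⟨hz, hvz⟩)⟩

section UnitInterval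

variable {G : Type*} [NormedAddCommGroup G] [NormedSpace ℝ G]

lemma hasDerivWithinAt_Ici_of_Icc {F : ℝ → G} {F' : G} {t : ℝ} (ht : t ∈ Ico (0 : ℝ) 1)
    (hF : HasDerivWithinAt F F' (Icc 0 1) t) : HasDerivWithinAt F F' (Ici t) t :=
  hF.mono_of_mem_nhdsWithin (Icc_mem_nhdsGE_of_mem ht)

-- Parametrizing the segment from `t₁` to `t₂` by `[0, 1]` covers both orders of `t₁` and `t₂`.
lemma norm_le_norm_mul_exp_of_norm_deriv_le {F F' : ℝ → G} {C : ℝ}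
    (hF : ∀ t ∈ Icc (0 : ℝ) 1, HasDerivWithinAt F (F' t) (Icc 0 1) t)
    (hF' : ∀ t ∈ Icc (0 : ℝ) 1, ‖F' t‖ ≤ C * ‖F t‖) {t₁ t₂ : ℝ} (ht₁ : t₁ ∈ Icc (0 : ℝ) 1)
    (ht₂ : t₂ ∈ Icc (0 : ℝ) 1) : ‖F t₂‖ ≤ ‖F t₁‖ * Real.exp C := by
  set τ : ℝ → ℝ := fun u => t₁ + u * (t₂ - t₁) with hτ
  have hmaps : MapsTo τ (Icc 0 1) (Icc 0 1) := fun u hu => by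
    simpa [hτ, smul_eq_mul] using (convex_Icc (0 : ℝ) 1).add_smul_sub_mem ht₁ ht₂ hu
  have hderiv : ∀ u ∈ Icc (0 : ℝ) 1,
      HasDerivWithinAt (fun u => F (τ u)) ((t₂ - t₁) • F' (τ u)) (Icc 0 1) u := fun u hu => by
    have hτ' : HasDerivAt τ (t₂ - t₁) u :=
      (((hasDerivAt_id u).mul_const (t₂ - t₁)).const_add t₁).congr_deriv (one_mul _)
    exact (hF (τ u) (hmaps hu)).scomp u hτ'.hasDerivWithinAt hmaps
  have habs : |t₂ - t₁| ≤ 1 := abs_le.2 ⟨by linarith [ht₁.2, ht₂.1], by linarith [ht₁.1, ht₂.2]⟩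
  have h := norm_le_gronwallBound_of_norm_deriv_right_le (δ := ‖F t₁‖) (K := C) (ε := 0)
    (fun u hu => (hderiv u hu).continuousWithinAt)
    (fun u hu => hasDerivWithinAt_Ici_of_Icc hu (hderiv u ⟨hu.1, hu.2.le⟩)) (by simp [hτ])
    (fun u hu => ?_) 1 (right_mem_Icc.2 zero_le_one)
  · simpa [hτ, gronwallBound_ε0] using h
  · rw [norm_smul, Real.norm_eq_abs, add_zero]
    have := hF' (τ u) (hmaps ⟨hu.1, hu.2.le⟩)
    exact (mul_le_of_le_one_left (norm_nonneg _) habs).trans this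

-- In the frame rotating with angular speed `s` the equation becomes `Q' = ρ Q` with `ρ` real.
lemma exists_eq_real_mul_exp_mul {F : ℝ → ℂ} {ρ : ℝ → ℝ} {s K : ℝ}
    (hρ : ∀ t ∈ Icc (0 : ℝ) 1, |ρ t| ≤ K)
    (hF : ∀ t ∈ Icc (0 : ℝ) 1,
      HasDerivWithinAt F (F t * (s * Complex.I + ρ t)) (Icc 0 1) t) :
    ∃ c : ℝ, F 1 = c * (Complex.exp (s * Complex.I) * F 0) := by
  have h0 : (0 : ℝ) ∈ Icc (0 : ℝ) 1 := left_mem_Icc.2 zero_le_one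
  have h1 : (1 : ℝ) ∈ Icc (0 : ℝ) 1 := right_mem_Icc.2 zero_le_one
  set Q : ℝ → ℂ := fun t => F t * Complex.exp (-(s * t * Complex.I)) with hQ
  have hQ' : ∀ t ∈ Icc (0 : ℝ) 1, HasDerivWithinAt Q (ρ t * Q t) (Icc 0 1) t := by
    intro t ht
    have hexp : HasDerivAt (fun t : ℝ => Complex.exp (-(s * t * Complex.I)))
        (Complex.exp (-(s * t * Complex.I)) * -(s * Complex.I)) t := by
      have h : HasDerivAt (fun t : ℝ => -(s * (t : ℂ) * Complex.I)) (-(s * Complex.I)) t := by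
        simpa using!
          (((hasDerivAt_id t).ofReal_comp.const_mul (s : ℂ)).mul_const Complex.I).fun_neg
      exact h.cexp
    exact ((hF t ht).mul hexp.hasDerivWithinAt).congr_deriv (by rw [hQ]; ring)
  have hF1 : F 1 = Q 1 * Complex.exp (s * Complex.I) := by
    simp [hQ, mul_assoc, ← Complex.exp_add]
  have hQ0 : Q 0 = F 0 := by simp [hQ]
  by_cases hF0 : F 0 = 0
  · have := norm_le_norm_mul_exp_of_norm_deriv_le (C := K) hQ' (fun t ht => ?_) h0 h1
    · refine ⟨0, ?_⟩
      rw [hQ0, hF0, norm_zero, zero_mul, norm_le_zero_iff] at this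
      simp [hF1, this]
    · rw [norm_mul, Complex.norm_real]
      exact mul_le_mul_of_nonneg_right (hρ t ht) (norm_nonneg _)
  have hIm : ∀ t ∈ Icc (0 : ℝ) 1,
      HasDerivWithinAt (fun t => (Q t / F 0).im) (ρ t * (Q t / F 0).im) (Icc 0 1) t := by
    intro t ht
    have := Complex.imCLM.hasFDerivAt.comp_hasDerivWithinAt t ((hQ' t ht).div_const (F 0))
    refine this.congr_deriv ?_
    rw [Complex.imCLM_apply, mul_div_assoc, Complex.im_ofReal_mul]
  have hreal := norm_le_norm_mul_exp_of_norm_deriv_le (C := K) hIm (fun t ht => ?_) h0 h1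
  · rw [hQ0, div_self hF0, Complex.one_im, norm_zero, zero_mul, norm_le_zero_iff] at hreal
    refine ⟨(Q 1 / F 0).re, ?_⟩
    rw [show (((Q 1 / F 0).re : ℝ) : ℂ) = Q 1 / F 0 from Complex.ext rfl hreal.symm, hF1]
    field_simp
  · rw [norm_mul]
    exact mul_le_mul_of_nonneg_right (hρ t ht) (norm_nonneg _)

lemma exists_hasDerivWithinAt_Icc_of_lipschitzWith [CompleteSpace G] {Y : G → G} {L : NNReal}
    (hL : LipschitzWith L Y) {M : ℝ} (hM : ∀ z, ‖Y z‖ ≤ M) (x : G) :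
    ∃ γ : ℝ → G, γ 0 = x ∧ ∀ t ∈ Icc (0 : ℝ) 1, HasDerivWithinAt γ (Y (γ t)) (Icc 0 1) t := by
  have hPL : IsPicardLindelof (fun _ => Y) (⟨0, left_mem_Icc.2 zero_le_one⟩ : Icc (0 : ℝ) 1) x
      M.toNNReal 0 M.toNNReal L :=
    ⟨fun _ _ => hL.lipschitzOnWith, fun _ _ => continuousOn_const,
      fun _ _ z _ => (hM z).trans (Real.le_coe_toNNReal M), by simp⟩
  exact hPL.exists_eq_forall_mem_Icc_hasDerivWithinAt₀

lemma norm_eq_of_inner_deriv_eq_zero {H : Type*} [NormedAddCommGroup H] [InnerProductSpace ℂ H]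
    {γ γ' : ℝ → H} (hγ : ∀ t ∈ Icc (0 : ℝ) 1, HasDerivWithinAt γ (γ' t) (Icc 0 1) t)
    (h : ∀ t ∈ Icc (0 : ℝ) 1, (inner ℂ (γ t) (γ' t)).re = 0) :
    ∀ t ∈ Icc (0 : ℝ) 1, ‖γ t‖ = ‖γ 0‖ := by
  let _ : InnerProductSpace ℝ H := InnerProductSpace.complexToReal
  have hsq : ∀ t ∈ Icc (0 : ℝ) 1, HasDerivWithinAt (fun t => ‖γ t‖ ^ 2) 0 (Icc 0 1) t := by
    intro t ht
    have := (hγ t ht).norm_sq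
    rwa [real_inner_eq_re_inner ℂ, RCLike.re_to_complex, h t ht, mul_zero] at this
  intro t ht
  refine (sq_eq_sq₀ (norm_nonneg _) (norm_nonneg _)).1 (constant_of_has_deriv_right_zero
    (fun t ht => (hsq t ht).continuousWithinAt) (fun t ht => ?_) t ht)
  exact hasDerivWithinAt_Ici_of_Icc ht (hsq t ⟨ht.1, ht.2.le⟩)

lemma exists_cutoff_smul [FiniteDimensional ℝ G] {A Ω : Set G} (hA : IsCompact A) (hΩ : IsOpen Ω)
    (hAΩ : A ⊆ Ω) {v : G → G} (hv : ∀ z ∈ Ω, ContDiffAt ℝ 1 v z) :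
    ∃ χ : G → ℝ, (∀ z, χ z ∈ Icc (0 : ℝ) 1) ∧ (∀ z ∈ A, χ z = 1) ∧ (∀ z ∉ Ω, χ z = 0) ∧
      (∃ L, LipschitzWith L fun z => χ z • v z) ∧ ∃ M, ∀ z, ‖χ z • v z‖ ≤ M := by
  have : ProperSpace G := FiniteDimensional.proper ℝ G
  obtain ⟨A', hA', hAA', hA'Ω⟩ := exists_compact_between hA hΩ hAΩ
  obtain ⟨χ, hχ0, hχ1, hχ⟩ := exists_contMDiffMap_zero_one_of_isClosed (n := 1)
    (modelWithCornersSelf ℝ G) isOpen_interior.isClosed_compl hA.isClosed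
    (disjoint_compl_left_iff_subset.2 hAA')
  have hχ_zero : ∀ z ∉ A', χ z = 0 := fun z hz => hχ0 fun h => hz (interior_subset h)
  have hcompact : HasCompactSupport fun z => χ z • v z := .intro hA' fun z hz => by
    rw [hχ_zero z hz, zero_smul]
  have hsmooth : ContDiff ℝ 1 fun z => χ z • v z := contDiff_iff_contDiffAt.2 fun z => by
    by_cases hz : z ∈ A'
    · exact (contMDiff_iff_contDiff.1 χ.contMDiff).contDiffAt.smul (hv z (hA'Ω hz))
    · refine (contDiffAt_const (c := (0 : G))).congr_of_eventuallyEq ?_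
      filter_upwards [hA'.isClosed.isOpen_compl.mem_nhds hz] with y hy
      rw [hχ_zero y hy, zero_smul]
  exact ⟨χ, hχ, fun z hz => hχ1 hz, fun z hz => hχ_zero z fun h => hz (hA'Ω h),
    hsmooth.lipschitzWith_of_hasCompactSupport hcompact one_ne_zero,
    hsmooth.continuous.bounded_above_of_compact_support hcompact⟩

end UnitInterval

section Flow

variable {E : Type*} [NormedAddCommGroup E]

lemma isIntegralCurveOn_comp_one_sub [NormedSpace ℝ E] {v : E → E} {γ : ℝ → E}
    (hγ : IsIntegralCurveOn γ (fun _ => v) (Icc 0 1)) :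
    IsIntegralCurveOn (fun t => γ (1 - t)) (fun _ => -v) (Icc 0 1) := fun t ht => by
  have hsub : HasDerivWithinAt (fun t : ℝ => 1 - t) (-1) (Icc 0 1) t :=
    ((hasDerivAt_id t).const_sub 1).hasDerivWithinAt
  have hmaps : MapsTo (fun t : ℝ => 1 - t) (Icc 0 1) (Icc 0 1) := fun _ => Icc.one_sub_mem
  exact ((hγ _ (hmaps ht)).scomp t hsub hmaps).congr_deriv (neg_one_smul ℝ _)

/-- `Φ` is the time-one map on `S` of the flow of the vector field `v`: every `x ∈ S` is joined to
`Φ x` by an integral curve of `v` over `[0, 1]` that stays in `S`. -/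
def IsTimeOneMap [NormedSpace ℝ E] (v : E → E) (S : Set E) (Φ : E → E) : Prop :=
  ∀ x ∈ S, ∃ γ : ℝ → E, IsIntegralCurveOn γ (fun _ => v) (Icc 0 1) ∧ MapsTo γ (Icc 0 1) S ∧
    γ 0 = x ∧ γ 1 = Φ x

lemma IsTimeOneMap.mapsTo [NormedSpace ℝ E] {v Φ : E → E} {S : Set E} (h : IsTimeOneMap v S Φ) :
    MapsTo Φ S S := fun x hx => by
  obtain ⟨γ, -, hγS, -, h1⟩ := h x hx
  exact h1 ▸ hγS (right_mem_Icc.2 zero_le_one)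

namespace IsMilnorField

variable [InnerProductSpace ℂ E] {f : E → ℂ} {D S : Set E} {s K δ ε : ℝ} {v : E → E}
  {γ γ₁ γ₂ : ℝ → E}

lemma neg (H : IsMilnorField f D s K v) : IsMilnorField f D (-s) K (-v) := by
  simpa using H.smul (-1)

lemma norm_fderiv_le (H : IsMilnorField f D s K v) {z : E} (hz : z ∈ D) :
    ‖fderiv ℂ f z (v z)‖ ≤ (|s| + K) * ‖f z‖ := by
  obtain ⟨ρ, hρ, hv⟩ := H.exists_fderiv_eq z hz
  have hsρ : ‖(s * Complex.I + ρ : ℂ)‖ ≤ |s| + K := calc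
    _ ≤ ‖(s * Complex.I : ℂ)‖ + ‖(ρ : ℂ)‖ := norm_add_le _ _
    _ = |s| + |ρ| := by simp
    _ ≤ |s| + K := by gcongr
  rw [hv, norm_mul, mul_comm]
  gcongr

lemma hasDerivWithinAt_comp (H : IsMilnorField f D s K v) {γ' : E} {T : Set ℝ} {t : ℝ}
    (ht : γ t ∈ D) (hγ : HasDerivWithinAt γ γ' T t) :
    HasDerivWithinAt (fun t => f (γ t)) (fderiv ℂ f (γ t) γ') T t :=
  ((H.analyticOnNhd _ ht).differentiableAt.hasFDerivAt.restrictScalars ℝ).comp_hasDerivWithinAt t hγ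

lemma norm_comp_le_of_cutoff (H : IsMilnorField f D s K v) {χ : E → ℝ}
    (hχ : ∀ z, χ z ∈ Icc (0 : ℝ) 1)
    (hγ : IsIntegralCurveOn γ (fun _ z => χ z • v z) (Icc 0 1)) (hγD : MapsTo γ (Icc 0 1) D)
    {t₁ t₂ : ℝ} (ht₁ : t₁ ∈ Icc (0 : ℝ) 1) (ht₂ : t₂ ∈ Icc (0 : ℝ) 1) :
    ‖f (γ t₂)‖ ≤ ‖f (γ t₁)‖ * Real.exp (|s| + K) := by
  refine norm_le_norm_mul_exp_of_norm_deriv_le (F := fun t => f (γ t))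
    (fun t ht => H.hasDerivWithinAt_comp (hγD ht) (hγ t ht)) (fun t ht => ?_) ht₁ ht₂
  beta_reduce
  rw [← Complex.coe_smul, map_smul, norm_smul, Complex.norm_real,
    Real.norm_of_nonneg (hχ _).1]
  exact (mul_le_of_le_one_left (norm_nonneg _) (hχ _).2).trans (H.norm_fderiv_le (hγD ht))

lemma norm_comp_le (H : IsMilnorField f D s K v) (hγ : IsIntegralCurveOn γ (fun _ => v) (Icc 0 1))
    (hγD : MapsTo γ (Icc 0 1) D) {t₁ t₂ : ℝ} (ht₁ : t₁ ∈ Icc (0 : ℝ) 1)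
    (ht₂ : t₂ ∈ Icc (0 : ℝ) 1) : ‖f (γ t₂)‖ ≤ ‖f (γ t₁)‖ * Real.exp (|s| + K) :=
  H.norm_comp_le_of_cutoff (χ := fun _ => 1) (fun _ => ⟨zero_le_one, le_rfl⟩)
    (by simpa only [one_smul] using hγ) hγD ht₁ ht₂

lemma exists_comp_eq (H : IsMilnorField f D s K v)
    (hγ : IsIntegralCurveOn γ (fun _ => v) (Icc 0 1)) (hγD : MapsTo γ (Icc 0 1) D) :
    ∃ c : ℝ, f (γ 1) = c * (Complex.exp (s * Complex.I) * f (γ 0)) := by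
  choose! ρ hρ hv using H.exists_fderiv_eq
  exact exists_eq_real_mul_exp_mul (F := fun t => f (γ t)) (fun t ht => hρ _ (hγD ht))
    fun t ht => (H.hasDerivWithinAt_comp (hγD ht) (hγ t ht)).congr_deriv (hv _ (hγD ht))

lemma exists_forall_dist_le (H : IsMilnorField f D s K v) (hS : IsCompact S) (hSD : S ⊆ D)
    {η : ℝ} (hη : 0 < η) : ∃ δ > 0, ∀ γ : ℝ → E, IsIntegralCurveOn γ (fun _ => v) (Icc 0 1) →
      MapsTo γ (Icc 0 1) S → ‖f (γ 0)‖ < δ → dist (γ 1) (γ 0) ≤ η := by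
  obtain ⟨δ, hδ, hsmall⟩ := exists_forall_norm_lt_of_isCompact hS
    (H.analyticOnNhd.continuousOn.mono hSD) (H.continuousOn.mono hSD)
    (fun z hz => H.eq_zero z (hSD hz)) hη
  refine ⟨δ * Real.exp (-(|s| + K)), by positivity, fun γ hγ hγS h0 => ?_⟩
  have hspeed : ∀ t ∈ Icc (0 : ℝ) 1, ‖v (γ t)‖ ≤ η := fun t ht => by
    refine (hsmall _ (hγS ht) ?_).le
    refine (H.norm_comp_le hγ (hγS.mono_right hSD) (left_mem_Icc.2 zero_le_one) ht).trans_lt ?_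
    rwa [Real.exp_neg, ← div_eq_mul_inv, lt_div_iff₀ (Real.exp_pos _)] at h0
  simpa [dist_eq_norm] using (convex_Icc (0 : ℝ) 1).norm_image_sub_le_of_norm_hasDerivWithin_le
    hγ hspeed (left_mem_Icc.2 zero_le_one) (right_mem_Icc.2 zero_le_one)

lemma exists_apply_eq_of_isTimeOneMap (H : IsMilnorField f D s K v) (hSD : S ⊆ D) {Φ : E → E}
    (hΦ : IsTimeOneMap v S Φ) {x : E} (hx : x ∈ S) :
    ∃ c : ℝ, f (Φ x) = c * (Complex.exp (s * Complex.I) * f x) := by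
  obtain ⟨γ, hγ, hγS, h0, h1⟩ := hΦ x hx
  simpa only [h0, h1] using H.exists_comp_eq hγ (hγS.mono_right hSD)

variable [FiniteDimensional ℂ E]

lemma exists_cutoff (H : IsMilnorField f D s K v) (hS : IsCompact S) (hSD : S ⊆ D) (hδ : 0 < δ) :
    ∃ χ : E → ℝ, (∀ z, χ z ∈ Icc (0 : ℝ) 1) ∧ (∀ z ∈ S, δ ≤ ‖f z‖ → χ z = 1) ∧
      (∀ z ∉ D, χ z = 0) ∧ (∃ L, LipschitzWith L fun z => χ z • v z) ∧
        ∃ M, ∀ z, ‖χ z • v z‖ ≤ M := by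
  have : FiniteDimensional ℝ E := FiniteDimensional.complexToReal E
  have hf := H.analyticOnNhd.continuousOn
  have hA : IsCompact (S ∩ (fun z => ‖f z‖) ⁻¹' Ici δ) := hS.of_isClosed_subset
    ((hf.mono hSD).norm.preimage_isClosed_of_isClosed hS.isClosed isClosed_Ici) inter_subset_left
  obtain ⟨χ, hχ, h1, h0, hL, hM⟩ := exists_cutoff_smul hA
    (hf.isOpen_inter_preimage H.isOpen isOpen_compl_singleton)
    (fun z hz => ⟨hSD hz.1, norm_pos_iff.1 (hδ.trans_le hz.2)⟩)
    fun z hz => H.contDiffAt z hz.1 hz.2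
  exact ⟨χ, hχ, fun z hz hfz => h1 z ⟨hz, hfz⟩, fun z hz => h0 z fun h => hz h.1, hL, hM⟩

-- A solution for the cut-off field keeps `|f|` above the threshold of the cut-off by Gronwall's
-- inequality, so that it is an integral curve of `v` itself.
lemma exists_isIntegralCurveOn (H : IsMilnorField f D s K v) (hS : sphere (0 : E) ε ⊆ D) {x : E}
    (hx : x ∈ sphere (0 : E) ε) : ∃ γ : ℝ → E, IsIntegralCurveOn γ (fun _ => v) (Icc 0 1) ∧
      MapsTo γ (Icc 0 1) (sphere 0 ε) ∧ γ 0 = x := by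
  by_cases hfx : f x = 0
  · refine ⟨fun _ => x, fun t _ => ?_, fun t _ => hx, rfl⟩
    exact (hasDerivWithinAt_const t _ x).congr_deriv (H.eq_zero x (hS hx) hfx).symm
  have : ProperSpace E := FiniteDimensional.proper ℂ E
  have hpos : 0 < ‖f x‖ := norm_pos_iff.2 hfx
  obtain ⟨χ, hχ, hχ1, hχ0, ⟨L, hL⟩, M, hM⟩ := H.exists_cutoff (isCompact_sphere 0 ε) hS
    (δ := ‖f x‖ * Real.exp (-(|s| + K))) (by positivity)
  obtain ⟨γ, rfl, hγ⟩ := exists_hasDerivWithinAt_Icc_of_lipschitzWith hL hM x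
  have htangent : ∀ z, (inner ℂ z (χ z • v z)).re = 0 := fun z => by
    by_cases hz : z ∈ D
    · rw [← Complex.coe_smul, inner_smul_right, Complex.re_ofReal_mul, H.re_inner_eq_zero z hz,
        mul_zero]
    · rw [hχ0 z hz, zero_smul, inner_zero_right, Complex.zero_re]
  have hγS : MapsTo γ (Icc 0 1) (sphere 0 ε) := fun t ht => mem_sphere_zero_iff_norm.2 <|
    (norm_eq_of_inner_deriv_eq_zero hγ (fun t _ => htangent _) t ht).trans
      (mem_sphere_zero_iff_norm.1 hx)
  refine ⟨γ, fun t ht => (hγ t ht).congr_deriv ?_, hγS, rfl⟩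
  rw [hχ1 _ (hγS ht), one_smul]
  rw [Real.exp_neg, ← div_eq_mul_inv, div_le_iff₀ (Real.exp_pos _)]
  exact H.norm_comp_le_of_cutoff hχ hγ (hγS.mono_right hS) ht (left_mem_Icc.2 zero_le_one)

lemma exists_forall_dist_le_mul_dist (H : IsMilnorField f D s K v) (hS : IsCompact S) (hSD : S ⊆ D)
    (hδ : 0 < δ) : ∃ C : ℝ, ∀ γ₁ γ₂ : ℝ → E, IsIntegralCurveOn γ₁ (fun _ => v) (Icc 0 1) →
      MapsTo γ₁ (Icc 0 1) S → IsIntegralCurveOn γ₂ (fun _ => v) (Icc 0 1) →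
      MapsTo γ₂ (Icc 0 1) S → δ ≤ ‖f (γ₁ 0)‖ → δ ≤ ‖f (γ₂ 0)‖ →
      dist (γ₁ 1) (γ₂ 1) ≤ C * dist (γ₁ 0) (γ₂ 0) := by
  obtain ⟨χ, -, hχ1, -, ⟨L, hL⟩, -⟩ := H.exists_cutoff hS hSD
    (δ := δ * Real.exp (-(|s| + K))) (by positivity)
  have hcutoff : ∀ γ : ℝ → E, IsIntegralCurveOn γ (fun _ => v) (Icc 0 1) →
      MapsTo γ (Icc 0 1) S → δ ≤ ‖f (γ 0)‖ →
      ∀ t ∈ Ico (0 : ℝ) 1, HasDerivWithinAt γ (χ (γ t) • v (γ t)) (Ici t) t := by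
    intro γ hγ hγS h0 t ht
    have ht' : t ∈ Icc (0 : ℝ) 1 := Ico_subset_Icc_self ht
    rw [hχ1 _ (hγS ht'), one_smul]
    · exact hasDerivWithinAt_Ici_of_Icc ht (hγ t ht')
    · rw [Real.exp_neg, ← div_eq_mul_inv, div_le_iff₀ (Real.exp_pos _)]
      exact h0.trans
        (H.norm_comp_le hγ (hγS.mono_right hSD) ht' (left_mem_Icc.2 zero_le_one))
  refine ⟨Real.exp (L * (1 - 0)), fun γ₁ γ₂ h₁ hS₁ h₂ hS₂ k₁ k₂ => ?_⟩
  rw [mul_comm]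
  exact dist_le_of_trajectories_ODE (fun _ => hL) h₁.continuousOn (hcutoff γ₁ h₁ hS₁ k₁)
    h₂.continuousOn (hcutoff γ₂ h₂ hS₂ k₂) le_rfl 1 (right_mem_Icc.2 zero_le_one)

lemma eq_of_isIntegralCurveOn (H : IsMilnorField f D s K v) (hS : IsCompact S) (hSD : S ⊆ D)
    (hγ₁ : IsIntegralCurveOn γ₁ (fun _ => v) (Icc 0 1)) (hS₁ : MapsTo γ₁ (Icc 0 1) S)
    (hγ₂ : IsIntegralCurveOn γ₂ (fun _ => v) (Icc 0 1)) (hS₂ : MapsTo γ₂ (Icc 0 1) S)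
    (h : γ₁ 0 = γ₂ 0) : γ₁ 1 = γ₂ 1 := by
  by_cases h0 : f (γ₂ 0) = 0
  · have hconst : ∀ γ : ℝ → E, IsIntegralCurveOn γ (fun _ => v) (Icc 0 1) →
        MapsTo γ (Icc 0 1) S → f (γ 0) = 0 → γ 1 = γ 0 := fun γ hγ hγS hfγ =>
      dist_le_zero.1 <| le_of_forall_pos_le_add fun η hη => by
        obtain ⟨δ, hδ, hdist⟩ := H.exists_forall_dist_le hS hSD hη
        simpa using hdist γ hγ hγS (by rwa [hfγ, norm_zero])
    rw [hconst γ₁ hγ₁ hS₁ (h ▸ h0), hconst γ₂ hγ₂ hS₂ h0, h]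
  · obtain ⟨C, hC⟩ := H.exists_forall_dist_le_mul_dist hS hSD (norm_pos_iff.2 h0)
    simpa [h] using hC γ₁ γ₂ hγ₁ hS₁ hγ₂ hS₂ (by rw [h]) le_rfl

lemma exists_isTimeOneMap (H : IsMilnorField f D s K v) (hS : sphere (0 : E) ε ⊆ D) :
    ∃ Φ, IsTimeOneMap v (sphere 0 ε) Φ := by
  choose! γ hγ hγS hγ0 using fun x (hx : x ∈ sphere (0 : E) ε) => H.exists_isIntegralCurveOn hS hx
  exact ⟨fun x => γ x 1, fun x hx => ⟨γ x, hγ x hx, hγS x hx, hγ0 x hx, rfl⟩⟩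

lemma leftInvOn_of_isTimeOneMap (H : IsMilnorField f D s K v) (hS : IsCompact S) (hSD : S ⊆ D)
    {Φ Ψ : E → E} (hΦ : IsTimeOneMap v S Φ) (hΨ : IsTimeOneMap (-v) S Ψ) : LeftInvOn Ψ Φ S := by
  intro x hx
  obtain ⟨γ, hγ, hγS, rfl, h1⟩ := hΦ x hx
  obtain ⟨β, hβ, hβS, hβ0, hβ1⟩ := hΨ (Φ (γ 0)) (hΦ.mapsTo hx)
  have := H.neg.eq_of_isIntegralCurveOn hS hSD hβ hβS (isIntegralCurveOn_comp_one_sub hγ)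
    (hγS.comp fun _ => Icc.one_sub_mem) (by simp [hβ0, h1])
  simpa [hβ1] using this

lemma continuousOn_of_isTimeOneMap (H : IsMilnorField f D s K v) (hS : IsCompact S) (hSD : S ⊆ D)
    {Φ : E → E} (hΦ : IsTimeOneMap v S Φ) : ContinuousOn Φ S := by
  choose! γ hγ hγS hγ0 hγ1 using hΦ
  intro x hx
  have hfc : ContinuousWithinAt f S x := H.analyticOnNhd.continuousOn.mono hSD x hx
  by_cases hfx : f x = 0
  · rw [Metric.continuousWithinAt_iff']
    intro η hη
    obtain ⟨δ, hδ, hdist⟩ := H.exists_forall_dist_le hS hSD (div_pos hη three_pos)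
    have hsmall : ∀ᶠ y in 𝓝[S] x, ‖f y‖ < δ :=
      hfc.norm.eventually_lt_const (by simpa [hfx] using hδ)
    have hmove : ∀ y ∈ S, ‖f y‖ < δ → dist (Φ y) y ≤ η / 3 := fun y hy hfy => by
      simpa only [hγ0 y hy, hγ1 y hy] using
        hdist (γ y) (hγ y hy) (hγS y hy) (by rwa [hγ0 y hy])
    filter_upwards [hsmall, self_mem_nhdsWithin,
      mem_nhdsWithin_of_mem_nhds (ball_mem_nhds x (div_pos hη three_pos))] with y hfy hyS hyx
    have hx' := hmove x hx (by rwa [hfx, norm_zero])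
    rw [dist_comm] at hx'
    linarith [dist_triangle4 (Φ y) y x (Φ x), hmove y hyS hfy, mem_ball.1 hyx]
  · have hpos : 0 < ‖f x‖ := norm_pos_iff.2 hfx
    obtain ⟨C, hC⟩ := H.exists_forall_dist_le_mul_dist hS hSD (half_pos hpos)
    have hlim : Tendsto (fun y => C * dist y x) (𝓝[S] x) (𝓝 0) := by
      have : Continuous fun y => C * dist y x := by fun_prop
      simpa using (this.tendsto x).mono_left nhdsWithin_le_nhds
    refine tendsto_iff_dist_tendsto_zero.2
      (squeeze_zero' (.of_forall fun _ => dist_nonneg) ?_ hlim)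
    filter_upwards [hfc.norm.eventually_const_lt (half_lt_self hpos), self_mem_nhdsWithin]
      with y hfy hyS
    simpa only [hγ0 y hyS, hγ0 x hx, hγ1 y hyS, hγ1 x hx] using
      hC (γ y) (γ x) (hγ y hyS) (hγS y hyS) (hγ x hx) (hγS x hx) (by rw [hγ0 y hyS]; exact hfy.le)
        (by rw [hγ0 x hx]; linarith)

theorem nonempty_homeomorph (H : IsMilnorField f D s K v) (hS : sphere (0 : E) ε ⊆ D) (a : ℂ) :
    Nonempty ({x ∈ sphere (0 : E) ε | ∃ t : ℝ, f x = t * a} ≃ₜ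
      {x ∈ sphere (0 : E) ε | ∃ t : ℝ, f x = t * (Complex.exp (s * Complex.I) * a)}) := by
  have hcpt : IsCompact (sphere (0 : E) ε) :=
    have : ProperSpace E := FiniteDimensional.proper ℂ E
    isCompact_sphere 0 ε
  have H' := H.neg
  obtain ⟨Φ, hΦ⟩ := H.exists_isTimeOneMap hS
  obtain ⟨Ψ, hΨ⟩ := H'.exists_isTimeOneMap hS
  have hexp : Complex.exp ((-s : ℝ) * Complex.I) * Complex.exp (s * Complex.I) = 1 := by
    simp [← Complex.exp_add]
  have hΦmem : ∀ x ∈ sphere (0 : E) ε, (∃ t : ℝ, f x = t * a) →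
      ∃ t : ℝ, f (Φ x) = t * (Complex.exp (s * Complex.I) * a) := fun x hx ⟨t, ht⟩ => by
    obtain ⟨c, hc⟩ := H.exists_apply_eq_of_isTimeOneMap hS hΦ hx
    exact ⟨c * t, by rw [hc, ht, Complex.ofReal_mul]; ring⟩
  have hΨmem : ∀ x ∈ sphere (0 : E) ε,
      (∃ t : ℝ, f x = t * (Complex.exp (s * Complex.I) * a)) →
      ∃ t : ℝ, f (Ψ x) = t * a := fun x hx ⟨t, ht⟩ => by
    obtain ⟨c, hc⟩ := H'.exists_apply_eq_of_isTimeOneMap hS hΨ hx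
    exact ⟨c * t, by rw [hc, ht, Complex.ofReal_mul]; linear_combination (c * t * a : ℂ) * hexp⟩
  exact ⟨{
    toFun := fun x => ⟨Φ x, hΦ.mapsTo x.2.1, hΦmem x x.2.1 x.2.2⟩
    invFun := fun x => ⟨Ψ x, hΨ.mapsTo x.2.1, hΨmem x x.2.1 x.2.2⟩
    left_inv := fun x => Subtype.ext (H.leftInvOn_of_isTimeOneMap hcpt hS hΦ hΨ x.2.1)
    right_inv := fun x =>
      Subtype.ext (H'.leftInvOn_of_isTimeOneMap hcpt hS hΨ (by rwa [neg_neg]) x.2.1)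
    continuous_toFun := (((H.continuousOn_of_isTimeOneMap hcpt hS hΦ).mono
      (sep_subset _ _)).domRestrict).subtype_mk _
    continuous_invFun := (((H'.continuousOn_of_isTimeOneMap hcpt hS hΨ).mono
      (sep_subset _ _)).domRestrict).subtype_mk _ }⟩

end IsMilnorField

end Flow

section Pencil

variable {α : Type} (U : Set α) (f : α → ℂ) (θ : ℝ)

lemma exp_add_pi_mul_I :
    Complex.exp (((θ + Real.pi : ℝ) : ℂ) * Complex.I) = -Complex.exp (θ * Complex.I) := by
  rw [Complex.ofReal_add, add_mul, Complex.exp_add, Complex.exp_pi_mul_I, mul_neg_one]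

lemma div_norm_eq_iff {z w : ℂ} (hw : ‖w‖ = 1) : z / ‖z‖ = w ↔ ∃ t : ℝ, 0 < t ∧ z = t * w := by
  constructor
  · intro h
    have hz : z ≠ 0 := by
      rintro rfl
      simp [← h] at hw
    have hz' : (‖z‖ : ℂ) ≠ 0 := Complex.ofReal_ne_zero.2 (norm_ne_zero_iff.2 hz)
    exact ⟨‖z‖, norm_pos_iff.2 hz, by rw [← h, mul_div_cancel₀ _ hz']⟩
  · rintro ⟨t, ht, rfl⟩
    rw [norm_mul, hw, mul_one, Complex.norm_real, Real.norm_of_nonneg ht.le,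
      mul_div_cancel_left₀ _ (Complex.ofReal_ne_zero.2 ht.ne')]

lemma Eset_eq_setOf_div_norm_eq :
    Eset U f θ = {x ∈ U | f x / ‖f x‖ = Complex.exp (θ * Complex.I)} :=
  ext fun _ => and_congr_right fun _ => (div_norm_eq_iff (Complex.norm_exp_ofReal_mul_I θ)).symm

lemma Eset_add_pi_eq_setOf_div_norm_eq :
    Eset U f (θ + Real.pi) = {x ∈ U | f x / ‖f x‖ = -Complex.exp (θ * Complex.I)} := by
  rw [Eset_eq_setOf_div_norm_eq, exp_add_pi_mul_I]

lemma Xset_eq_union :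
    Xset U f θ = Eset U f θ ∪ {x ∈ U | f x = 0} ∪ Eset U f (θ + Real.pi) := by
  ext x
  simp only [Xset, Eset, exp_add_pi_mul_I, mem_union, mem_sep_iff]
  constructor
  · rintro ⟨hx, t, ht⟩
    rcases lt_trichotomy t 0 with h | rfl | h
    · exact .inr ⟨hx, -t, neg_pos.2 h, by simp [ht]⟩
    · exact .inl (.inr ⟨hx, by simp [ht]⟩)
    · exact .inl (.inl ⟨hx, t, h, ht⟩)
  · rintro ((⟨hx, t, -, ht⟩ | ⟨hx, h⟩) | ⟨hx, t, -, ht⟩)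
    · exact ⟨hx, t, ht⟩
    · exact ⟨hx, 0, by simp [h]⟩
    · exact ⟨hx, -t, by simp [ht]⟩

lemma disjoint_Eset_setOf_eq_zero : Disjoint (Eset U f θ) {x ∈ U | f x = 0} := by
  rw [Set.disjoint_left]
  rintro x ⟨-, t, ht, hx⟩ ⟨-, h0⟩
  exact mul_ne_zero (Complex.ofReal_ne_zero.2 ht.ne') (Complex.exp_ne_zero _) (hx.symm.trans h0)

lemma disjoint_Eset_Eset_add_pi : Disjoint (Eset U f θ) (Eset U f (θ + Real.pi)) := by
  rw [Eset_eq_setOf_div_norm_eq, Eset_add_pi_eq_setOf_div_norm_eq, Set.disjoint_left]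
  rintro x ⟨-, hx⟩ ⟨-, hx'⟩
  exact self_ne_neg.2 (Complex.exp_ne_zero _) (hx.symm.trans hx')

lemma setOf_re_eq_zero_eq_Xset : {x ∈ U | (f x).re = 0} = Xset U f (Real.pi / 2) := by
  ext x
  have hI : Complex.exp ((Real.pi / 2 : ℝ) * Complex.I) = Complex.I := by simp
  simp only [Xset, hI, mem_sep_iff]
  refine and_congr_right fun _ => ⟨fun h => ⟨(f x).im, Complex.ext ?_ ?_⟩, ?_⟩
  · simp [h]
  · simp
  · rintro ⟨t, ht⟩
    simp [ht]

end Pencil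

section Links

variable {E : Type} [NormedAddCommGroup E] [InnerProductSpace ℂ E] [FiniteDimensional ℂ E]
  {f : E → ℂ}

theorem IsMilnorField.nonempty_homeomorph_Xset {D U : Set E} {v : E → E} {K ε : ℝ}
    (H : IsMilnorField f D 1 K v) (hD : sphere (0 : E) ε ⊆ D) (hU : sphere (0 : E) ε ⊆ U)
    (θ τ : ℝ) :
    Nonempty ((Xset U f θ ∩ sphere 0 ε : Set E) ≃ₜ (Xset U f τ ∩ sphere 0 ε : Set E)) := by
  have hX : ∀ β : ℝ, Xset U f β ∩ sphere 0 ε =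
      {x ∈ sphere (0 : E) ε | ∃ t : ℝ, f x = t * Complex.exp (β * Complex.I)} := fun β =>
    ext fun x => ⟨fun h => ⟨h.2, h.1.2⟩, fun h => ⟨⟨hU h.1, h.2⟩, h.1⟩⟩
  have hexp : Complex.exp (((τ - θ) * 1 : ℝ) * Complex.I) * Complex.exp (θ * Complex.I) =
      Complex.exp (τ * Complex.I) := by
    rw [← Complex.exp_add, ← add_mul, ← Complex.ofReal_add, mul_one, sub_add_cancel]
  rw [hX, hX, ← hexp]
  exact (H.smul (τ - θ)).nonempty_homeomorph hD _

end Links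

theorem stmt_9_general {E : Type} [NormedAddCommGroup E] [InnerProductSpace ℂ E]
    [FiniteDimensional ℂ E] {U : Set E} (hU : U ∈ 𝓝 0) {f : E → ℂ} (hf : AnalyticAt ℂ f 0)
    (hf0 : f 0 = 0) :
    ∃ ε₀ > (0 : ℝ), closedBall (0 : E) ε₀ ⊆ U ∧ ∀ ε : ℝ, 0 < ε → ε ≤ ε₀ → ∀ θ : ℝ,
      Xset U f θ ∩ sphere 0 ε = (Eset U f θ ∩ sphere 0 ε) ∪ ({x ∈ U | f x = 0} ∩ sphere 0 ε) ∪
        (Eset U f (θ + Real.pi) ∩ sphere 0 ε) ∧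
      Disjoint (Eset U f θ ∩ sphere 0 ε) ({x ∈ U | f x = 0} ∩ sphere 0 ε) ∧
      Disjoint (Eset U f θ ∩ sphere 0 ε) (Eset U f (θ + Real.pi) ∩ sphere 0 ε) ∧
      Disjoint ({x ∈ U | f x = 0} ∩ sphere 0 ε) (Eset U f (θ + Real.pi) ∩ sphere 0 ε) ∧
      Eset U f θ ∩ sphere 0 ε =
        {x ∈ sphere (0 : E) ε | f x / ‖f x‖ = Complex.exp (θ * Complex.I)} ∧
      Eset U f (θ + Real.pi) ∩ sphere 0 ε =
        {x ∈ sphere (0 : E) ε | f x / ‖f x‖ = -Complex.exp (θ * Complex.I)} ∧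
      Nonempty ((Xset U f θ ∩ sphere 0 ε : Set E) ≃ₜ
        ({x ∈ U | (f x).re = 0} ∩ sphere 0 ε : Set E)) := by
  obtain ⟨r, hr, K, H⟩ := exists_isMilnorField hf hf0
  obtain ⟨R, hR, hRU⟩ := Metric.nhds_basis_closedBall.mem_iff.1 hU
  refine ⟨min R (r / 2), by positivity, (closedBall_subset_closedBall (min_le_left _ _)).trans hRU,
    fun ε hε hε₀ θ => ?_⟩
  have hSU : sphere (0 : E) ε ⊆ U := (sphere_subset_closedBall.trans
    (closedBall_subset_closedBall (hε₀.trans (min_le_left _ _)))).trans hRU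
  have hSD : sphere (0 : E) ε ⊆ ball 0 r \ {0} := fun x hx =>
    ⟨sphere_subset_ball (by linarith [hε₀.trans (min_le_right _ _)]) hx, ne_of_mem_sphere hx hε.ne'⟩
  have hfibre : ∀ w : ℂ, {x ∈ U | f x / ‖f x‖ = w} ∩ sphere 0 ε =
      {x ∈ sphere (0 : E) ε | f x / ‖f x‖ = w} := fun w =>
    ext fun x => ⟨fun h => ⟨h.2, h.1.2⟩, fun h => ⟨⟨hSU h.1, h.2⟩, h.1⟩⟩
  refine ⟨by rw [Xset_eq_union, union_inter_distrib_right, union_inter_distrib_right],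
    (disjoint_Eset_setOf_eq_zero U f θ).mono inter_subset_left inter_subset_left,
    (disjoint_Eset_Eset_add_pi U f θ).mono inter_subset_left inter_subset_left,
    (disjoint_Eset_setOf_eq_zero U f _).symm.mono inter_subset_left inter_subset_left,
    by rw [Eset_eq_setOf_div_norm_eq, hfibre], by rw [Eset_add_pi_eq_setOf_div_norm_eq, hfibre], ?_⟩
  rw [setOf_re_eq_zero_eq_Xset]
  exact H.nonempty_homeomorph_Xset hSD hSU θ _

theorem stmt_9 (n : ℕ) (hn : 1 ≤ n)
    (U : Set (EuclideanSpace ℂ (Fin n))) (hU : IsOpen U)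
    (h0U : (0 : EuclideanSpace ℂ (Fin n)) ∈ U)
    (f : EuclideanSpace ℂ (Fin n) → ℂ) (hf : DifferentiableOn ℂ f U) (hf0 : f 0 = 0)
    (hfnz : ∀ W ∈ nhds (0 : EuclideanSpace ℂ (Fin n)), ∃ x ∈ W ∩ U, f x ≠ 0) :
    ∃ ε₀ > (0 : ℝ), Metric.closedBall (0 : EuclideanSpace ℂ (Fin n)) ε₀ ⊆ U ∧
      ∀ ε : ℝ, 0 < ε → ε ≤ ε₀ → ∀ θ : ℝ,
      -- (i) the link of X_θ is the union of three pairwise disjoint pieces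
      (Xset U f θ ∩ Metric.sphere (0 : EuclideanSpace ℂ (Fin n)) ε
          = (Eset U f θ ∩ Metric.sphere (0 : EuclideanSpace ℂ (Fin n)) ε)
            ∪ ({x ∈ U | f x = 0} ∩ Metric.sphere (0 : EuclideanSpace ℂ (Fin n)) ε)
            ∪ (Eset U f (θ + Real.pi) ∩ Metric.sphere (0 : EuclideanSpace ℂ (Fin n)) ε)) ∧
      Disjoint (Eset U f θ ∩ Metric.sphere (0 : EuclideanSpace ℂ (Fin n)) ε)
        ({x ∈ U | f x = 0} ∩ Metric.sphere (0 : EuclideanSpace ℂ (Fin n)) ε) ∧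
      Disjoint (Eset U f θ ∩ Metric.sphere (0 : EuclideanSpace ℂ (Fin n)) ε)
        (Eset U f (θ + Real.pi) ∩ Metric.sphere (0 : EuclideanSpace ℂ (Fin n)) ε) ∧
      Disjoint ({x ∈ U | f x = 0} ∩ Metric.sphere (0 : EuclideanSpace ℂ (Fin n)) ε)
        (Eset U f (θ + Real.pi) ∩ Metric.sphere (0 : EuclideanSpace ℂ (Fin n)) ε) ∧
      -- the two halves are exactly the fibres of the Milnor map φ = f/‖f‖ over
      -- the antipodal points exp(iθ) and -exp(iθ)
      (Eset U f θ ∩ Metric.sphere (0 : EuclideanSpace ℂ (Fin n)) ε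
          = {x ∈ Metric.sphere (0 : EuclideanSpace ℂ (Fin n)) ε |
              f x / ‖f x‖ = Complex.exp (θ * Complex.I)}) ∧
      (Eset U f (θ + Real.pi) ∩ Metric.sphere (0 : EuclideanSpace ℂ (Fin n)) ε
          = {x ∈ Metric.sphere (0 : EuclideanSpace ℂ (Fin n)) ε |
              f x / ‖f x‖ = -Complex.exp (θ * Complex.I)}) ∧
      -- (ii) the link of X_θ is homeomorphic to the link of {Re f = 0}
      Nonempty
        (((Xset U f θ ∩ Metric.sphere (0 : EuclideanSpace ℂ (Fin n)) ε) : Set _) ≃ₜ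
         (({x ∈ U | (f x).re = 0} ∩ Metric.sphere (0 : EuclideanSpace ℂ (Fin n)) ε) : Set _)) :=
  stmt_9_general (hU.mem_nhds h0U) (analyticAt_of_differentiableOn hf (hU.mem_nhds h0U)) hf0
end

section
/- Assume moreover that U is connected and f is not constant on U. Then for every θ ∈ ℝ the closure of E_θ within U equals E_θ ∪ V; in particular every point of V is a limit of points of E_θ. -/
/-!
A nonconstant holomorphic function on a connected open set is an open map, and taking preimages
under a continuous open map commutes with taking closures. As `E_θ` is the preimage of the open
ray `ℝ_{>0}·exp(iθ)`, its closure in `U` is the preimage of the closed ray, which adds exactly the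
zeros of `f`.

The identity theorem and the open mapping theorem are deduced from their one-variable versions by
restricting `f` to complex lines. This avoids Osgood's lemma, that is, the analyticity of complex
differentiable functions of several variables.
-/

open AffineMap Filter Metric Set Topology

section OpenMapOnSubset

variable {X Y : Type*} [TopologicalSpace X] [TopologicalSpace Y]

theorem closure_inter_preimage_inter_eq_of_isOpenMap_domRestrict {U : Set X} {f : X → Y}
    (hf : ContinuousOn f U) (hopen : IsOpenMap (U.domRestrict f)) (s : Set Y) :
    closure (U ∩ f ⁻¹' s) ∩ U = U ∩ f ⁻¹' closure s := by
  have himage (t : Set Y) : Subtype.val '' (U.domRestrict f ⁻¹' t) = U ∩ f ⁻¹' t :=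
    Subtype.image_preimage_coe U (f ⁻¹' t)
  have hclosure := hopen.preimage_closure_eq_closure_preimage hf.domRestrict s
  rw [← himage, ← himage, hclosure, IsInducing.subtypeVal.closure_eq_preimage_closure_image,
    Subtype.image_preimage_coe, inter_comm]

end OpenMapOnSubset

theorem closure_image_smul_Ioi_zero {E : Type*} [AddCommGroup E] [Module ℝ E]
    [TopologicalSpace E] [IsTopologicalAddGroup E] [ContinuousSMul ℝ E] [T2Space E] (v : E) :
    closure ((fun t : ℝ ↦ t • v) '' Ioi 0) = insert 0 ((fun t : ℝ ↦ t • v) '' Ioi 0) := by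
  rcases eq_or_ne v 0 with rfl | hv
  · simp [nonempty_Ioi.image_const]
  · rw [(isClosedEmbedding_smul_left hv).closure_image_eq, closure_Ioi, ← Ioi_insert,
      image_insert_eq, zero_smul]

section ComplexLines

variable {E F : Type*} [NormedAddCommGroup E] [NormedSpace ℂ E]
  [NormedAddCommGroup F] [NormedSpace ℂ F] [CompleteSpace F] {s U : Set E} {f g : E → F} {x y : E}

theorem tendsto_lineMap_nhds_zero (x y : E) : Tendsto (lineMap x y : ℂ → E) (𝓝 0) (𝓝 x) := by
  simpa using (lineMap_continuous (p := x) (q := y)).tendsto (0 : ℂ)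

theorem convex_preimage_lineMap (hs : Convex ℝ s) (x y : E) :
    Convex ℝ ((lineMap x y : ℂ → E) ⁻¹' s) :=
  (hs.translate_preimage_left x).linear_preimage
    ((LinearMap.toSpanSingleton ℂ E (y - x)).restrictScalars ℝ)

theorem analyticOnNhd_comp_lineMap (hs : IsOpen s) (hf : DifferentiableOn ℂ f s) (x y : E) :
    AnalyticOnNhd ℂ (f ∘ (lineMap x y : ℂ → E)) (lineMap x y ⁻¹' s) :=
  (hf.comp (lineMap x y : ℂ →ᵃ[ℂ] E).differentiableOn (mapsTo_preimage _ _)).analyticOnNhd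
    (hs.preimage lineMap_continuous)

theorem eq_of_comp_lineMap_eventuallyEq (hs : IsOpen s) (hconv : Convex ℝ s)
    (hf : DifferentiableOn ℂ f s) (hg : DifferentiableOn ℂ g s) (hx : x ∈ s) (hy : y ∈ s)
    (hfg : f ∘ (lineMap x y : ℂ → E) =ᶠ[𝓝 0] g ∘ lineMap x y) : f y = g y := by
  have hpre : IsPreconnected ((lineMap x y : ℂ → E) ⁻¹' s) :=
    (convex_preimage_lineMap hconv x y).isPreconnected
  have heq := (analyticOnNhd_comp_lineMap hs hf x y).eqOn_of_preconnected_of_eventuallyEq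
    (analyticOnNhd_comp_lineMap hs hg x y) hpre (by simpa using hx) hfg
  simpa using heq (show (1 : ℂ) ∈ lineMap x y ⁻¹' s by simpa using hy)

theorem eqOn_of_isPreconnected_of_eventuallyEq (hU : IsOpen U) (hconn : IsPreconnected U)
    (hf : DifferentiableOn ℂ f U) (hg : DifferentiableOn ℂ g U) (hx : x ∈ U)
    (hfg : f =ᶠ[𝓝 x] g) : EqOn f g U := by
  suffices hsub : U ⊆ {z | f =ᶠ[𝓝 z] g} from fun z hz ↦ (hsub hz).eq_of_nhds
  refine hconn.subset_of_closure_inter_subset isOpen_setOfPred_eventually_nhds ⟨x, hx, hfg⟩ ?_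
  rintro z ⟨hz, hzU⟩
  obtain ⟨r, hr, hball⟩ := isOpen_iff.mp hU z hzU
  obtain ⟨w, hwz, hw⟩ := mem_closure_iff.mp hz (ball z r) isOpen_ball (mem_ball_self hr)
  filter_upwards [ball_mem_nhds z hr] with y hy
  exact eq_of_comp_lineMap_eventuallyEq isOpen_ball (convex_ball z r) (hf.mono hball)
    (hg.mono hball) hwz hy ((tendsto_lineMap_nhds_zero w y).eventually hw)

end ComplexLines

section OpenMapping

variable {E : Type*} [NormedAddCommGroup E] [NormedSpace ℂ E] {U : Set E} {f : E → ℂ} {x : E}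

theorem eventually_const_or_nhds_le_map_nhds (hf : ∀ᶠ z in 𝓝 x, DifferentiableAt ℂ f z) :
    (∀ᶠ z in 𝓝 x, f z = f x) ∨ 𝓝 (f x) ≤ map f (𝓝 x) := by
  obtain ⟨r, hr, hball⟩ := eventually_nhds_iff_ball.mp hf
  have hdiff : DifferentiableOn ℂ f (ball x r) :=
    fun z hz ↦ (hball z hz).differentiableWithinAt
  by_cases hline : ∀ y ∈ ball x r, ∀ᶠ t : ℂ in 𝓝 0, f (lineMap x y t) = f x
  · left
    filter_upwards [ball_mem_nhds x hr] with y hy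
    exact eq_of_comp_lineMap_eventuallyEq isOpen_ball (convex_ball x r) hdiff
      (differentiableOn_const (f x)) (mem_ball_self hr) hy (hline y hy)
  · right
    push Not at hline
    obtain ⟨y, -, hne⟩ := hline
    have hanalytic : AnalyticAt ℂ (f ∘ (lineMap x y : ℂ → E)) 0 :=
      analyticOnNhd_comp_lineMap isOpen_ball hdiff x y 0 (by simpa using hr)
    have hle := hanalytic.eventually_constant_or_nhds_le_map_nhds.resolve_left
      (by simpa using hne)
    calc 𝓝 (f x) ≤ map f (map (lineMap x y : ℂ → E) (𝓝 0)) := by simpa [map_map] using hle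
      _ ≤ map f (𝓝 x) := map_mono (tendsto_lineMap_nhds_zero x y)

theorem isOpenMap_domRestrict_of_not_const (hU : IsOpen U) (hconn : IsPreconnected U)
    (hf : DifferentiableOn ℂ f U) (hne : ¬ ∃ c, ∀ x ∈ U, f x = c) :
    IsOpenMap (U.domRestrict f) := by
  refine isOpenMap_iff_nhds_le.mpr fun ⟨x, hx⟩ ↦ ?_
  have hnotconst : ¬ ∀ᶠ z in 𝓝 x, f z = f x := fun hconst ↦
    hne ⟨f x, eqOn_of_isPreconnected_of_eventuallyEq hU hconn hf (differentiableOn_const (f x))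
      hx hconst⟩
  have hle := (eventually_const_or_nhds_le_map_nhds
    (hf.eventually_differentiableAt (hU.mem_nhds hx))).resolve_left hnotconst
  rwa [domRestrict_eq, ← map_map, map_nhds_subtype_coe_eq_nhds hx (hU.mem_nhds hx)]

end OpenMapping

theorem Eset_eq_inter_preimage {α : Type} (U : Set α) (f : α → ℂ) (θ : ℝ) :
    Eset U f θ = U ∩ f ⁻¹' ((fun t : ℝ ↦ t • Complex.exp (θ * Complex.I)) '' Ioi 0) := by
  ext x
  simp [Eset, eq_comm]

theorem stmt_10_general {E : Type} [NormedAddCommGroup E] [NormedSpace ℂ E] {U : Set E}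
    {f : E → ℂ} (hU : IsOpen U) (hconn : IsPreconnected U) (hf : DifferentiableOn ℂ f U)
    (hne : ¬ ∃ c : ℂ, ∀ x ∈ U, f x = c) (θ : ℝ) :
    closure (Eset U f θ) ∩ U = Eset U f θ ∪ {x ∈ U | f x = 0} := by
  have hopen : IsOpenMap (U.domRestrict f) := isOpenMap_domRestrict_of_not_const hU hconn hf hne
  rw [Eset_eq_inter_preimage,
    closure_inter_preimage_inter_eq_of_isOpenMap_domRestrict hf.continuousOn hopen,
    closure_image_smul_Ioi_zero, insert_eq, union_comm, preimage_union, inter_union_distrib_left]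
  rfl

theorem stmt_10 (n : ℕ) (hn : 1 ≤ n)
    (U : Set (EuclideanSpace ℂ (Fin n))) (hU : IsOpen U)
    (h0U : (0 : EuclideanSpace ℂ (Fin n)) ∈ U)
    (hUconn : IsConnected U)
    (f : EuclideanSpace ℂ (Fin n) → ℂ) (hf : DifferentiableOn ℂ f U) (hf0 : f 0 = 0)
    (hfnc : ¬ ∃ c : ℂ, ∀ x ∈ U, f x = c) :
    ∀ θ : ℝ, closure (Eset U f θ) ∩ U = Eset U f θ ∪ {x ∈ U | f x = 0} :=
  stmt_10_general hU hUconn.isPreconnected hf hfnc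
end

section
/- Let p : ℝ → ℂⁿ be real analytic on an interval containing [0,δ) with p(0) = 0, p(t) ∈ U for t ∈ [0,δ), and f(p(t)) ≠ 0 for all t ∈ (0,δ). Suppose λ : (0,δ) → ℂ satisfies grad log f(p(t)) = λ(t)•p(t) for all t ∈ (0,δ). Then there is 0 < δ' ≤ δ with λ(t) ≠ 0 for all t ∈ (0,δ'), and λ(t)/|λ(t)| → 1 as t → 0⁺; equivalently the argument of λ(t) tends to 0 as t → 0⁺. -/
/-- `grad log f (x) = grad f(x) / conj (f x)`, where `grad f(x)` is the (conjugate-linear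
in the first slot) Hermitian gradient of `f` at `x`, i.e. the unique vector with
`⟪grad f x, v⟫ = Df(x)(v)` for all `v`. -/
noncomputable def gradLog {n : ℕ} (f : EuclideanSpace ℂ (Fin n) → ℂ)
    (x : EuclideanSpace ℂ (Fin n)) : EuclideanSpace ℂ (Fin n) :=
  ((starRingEnd ℂ) (f x))⁻¹ • gradient f x

/-!
Put `F = f ∘ p`. Extending the power series of `p` to complex arguments shows that `F` is real
analytic at `0`, although holomorphy of `f` is only known in the sense of complex
differentiability. Let `k, m ≥ 1` be the orders of vanishing of `p` and `F` at `0`. By Euler's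
relation `t • g'(t) = ord g • g(t) + o(g(t))` for analytic `g`,
`t F'(t) / F(t) → m` and `⟪p(t), t p'(t)⟫ / ‖p(t)‖² → k`.
The chain rule and the hypothesis on `grad log f` give `F' / F = conj λ * ⟪p, p'⟫`, so
`‖p(t)‖² λ(t) → m / k > 0`, and `λ` has the same argument as `‖p‖² λ`.
-/

open Filter Topology Asymptotics
open scoped ComplexConjugate Gradient InnerProductSpace

section ScalarExtension

variable {𝕜 : Type*} (𝕜' : Type*) {E : Type*} [NontriviallyNormedField 𝕜]
  [NontriviallyNormedField 𝕜'] [NormedAddCommGroup E] [NormedSpace 𝕜 E] [NormedSpace 𝕜' E]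

/-- The power series over `𝕜'` with the same coefficients in `E` as the power series `s` over `𝕜`.
It extends an analytic function of a variable in `𝕜` to a variable in `𝕜'`. -/
noncomputable def extendScalarsSeries (s : FormalMultilinearSeries 𝕜 𝕜 E) :
    FormalMultilinearSeries 𝕜' 𝕜' E :=
  fun n => ContinuousMultilinearMap.mkPiRing 𝕜' (Fin n) (s.coeff n)

lemma coeff_extendScalarsSeries (s : FormalMultilinearSeries 𝕜 𝕜 E) (n : ℕ) :
    (extendScalarsSeries 𝕜' s).coeff n = s.coeff n := by
  rw [FormalMultilinearSeries.coeff, extendScalarsSeries, ContinuousMultilinearMap.mkPiRing_apply]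
  simp only [Pi.one_apply, Finset.prod_const_one, one_smul]

lemma radius_extendScalarsSeries (s : FormalMultilinearSeries 𝕜 𝕜 E) :
    (extendScalarsSeries 𝕜' s).radius = s.radius := by
  simp only [FormalMultilinearSeries.radius, FormalMultilinearSeries.norm_apply_eq_norm_coef,
    coeff_extendScalarsSeries]

lemma exists_analyticAt_comp_algebraMap_eventuallyEq [NormedAlgebra 𝕜 𝕜'] [IsScalarTower 𝕜 𝕜' E]
    [CompleteSpace E] {p : 𝕜 → E} {x : 𝕜} (hp : AnalyticAt 𝕜 p x) :
    ∃ P : 𝕜' → E, AnalyticAt 𝕜' P (algebraMap 𝕜 𝕜' x) ∧ P ∘ algebraMap 𝕜 𝕜' =ᶠ[𝓝 x] p := by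
  obtain ⟨s, hs⟩ := hp
  set Q := extendScalarsSeries 𝕜' s
  have hQ : HasFPowerSeriesAt Q.sum Q 0 :=
    (Q.hasFPowerSeriesOnBall (radius_extendScalarsSeries 𝕜' s ▸ hs.radius_pos)).hasFPowerSeriesAt
  have hQx := hQ.comp_sub (algebraMap 𝕜 𝕜' x)
  rw [zero_add] at hQx
  refine ⟨_, hQx.analyticAt, ?_⟩
  have hsum := (continuous_algebraMap 𝕜 𝕜').continuousAt.eventually (hasFPowerSeriesAt_iff'.1 hQx)
  filter_upwards [hasFPowerSeriesAt_iff'.1 hs, hsum] with t hpt hQt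
  refine hQt.unique (hpt.congr_fun fun n => ?_)
  rw [coeff_extendScalarsSeries, ← map_sub, ← map_pow, algebraMap_smul]

end ScalarExtension

lemma analyticAt_real_comp_of_eventually_differentiableAt {E G : Type*}
    [NormedAddCommGroup E] [NormedSpace ℂ E] [CompleteSpace E]
    [NormedAddCommGroup G] [NormedSpace ℂ G] [CompleteSpace G]
    {f : E → G} {p : ℝ → E} {t₀ : ℝ}
    (hf : ∀ᶠ x in 𝓝 (p t₀), DifferentiableAt ℂ f x) (hp : AnalyticAt ℝ p t₀) :
    AnalyticAt ℝ (f ∘ p) t₀ := by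
  obtain ⟨P, hP, hPp⟩ := exists_analyticAt_comp_algebraMap_eventuallyEq ℂ hp
  rw [← hPp.eq_of_nhds] at hf
  have hfP : AnalyticAt ℂ (f ∘ P) (algebraMap ℝ ℂ t₀) := by
    rw [Complex.analyticAt_iff_eventually_differentiableAt]
    filter_upwards [hP.continuousAt.eventually hf, hP.eventually_analyticAt] with z hfz hPz
    exact hfz.comp z hPz.differentiableAt
  exact (hfP.restrictScalars.comp (Complex.ofRealCLM.analyticAt t₀)).congr (hPp.fun_comp f)

section Order

variable {𝕜 E : Type*} [NontriviallyNormedField 𝕜] [NormedAddCommGroup E] [NormedSpace 𝕜 E]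
  {g : 𝕜 → E} {z₀ : 𝕜}

lemma analyticOrderNatAt_pos_of_frequently_ne_zero (hg : AnalyticAt 𝕜 g z₀) (hg₀ : g z₀ = 0)
    (hne : ∃ᶠ z in 𝓝 z₀, g z ≠ 0) : 0 < analyticOrderNatAt g z₀ := by
  have htop : analyticOrderAt g z₀ ≠ ⊤ := fun h => hne (by simpa using analyticOrderAt_eq_top.1 h)
  refine Nat.pos_of_ne_zero fun h => hg.analyticOrderAt_ne_zero.2 hg₀ ?_
  rw [← Nat.cast_analyticOrderNatAt htop, h, Nat.cast_zero]

lemma sub_smul_deriv_sub_pow_smul {q : 𝕜 → E} {z : 𝕜} (hq : DifferentiableAt 𝕜 q z) (z₀ : 𝕜)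
    (k : ℕ) :
    (z - z₀) • deriv (fun w => (w - z₀) ^ k • q w) z =
      (k : 𝕜) • (z - z₀) ^ k • q z + (z - z₀) ^ k • (z - z₀) • deriv q z := by
  have hpow : HasDerivAt (fun w => (w - z₀) ^ k) (k * (z - z₀) ^ (k - 1)) z := by
    simpa using ((hasDerivAt_id z).sub_const z₀).fun_pow k
  rw [(hpow.fun_smul hq.hasDerivAt).deriv]
  cases k with
  | zero => simp
  | succ j => rw [Nat.add_sub_cancel]; module

/-- Euler's relation for homogeneous functions, to leading order. -/
lemma sub_smul_deriv_sub_order_smul_isLittleO [CompleteSpace E] (hg : AnalyticAt 𝕜 g z₀) :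
    (fun z => (z - z₀) • deriv g z - (analyticOrderNatAt g z₀ : 𝕜) • g z) =o[𝓝 z₀] g := by
  by_cases htop : analyticOrderAt g z₀ = ⊤
  · have hzero : g =ᶠ[𝓝 z₀] 0 := analyticOrderAt_eq_top.1 htop
    refine IsLittleO.congr' (isLittleO_zero g (𝓝 z₀)) ?_ .rfl
    filter_upwards [hzero, hzero.deriv] with z hz hz'
    simp [hz, hz']
  obtain ⟨q, hq, hq₀, hgq⟩ := hg.analyticOrderAt_ne_top.1 htop
  set k := analyticOrderNatAt g z₀
  have hremainder : (fun z => (z - z₀) • deriv q z) =o[𝓝 z₀] q := by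
    have htendsto : Tendsto (fun z => (z - z₀) • deriv q z) (𝓝 z₀) (𝓝 0) := by
      have hcont : ContinuousAt (fun z => (z - z₀) • deriv q z) z₀ := by fun_prop
      simpa [ContinuousAt] using hcont
    exact ((isLittleO_const_iff hq₀).2 htendsto).trans_isBigO
      ((isEquivalent_const_iff_tendsto hq₀).2 hq.continuousAt).isBigO_symm
  refine ((isBigO_refl (fun z => (z - z₀) ^ k) _).smul_isLittleO hremainder).congr' ?_ hgq.symm
  filter_upwards [hgq, hgq.deriv, hq.eventually_analyticAt] with z hz hz' hqz
  rw [hz, hz', sub_smul_deriv_sub_pow_smul hqz.differentiableAt, add_sub_cancel_left]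

lemma tendsto_sub_smul_logDeriv {𝕜' : Type*} [NontriviallyNormedField 𝕜'] [NormedAlgebra 𝕜 𝕜']
    [CompleteSpace 𝕜'] {F : 𝕜 → 𝕜'} {l : Filter 𝕜} (hl : l ≤ 𝓝 z₀) (hF : AnalyticAt 𝕜 F z₀)
    (hne : ∀ᶠ z in l, F z ≠ 0) :
    Tendsto (fun z => (z - z₀) • logDeriv F z) l (𝓝 (analyticOrderNatAt F z₀ : 𝕜')) := by
  have hEuler := ((sub_smul_deriv_sub_order_smul_isLittleO hF).mono hl).tendsto_div_nhds_zero
  refine tendsto_sub_nhds_zero_iff.1 (hEuler.congr' ?_)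
  filter_upwards [hne] with z hz
  rw [Nat.cast_smul_eq_nsmul, nsmul_eq_mul, sub_div, mul_div_cancel_right₀ _ hz, smul_div_assoc,
    logDeriv_apply]

end Order

section Inner

variable {𝕜 H : Type*} [RCLike 𝕜] [NormedAddCommGroup H] [InnerProductSpace 𝕜 H]

lemma tendsto_inner_div_norm_sq_of_isLittleO {α : Type*} {l : Filter α} {u v : α → H} {c : 𝕜}
    (hu : ∀ᶠ x in l, u x ≠ 0) (huv : (fun x => v x - c • u x) =o[l] u) :
    Tendsto (fun x => ⟪u x, v x⟫_𝕜 / (‖u x‖ : 𝕜) ^ 2) l (𝓝 c) := by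
  have hratio : Tendsto (fun x => ‖v x - c • u x‖ / ‖u x‖) l (𝓝 0) :=
    huv.norm_norm.tendsto_div_nhds_zero
  refine tendsto_iff_norm_sub_tendsto_zero.2
    (squeeze_zero' (.of_forall fun _ => norm_nonneg _) ?_ hratio)
  filter_upwards [hu] with x hx
  have hnorm : ‖u x‖ ≠ 0 := norm_ne_zero_iff.2 hx
  have hcast : (‖u x‖ : 𝕜) ≠ 0 := RCLike.ofReal_ne_zero.2 hnorm
  have hsub : ⟪u x, v x⟫_𝕜 / (‖u x‖ : 𝕜) ^ 2 - c = ⟪u x, v x - c • u x⟫_𝕜 / (‖u x‖ : 𝕜) ^ 2 := by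
    rw [inner_sub_right, inner_smul_right, inner_self_eq_norm_sq_to_K]
    field_simp
  calc ‖⟪u x, v x⟫_𝕜 / (‖u x‖ : 𝕜) ^ 2 - c‖
      = ‖⟪u x, v x - c • u x⟫_𝕜‖ / ‖u x‖ ^ 2 := by
        rw [hsub, norm_div, norm_pow, RCLike.norm_ofReal, abs_norm]
    _ ≤ ‖u x‖ * ‖v x - c • u x‖ / ‖u x‖ ^ 2 := by gcongr; exact norm_inner_le_norm _ _
    _ = ‖v x - c • u x‖ / ‖u x‖ := by field_simp

end Inner

section Normalize

variable {V α : Type*} [NormedAddCommGroup V] [NormedSpace ℝ V] {l : Filter α}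

lemma tendsto_normalize {z : α → V} {v : V} (hv : v ≠ 0) (hz : Tendsto z l (𝓝 v)) :
    Tendsto (fun x => NormedSpace.normalize (z x)) l (𝓝 (NormedSpace.normalize v)) :=
  (hz.norm.inv₀ (norm_ne_zero_iff.2 hv)).smul hz

lemma tendsto_normalize_of_tendsto_smul {s : α → ℝ} {z : α → V} {v : V} (hv : v ≠ 0)
    (hs : ∀ᶠ x in l, 0 < s x) (hsz : Tendsto (fun x => s x • z x) l (𝓝 v)) :
    Tendsto (fun x => NormedSpace.normalize (z x)) l (𝓝 (NormedSpace.normalize v)) :=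
  (tendsto_normalize hv hsz).congr' <|
    hs.mono fun x hx => NormedSpace.normalize_smul_of_pos hx (z x)

lemma tendsto_div_norm_one_of_tendsto_smul {s : α → ℝ} {z : α → ℂ} {r : ℝ} (hr : 0 < r)
    (hs : ∀ᶠ x in l, 0 < s x) (hsz : Tendsto (fun x => s x • z x) l (𝓝 (r : ℂ))) :
    Tendsto (fun x => z x / (‖z x‖ : ℂ)) l (𝓝 1) := by
  have hr' : (r : ℂ) ≠ 0 := Complex.ofReal_ne_zero.2 hr.ne'
  have hunit : NormedSpace.normalize (r : ℂ) = 1 := by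
    simp [NormedSpace.normalize, abs_of_pos hr, hr']
  have hlim := tendsto_normalize_of_tendsto_smul hr' hs hsz
  rw [hunit] at hlim
  simpa only [NormedSpace.normalize, Complex.real_smul, Complex.ofReal_inv,
    ← div_eq_inv_mul] using hlim

end Normalize

section LogGradient

variable {E : Type*} [NormedAddCommGroup E] [InnerProductSpace ℂ E] [CompleteSpace E]
  {f : E → ℂ} {p : ℝ → E}

lemma logDeriv_comp_eq_conj_mul_inner {t : ℝ} {c : ℂ} (hf : DifferentiableAt ℂ f (p t))
    (hp : DifferentiableAt ℝ p t) (hc : (conj (f (p t)))⁻¹ • ∇ f (p t) = c • p t) :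
    logDeriv (f ∘ p) t = conj c * ⟪p t, deriv p t⟫_ℂ := by
  have hchain : deriv (f ∘ p) t = fderiv ℂ f (p t) (deriv p t) :=
    ((hf.hasFDerivAt.restrictScalars ℝ).comp_hasDerivAt t hp.hasDerivAt).deriv
  calc logDeriv (f ∘ p) t
      = ⟪(conj (f (p t)))⁻¹ • ∇ f (p t), deriv p t⟫_ℂ := by
        rw [logDeriv_apply, hchain, inner_smul_left, inner_gradient_left, map_inv₀,
          Complex.conj_conj, inv_mul_eq_div, Function.comp_apply]
    _ = conj c * ⟪p t, deriv p t⟫_ℂ := by rw [hc, inner_smul_left]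

lemma tendsto_inner_smul_deriv_div_norm_sq {t₀ : ℝ} {l : Filter ℝ} (hl : l ≤ 𝓝 t₀)
    (hp : AnalyticAt ℝ p t₀) (hne : ∀ᶠ t in l, p t ≠ 0) :
    Tendsto (fun t => ⟪p t, (t - t₀) • deriv p t⟫_ℂ / (‖p t‖ : ℂ) ^ 2) l
      (𝓝 (analyticOrderNatAt p t₀ : ℂ)) := by
  refine tendsto_inner_div_norm_sq_of_isLittleO hne ?_
  simpa only [Nat.cast_smul_eq_nsmul] using
    (sub_smul_deriv_sub_order_smul_isLittleO hp).mono hl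

lemma tendsto_norm_sq_smul_of_logGradient_eq_smul {lam : ℝ → ℂ} {t₀ : ℝ} {l : Filter ℝ}
    (hl : l ≤ 𝓝 t₀) (hf : ∀ᶠ x in 𝓝 (p t₀), DifferentiableAt ℂ f x) (hp : AnalyticAt ℝ p t₀)
    (hk : analyticOrderNatAt p t₀ ≠ 0) (hpne : ∀ᶠ t in l, p t ≠ 0) (hfp : ∀ᶠ t in l, f (p t) ≠ 0)
    (hlam : ∀ᶠ t in l, (conj (f (p t)))⁻¹ • ∇ f (p t) = lam t • p t) :
    Tendsto (fun t => ‖p t‖ ^ 2 • lam t) l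
      (𝓝 (analyticOrderNatAt (f ∘ p) t₀ / analyticOrderNatAt p t₀ : ℝ)) := by
  have hF : AnalyticAt ℝ (f ∘ p) t₀ := analyticAt_real_comp_of_eventually_differentiableAt hf hp
  have hk' : (analyticOrderNatAt p t₀ : ℂ) ≠ 0 := Nat.cast_ne_zero.2 hk
  have hp_lim := tendsto_inner_smul_deriv_div_norm_sq hl hp hpne
  have hF_lim := tendsto_sub_smul_logDeriv hl hF hfp
  have hquot := (Complex.continuous_conj.tendsto _).comp (hF_lim.div hp_lim hk')
  simp only [map_div₀, map_natCast] at hquot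
  push_cast
  refine hquot.congr' ?_
  filter_upwards [(hp.continuousAt.eventually hf).filter_mono hl,
    hp.eventually_analyticAt.filter_mono hl, hlam, hpne, hp_lim.eventually_ne hk']
    with t hft hpt hlamt hpnet hquot_ne
  have hratio : (t - t₀) • logDeriv (f ∘ p) t =
      conj (lam t) * ‖p t‖ ^ 2 * (⟪p t, (t - t₀) • deriv p t⟫_ℂ / (‖p t‖ : ℂ) ^ 2) := by
    have hnorm : (‖p t‖ : ℂ) ≠ 0 := Complex.ofReal_ne_zero.2 (norm_ne_zero_iff.2 hpnet)
    rw [logDeriv_comp_eq_conj_mul_inner hft hpt.differentiableAt hlamt, inner_smul_right_eq_smul,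
      ← mul_smul_comm]
    field_simp
  rw [Function.comp_apply, Pi.div_apply, hratio, mul_div_cancel_right₀ _ hquot_ne]
  simp [mul_comm]

end LogGradient

theorem stmt_11_general {E : Type*} [NormedAddCommGroup E] [InnerProductSpace ℂ E]
    [CompleteSpace E] {f : E → ℂ} (hf : ∀ᶠ x in 𝓝 0, DifferentiableAt ℂ f x) (hf0 : f 0 = 0)
    {p : ℝ → E} {δ : ℝ} (hδ : 0 < δ) (hp : AnalyticAt ℝ p 0) (hp0 : p 0 = 0)
    (hfp : ∀ t ∈ Set.Ioo 0 δ, f (p t) ≠ 0) {lam : ℝ → ℂ}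
    (hlam : ∀ t ∈ Set.Ioo 0 δ, (conj (f (p t)))⁻¹ • ∇ f (p t) = lam t • p t) :
    ∃ δ' : ℝ, 0 < δ' ∧ δ' ≤ δ ∧ (∀ t ∈ Set.Ioo 0 δ', lam t ≠ 0) ∧
      Tendsto (fun t => lam t / (‖lam t‖ : ℂ)) (𝓝[>] 0) (𝓝 1) := by
  have hIoo : Set.Ioo 0 δ ∈ 𝓝[>] (0 : ℝ) := Ioo_mem_nhdsGT hδ
  have hfp' : ∀ᶠ t in 𝓝[>] 0, f (p t) ≠ 0 := eventually_of_mem hIoo hfp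
  have hpne : ∀ᶠ t in 𝓝[>] 0, p t ≠ 0 := hfp'.mono fun t ht h => ht (h ▸ hf0)
  rw [← hp0] at hf
  have hk : 0 < analyticOrderNatAt p 0 :=
    analyticOrderNatAt_pos_of_frequently_ne_zero hp hp0
      (hpne.frequently.filter_mono nhdsWithin_le_nhds)
  have hm : 0 < analyticOrderNatAt (f ∘ p) 0 :=
    analyticOrderNatAt_pos_of_frequently_ne_zero
      (analyticAt_real_comp_of_eventually_differentiableAt hf hp) (by simp [hp0, hf0])
      (hfp'.frequently.filter_mono nhdsWithin_le_nhds)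
  have hlim := tendsto_norm_sq_smul_of_logGradient_eq_smul nhdsWithin_le_nhds hf hp hk.ne' hpne
    hfp' (eventually_of_mem hIoo hlam)
  have hmk : (0 : ℝ) < analyticOrderNatAt (f ∘ p) 0 / analyticOrderNatAt p 0 := by positivity
  obtain ⟨δ', hδ', hne⟩ := (mem_nhdsGT_iff_exists_mem_Ioc_Ioo_subset hδ).1
    (hlim.eventually_ne (Complex.ofReal_ne_zero.2 hmk.ne'))
  exact ⟨δ', hδ'.1, hδ'.2, fun t ht => right_ne_zero_of_smul (hne ht),
    tendsto_div_norm_one_of_tendsto_smul hmk (hpne.mono fun t ht => by positivity) hlim⟩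

theorem stmt_11 (n : ℕ) (hn : 1 ≤ n)
    (U : Set (EuclideanSpace ℂ (Fin n))) (hU : IsOpen U)
    (h0U : (0 : EuclideanSpace ℂ (Fin n)) ∈ U)
    (f : EuclideanSpace ℂ (Fin n) → ℂ) (hf : DifferentiableOn ℂ f U) (hf0 : f 0 = 0)
    (p : ℝ → EuclideanSpace ℂ (Fin n)) (δ : ℝ) (hδ : 0 < δ)
    (hp : AnalyticOnNhd ℝ p (Set.Ico 0 δ)) (hp0 : p 0 = 0)
    (hpU : ∀ t ∈ Set.Ico (0 : ℝ) δ, p t ∈ U)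
    (hfp : ∀ t ∈ Set.Ioo (0 : ℝ) δ, f (p t) ≠ 0)
    (lam : ℝ → ℂ)
    (hlam : ∀ t ∈ Set.Ioo (0 : ℝ) δ, gradLog f (p t) = lam t • p t) :
    ∃ δ' : ℝ, 0 < δ' ∧ δ' ≤ δ ∧ (∀ t ∈ Set.Ioo (0 : ℝ) δ', lam t ≠ 0) ∧
      Filter.Tendsto (fun t : ℝ => lam t / (‖lam t‖ : ℂ))
        (nhdsWithin 0 (Set.Ioi 0)) (nhds 1) :=
  stmt_11_general (hf.eventually_differentiableAt (hU.mem_nhds h0U)) hf0 hδ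
    (hp 0 (Set.left_mem_Ico.2 hδ)) hp0 hfp hlam
end
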